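/- Let p be a prime and n ≥ 1. For a pair X = (A, B) of n×n matrices over ℚ_p, let ι(X) denote the 2n×2n block matrix with blocks [[0, A], [B, 0]], and let 𝔇(X) ∈ ℚ_p be the coefficient of T^{2n} in the characteristic polynomial of the ℚ_p-linear endomorphism ad(ι(X)) : M_{2n}(ℚ_p) → M_{2n}(ℚ_p), M ↦ ι(X)·M − M·ι(X). Then for every real r ≥ 0, the function X ↦ ‖𝔇(X)‖_p^{−1/4} · (max{1, −(1/2)·log ‖𝔇(X)‖_p})^r (interpreted as 0 when 𝔇(X) = 0) is locally integrable on M_n(ℚ_p) × M_n(ℚ_p) with respect to any additive Haar measure. -/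

import Mathlib

open MeasureTheory

/-- The Weyl discriminant polynomial `𝔇(X)`: the coefficient of `T^(2n)` in the
characteristic polynomial of the adjoint endomorphism `M ↦ ι(X)·M − M·ι(X)` of
`M_{2n}(ℚ_p)`, where `ι(A, B)` is the block matrix `[[0, A], [B, 0]]`. -/
noncomputable def weylDiscriminantGuoJacquet (p : ℕ) [Fact p.Prime] (n : ℕ)
    (X : Matrix (Fin n) (Fin n) ℚ_[p] × Matrix (Fin n) (Fin n) ℚ_[p]) : ℚ_[p] :=
  (LinearMap.charpoly
    (LinearMap.mulLeft ℚ_[p] (Matrix.fromBlocks 0 X.1 X.2 0) -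
      LinearMap.mulRight ℚ_[p] (Matrix.fromBlocks 0 X.1 X.2 0))).coeff (2 * n)

section PadicIntVolume

open scoped ENNReal

variable {p : ℕ} [Fact p.Prime]

noncomputable instance PadicInt.instMeasurableSpaceBorel : MeasurableSpace ℤ_[p] := borel _

instance PadicInt.instBorelSpace : BorelSpace ℤ_[p] := ⟨rfl⟩

noncomputable instance PadicInt.instMeasureSpaceHaar : MeasureSpace ℤ_[p] where
  volume := Measure.addHaarMeasure ⊤

instance PadicInt.instIsAddHaarVolume : (volume : Measure ℤ_[p]).IsAddHaarMeasure :=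
  inferInstanceAs (Measure.addHaarMeasure ⊤).IsAddHaarMeasure

instance PadicInt.instIsProbVolume : IsProbabilityMeasure (volume : Measure ℤ_[p]) :=
  ⟨by
    have h := Measure.addHaarMeasure_self (K₀ := (⊤ : TopologicalSpace.PositiveCompacts ℤ_[p]))
    exact h⟩

theorem PadicInt.setOf_toZModPow_eq (k : ℕ) (a : ℤ_[p]) :
    {x : ℤ_[p] | PadicInt.toZModPow k x = PadicInt.toZModPow k a} =
      {x : ℤ_[p] | ‖x - a‖ ≤ (p : ℝ) ^ (-k : ℤ)} := by
  ext x
  rw [Set.mem_ofPred_eq, Set.mem_ofPred_eq, PadicInt.norm_le_pow_iff_mem_span_pow,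
    ← PadicInt.ker_toZModPow, RingHom.mem_ker, map_sub, sub_eq_zero]

theorem PadicInt.volume_toZModPow_fiber (k : ℕ) (a : ZMod (p ^ k)) :
    volume {x : ℤ_[p] | PadicInt.toZModPow k x = a} = ((p : ℝ≥0∞) ^ k)⁻¹ := by
  have hp : p ≠ 0 := (Fact.out : p.Prime).ne_zero
  have : NeZero (p ^ k) := ⟨pow_ne_zero _ hp⟩
  have hmeas : ∀ a : ZMod (p ^ k), MeasurableSet {x : ℤ_[p] | PadicInt.toZModPow k x = a} := by
    intro a
    obtain ⟨y, rfl⟩ := ZMod.ringHom_surjective (PadicInt.toZModPow (p := p) k) a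
    rw [PadicInt.setOf_toZModPow_eq]
    exact (isClosed_le (by fun_prop) continuous_const).measurableSet
  have heq : ∀ a : ZMod (p ^ k), volume {x : ℤ_[p] | PadicInt.toZModPow k x = a}
      = volume {x : ℤ_[p] | PadicInt.toZModPow k x = 0} := by
    intro a
    obtain ⟨y, rfl⟩ := ZMod.ringHom_surjective (PadicInt.toZModPow (p := p) k) a
    rw [← measure_preimage_add (volume : Measure ℤ_[p]) y]
    congr 1
    ext x
    simp
  have hsum : ∑ a : ZMod (p ^ k), volume {x : ℤ_[p] | PadicInt.toZModPow k x = a} = 1 := by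
    have h1 : (⋃ a ∈ (Finset.univ : Finset (ZMod (p ^ k))),
        {x : ℤ_[p] | PadicInt.toZModPow k x = a}) = Set.univ := by
      ext x; simp
    rw [← measure_biUnion_finset _ (fun a _ => hmeas a), h1, measure_univ]
    intro a _ b _ hab
    refine Set.disjoint_left.2 fun x hx hx' => hab ?_
    exact hx.symm.trans hx'
  rw [heq a]
  simp only [heq, Finset.sum_const, Finset.card_univ, ZMod.card, nsmul_eq_mul] at hsum
  push_cast at hsum
  exact ENNReal.eq_inv_of_mul_eq_one_left (by rwa [mul_comm])

theorem PadicInt.volume_norm_sub_le (a : ℤ_[p]) (r : ℝ) :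
    volume {x : ℤ_[p] | ‖x - a‖ ≤ r} ≤ ENNReal.ofReal r := by
  have hp1 : 1 < (p : ℝ) := by exact_mod_cast (Fact.out : p.Prime).one_lt
  have hp0 : (p : ℝ≥0∞) ≠ 0 := by exact_mod_cast (Fact.out : p.Prime).ne_zero
  have key : ∀ k : ℕ, volume {x : ℤ_[p] | ‖x - a‖ ≤ (p : ℝ) ^ (-k : ℤ)} = ((p : ℝ≥0∞) ^ k)⁻¹ := by
    intro k
    rw [← PadicInt.volume_toZModPow_fiber k (PadicInt.toZModPow k a),
      PadicInt.setOf_toZModPow_eq]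
  have key2 : ∀ k : ℕ, ((p : ℝ≥0∞) ^ k)⁻¹ = ENNReal.ofReal ((p : ℝ) ^ (-k : ℤ)) := by
    intro k
    rw [zpow_neg, zpow_natCast, ENNReal.ofReal_inv_of_pos (by positivity),
      ENNReal.ofReal_pow (by positivity), ENNReal.ofReal_natCast]
  rcases le_or_gt 1 r with h1 | h1
  · calc _ ≤ (1 : ℝ≥0∞) := prob_le_one
      _ ≤ _ := by simpa using ENNReal.ofReal_le_ofReal h1
  rcases le_or_gt r 0 with h0 | h0
  · have : {x : ℤ_[p] | ‖x - a‖ ≤ r} ⊆ ⋂ k : ℕ, {x : ℤ_[p] | ‖x - a‖ ≤ (p : ℝ) ^ (-k : ℤ)} := by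
      intro x hx
      simp only [Set.mem_iInter, Set.mem_ofPred_eq] at *
      intro k
      exact hx.trans (h0.trans (by positivity))
    have h2 : ∀ k : ℕ, volume {x : ℤ_[p] | ‖x - a‖ ≤ r} ≤ ((p : ℝ≥0∞)⁻¹) ^ k := by
      intro k
      rw [← ENNReal.inv_pow, ← key k]
      exact measure_mono (this.trans (Set.iInter_subset _ k))
    have h3 := ge_of_tendsto' (ENNReal.tendsto_pow_atTop_nhds_zero_of_lt_one (r := (p : ℝ≥0∞)⁻¹)
      (by simpa using (Fact.out : p.Prime).one_lt)) h2
    exact h3.trans zero_le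
  · obtain ⟨k, hk⟩ := exists_mem_Ioc_zpow h0 hp1
    obtain ⟨hk1, hk2⟩ := hk
    have hkneg : k < 0 := by
      by_contra hcon
      push Not at hcon
      have : (1 : ℝ) ≤ (p : ℝ) ^ k := one_le_zpow₀ hp1.le hcon
      linarith
    by_cases heq : r = (p : ℝ) ^ (k + 1)
    · obtain ⟨m, hm⟩ : ∃ m : ℕ, k + 1 = -(m : ℤ) := ⟨(-(k + 1)).toNat, by omega⟩
      rw [heq, hm, key, key2]
    · obtain ⟨m, hm⟩ : ∃ m : ℕ, k = -(m : ℤ) := ⟨(-k).toNat, by omega⟩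
      refine le_trans (measure_mono (t := {x : ℤ_[p] | ‖x - a‖ ≤ (p : ℝ) ^ (-m : ℤ)}) ?_) ?_
      · intro x hx
        simp only [Set.mem_ofPred_eq] at hx ⊢
        have h5 : ‖x - a‖ < (p : ℝ) ^ (k + 1) := lt_of_le_of_lt hx (lt_of_le_of_ne hk2 heq)
        rw [← PadicInt.norm_le_pow_iff_norm_lt_pow_add_one] at h5
        rwa [hm] at h5
      · rw [key, key2, ← hm]
        exact ENNReal.ofReal_le_ofReal hk1.le

end PadicIntVolume

theorem norm_sub_le_max_of_ultrametric {S : Type*} [SeminormedAddGroup S] [IsUltrametricDist S]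
    (x y : S) : ‖x - y‖ ≤ max ‖x‖ ‖y‖ := by
  rw [sub_eq_add_neg, ← norm_neg y]
  exact IsUltrametricDist.norm_add_le_max x (-y)

section LinearForms

open scoped ENNReal

variable {p : ℕ} [Fact p.Prime] {Ω : Type*} [NormedField Ω] [NormedAlgebra ℚ_[p] Ω]

/-- The embedding of `ℤ_p` into a normed extension of `ℚ_p`. -/
noncomputable def PadicInt.emb (p : ℕ) [Fact p.Prime] (Ω : Type*) [NormedField Ω]
    [NormedAlgebra ℚ_[p] Ω] : ℤ_[p] →+* Ω :=
  (algebraMap ℚ_[p] Ω).comp PadicInt.Coe.ringHom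

theorem PadicInt.norm_emb (x : ℤ_[p]) : ‖PadicInt.emb p Ω x‖ = ‖x‖ := by
  rw [PadicInt.emb, RingHom.comp_apply, norm_algebraMap']
  rfl

@[fun_prop]
theorem PadicInt.continuous_emb : Continuous (PadicInt.emb p Ω) :=
  (AddMonoidHomClass.isometry_of_norm (PadicInt.emb p Ω) PadicInt.norm_emb).continuous

variable [IsUltrametricDist Ω]

theorem PadicInt.norm_mul_volume_le_one (a b : Ω) :
    ENNReal.ofReal ‖a‖ * volume {x : ℤ_[p] | ‖a * PadicInt.emb p Ω x + b‖ ≤ 1} ≤ 1 := by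
  rcases eq_or_ne a 0 with rfl | ha
  · simp
  have ha' : 0 < ‖a‖ := norm_pos_iff.2 ha
  rcases Set.eq_empty_or_nonempty {x : ℤ_[p] | ‖a * PadicInt.emb p Ω x + b‖ ≤ 1} with h | ⟨y, hy⟩
  · simp [h]
  calc _ ≤ ENNReal.ofReal ‖a‖ * volume {x : ℤ_[p] | ‖x - y‖ ≤ ‖a‖⁻¹} := by
        refine mul_le_mul_right (measure_mono fun x hx => ?_) _
        rw [Set.mem_ofPred_eq] at hx hy ⊢
        rw [← PadicInt.norm_emb (Ω := Ω), map_sub, ← one_div, le_div_iff₀' ha', ← norm_mul]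
        have := norm_sub_le_max_of_ultrametric (a * PadicInt.emb p Ω x + b) (a * PadicInt.emb p Ω y + b)
        rw [show a * PadicInt.emb p Ω x + b - (a * PadicInt.emb p Ω y + b) =
          a * (PadicInt.emb p Ω x - PadicInt.emb p Ω y) by ring] at this
        exact this.trans (max_le hx hy)
    _ ≤ ENNReal.ofReal ‖a‖ * ENNReal.ofReal ‖a‖⁻¹ := mul_le_mul_right (PadicInt.volume_norm_sub_le y _) _
    _ = 1 := by
        rw [← ENNReal.ofReal_mul ha'.le, mul_inv_cancel₀ ha'.ne', ENNReal.ofReal_one]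

theorem Matrix.norm_det_mul_volume_affine_le_one (n : ℕ) (A : Matrix (Fin n) (Fin n) Ω)
    (d : Fin n → Ω) :
    ENNReal.ofReal ‖A.det‖ * volume {g : Fin n → ℤ_[p] |
      ∀ i, ‖∑ j, A i j * PadicInt.emb p Ω (g j) + d i‖ ≤ 1} ≤ 1 := by
  induction n with
  | zero =>
    simp only [Matrix.det_isEmpty, norm_one, ENNReal.ofReal_one, one_mul]
    exact prob_le_one
  | succ n ih =>
    rcases eq_or_ne A.det 0 with h0 | h0
    · simp [h0]
    obtain ⟨i0, hi0⟩ := Finite.exists_max (fun i => ‖A i 0‖)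
    have ha : A i0 0 ≠ 0 := by
      intro h
      apply h0
      refine Matrix.det_eq_zero_of_column_eq_zero 0 fun i => ?_
      have := hi0 i
      rw [h, norm_zero] at this
      exact norm_le_zero_iff.1 this
    set m : Fin (n + 1) → Ω := fun i => A i 0 / A i0 0 with hm
    have hm1 : ∀ i, ‖m i‖ ≤ 1 := fun i => by
      rw [hm, norm_div]
      exact div_le_one_of_le₀ (hi0 i) (norm_nonneg _)
    set B : Matrix (Fin n) (Fin n) Ω := fun i j =>
      A (i0.succAbove i) j.succ - m (i0.succAbove i) * A i0 j.succ with hB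
    have hdet : ‖A.det‖ = ‖A i0 0‖ * ‖B.det‖ := by
      set C : Matrix (Fin (n + 1)) (Fin (n + 1)) Ω := fun i j =>
        if i = i0 then A i j else A i j - m i * A i0 j with hC
      have h1 : A.det = C.det := by
        refine Matrix.det_eq_of_forall_row_eq_smul_add_const
          (fun i => if i = i0 then 0 else m i) i0 (by simp) fun i j => ?_
        by_cases hi : i = i0
        · simp [hC, hi]
        · simp [hC, hi]
      rw [h1, Matrix.det_succ_column_zero, Finset.sum_eq_single i0]
      · have h2 : C.submatrix i0.succAbove Fin.succ = B := by
          ext i j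
          exact if_neg (Fin.succAbove_ne i0 i)
        have h3 : C i0 0 = A i0 0 := by simp [hC]
        rw [norm_mul, norm_mul, norm_pow, norm_neg, norm_one, one_pow, one_mul, h2, h3]
      · intro i _ hi
        have : C i 0 = 0 := by
          simp [hC, hi, hm, div_mul_cancel₀ _ ha]
        simp [this]
      · simp
    set d' : Fin n → Ω := fun i => d (i0.succAbove i) - m (i0.succAbove i) * d i0 with hd'
    set T : Set (Fin n → ℤ_[p]) := {g | ∀ i, ‖∑ j, B i j * PadicInt.emb p Ω (g j) + d' i‖ ≤ 1}
    have hTm : MeasurableSet T := by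
      refine IsClosed.measurableSet ?_
      simp only [T, Set.ofPred_forall]
      exact isClosed_iInter fun i => isClosed_le (by fun_prop) continuous_const
    set s : Set (ℤ_[p] × (Fin n → ℤ_[p])) := {x | x.2 ∈ T ∧
      ‖A i0 0 * PadicInt.emb p Ω x.1 +
        (∑ j, A i0 (Fin.succ j) * PadicInt.emb p Ω (x.2 j) + d i0)‖ ≤ 1} with hs
    have hsm : MeasurableSet s := by
      refine MeasurableSet.inter (measurable_snd hTm) (IsClosed.measurableSet ?_)
      refine isClosed_le (f := fun x : ℤ_[p] × (Fin n → ℤ_[p]) => ‖A i0 0 * PadicInt.emb p Ω x.1 +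
        (∑ j, A i0 (Fin.succ j) * PadicInt.emb p Ω (x.2 j) + d i0)‖) ?_ continuous_const
      fun_prop
    have hle : volume {g : Fin (n + 1) → ℤ_[p] |
        ∀ i, ‖∑ j, A i j * PadicInt.emb p Ω (g j) + d i‖ ≤ 1} ≤ volume s := by
      rw [← (volume_preserving_piFinSuccAbove (fun _ => ℤ_[p]) 0).measure_preimage
        hsm.nullMeasurableSet]
      refine measure_mono fun g hg => ?_
      rw [Set.mem_ofPred_eq] at hg
      have hrow : ∀ i, ∑ j, A i j * PadicInt.emb p Ω (g j) =
          A i 0 * PadicInt.emb p Ω (g 0) + ∑ j, A i (Fin.succ j) * PadicInt.emb p Ω (g j.succ) :=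
        fun i => Fin.sum_univ_succ _
      refine ⟨fun i => ?_, ?_⟩
      · have h1 := hg (i0.succAbove i)
        have h2 : ‖m (i0.succAbove i) * (∑ j, A i0 j * PadicInt.emb p Ω (g j) + d i0)‖ ≤ 1 := by
          rw [norm_mul]
          exact mul_le_one₀ (hm1 _) (norm_nonneg _) (hg i0)
        have h3 := (norm_sub_le_max_of_ultrametric _ _).trans (max_le h1 h2)
        refine le_trans (le_of_eq (congrArg norm ?_)) h3
        rw [hrow, hrow]
        simp only [hB, hd', sub_mul, Finset.sum_sub_distrib, mul_add, Finset.mul_sum]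
        have : m (i0.succAbove i) * (A i0 0 * PadicInt.emb p Ω (g 0)) =
            A (i0.succAbove i) 0 * PadicInt.emb p Ω (g 0) := by
          simp only [hm]; field_simp
        rw [this]
        simp only [MeasurableEquiv.piFinSuccAbove_apply, Fin.insertNthEquiv_zero, Fin.consEquiv_symm_apply]
        simp only [mul_assoc, Fin.tail]
        ring
      · have h1 := hg i0
        rw [hrow] at h1
        simpa [Fin.consEquiv_symm_apply, Fin.tail, add_assoc] using h1
    calc _ ≤ ENNReal.ofReal ‖A.det‖ * volume s := by gcongr
      _ = ENNReal.ofReal ‖A.det‖ * ∫⁻ g, volume ((fun x => (x, g)) ⁻¹' s) := by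
        rw [Measure.volume_eq_prod, Measure.prod_apply_symm hsm]
      _ = ENNReal.ofReal ‖B.det‖ *
          (ENNReal.ofReal ‖A i0 0‖ * ∫⁻ g, volume ((fun x => (x, g)) ⁻¹' s)) := by
        rw [hdet, mul_comm, ENNReal.ofReal_mul (norm_nonneg _), mul_comm (ENNReal.ofReal _), mul_comm,
          mul_assoc]
      _ = ENNReal.ofReal ‖B.det‖ *
          (∫⁻ g, ENNReal.ofReal ‖A i0 0‖ * volume ((fun x => (x, g)) ⁻¹' s)) := by
        rw [lintegral_const_mul' _ _ ENNReal.ofReal_ne_top]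
      _ ≤ ENNReal.ofReal ‖B.det‖ * ∫⁻ g, T.indicator 1 g := by
        gcongr with g
        by_cases hg : g ∈ T
        · simp only [hg, Set.indicator_of_mem, Pi.one_apply]
          refine le_trans ?_ (PadicInt.norm_mul_volume_le_one (p := p) (A i0 0)
            (∑ j, A i0 (Fin.succ j) * PadicInt.emb p Ω (g j) + d i0))
          gcongr
          exact fun x hx => hx.2
        · have : (fun x => (x, g)) ⁻¹' s = ∅ := by
            ext x; simp [hs, hg]
          simp [this]
      _ ≤ 1 := by
        rw [lintegral_indicator_one hTm]
        exact ih B d'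

end LinearForms

section Krylov

open Matrix Polynomial

variable {R : Type*} [CommRing R]

/-- The determinant of the Krylov matrix `[w, N w, …, N ^ (n - 1) w]`. -/
def krylovDet {n : ℕ} (N : Matrix (Fin n) (Fin n) R) (w : Fin n → R) : R :=
  (Matrix.of fun i j : Fin n => ((N ^ (j : ℕ)) *ᵥ w) i).det

theorem krylov_recursion {n : ℕ} (N : Matrix (Fin n) (Fin n) R) (w : Fin n → R)
    (q : ℕ → Fin n → R) (u : ℕ → R) (h0 : q 0 = w)
    (hs : ∀ j, q (j + 1) = N *ᵥ q j + u j • w) (j : ℕ) :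
    q j = (N ^ j) *ᵥ w + ∑ i ∈ Finset.range j, u (j - 1 - i) • ((N ^ i) *ᵥ w) := by
  induction j with
  | zero => simp [h0]
  | succ j ih =>
    rw [hs, ih, Matrix.mulVec_add, Matrix.mulVec_mulVec, ← pow_succ', Finset.sum_range_succ',
      Matrix.mulVec_sum, add_assoc]
    congr 1
    congr 1
    · refine Finset.sum_congr rfl fun i hi => ?_
      rw [Matrix.mulVec_smul, Matrix.mulVec_mulVec, ← pow_succ']
      congr 2
      omega
    · simp

theorem det_of_krylov_recursion {n : ℕ} (N : Matrix (Fin n) (Fin n) R) (w : Fin n → R)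
    (q : ℕ → Fin n → R) (u : ℕ → R) (h0 : q 0 = w)
    (hs : ∀ j, q (j + 1) = N *ᵥ q j + u j • w) :
    (Matrix.of fun i j : Fin n => q j i).det = krylovDet N w := by
  set U : Matrix (Fin n) (Fin n) R := Matrix.of fun i j =>
    if i = j then 1 else if i < j then u (j - 1 - i) else 0 with hU
  have hUdet : U.det = 1 := by
    rw [Matrix.det_of_isUpperTriangular]
    · simp [hU]
    · intro i j hij
      have hij : j < i := hij
      simp [hU, hij.ne', hij.not_gt]
  have : (Matrix.of fun i j : Fin n => q j i) =
      (Matrix.of fun i j : Fin n => ((N ^ (j : ℕ)) *ᵥ w) i) * U := by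
    ext i j
    rw [Matrix.of_apply, krylov_recursion N w q u h0 hs, Matrix.mul_apply]
    simp only [Pi.add_apply, Finset.sum_apply, Pi.smul_apply, smul_eq_mul, Matrix.of_apply, hU]
    have h1 : ∀ k : Fin n, ((N ^ (k : ℕ)) *ᵥ w) i *
        (if k = j then 1 else if k < j then u (j - 1 - k) else 0) =
        (fun k : ℕ => (if k = (j : ℕ) then ((N ^ k) *ᵥ w) i else 0) +
          (if k < (j : ℕ) then u (j - 1 - k) * ((N ^ k) *ᵥ w) i else 0)) k := by
      intro k
      simp only [Fin.ext_iff, Fin.lt_def]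
      split_ifs with h2 h3 <;> first | omega | simp [mul_comm]
    rw [Finset.sum_congr rfl fun k _ => h1 k, Fin.sum_univ_eq_sum_range
      (fun k : ℕ => (if k = (j : ℕ) then ((N ^ k) *ᵥ w) i else 0) +
          (if k < (j : ℕ) then u (j - 1 - k) * ((N ^ k) *ᵥ w) i else 0)) n,
      Finset.sum_add_distrib]
    congr 1
    · rw [Finset.sum_ite_eq' (Finset.range n) (j : ℕ)]
      simp
    · rw [← Finset.sum_filter]
      refine Finset.sum_congr ?_ fun _ _ => rfl
      ext k
      simp only [Finset.mem_range, Finset.mem_filter]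
      have := j.2
      omega
  rw [this, Matrix.det_mul, hUdet, mul_one]
  rfl

theorem krylovDet_smul {n : ℕ} (N : Matrix (Fin n) (Fin n) R) (w : Fin n → R) (c : R) :
    krylovDet N (c • w) = c ^ n * krylovDet N w := by
  have : (Matrix.of fun i j : Fin n => ((N ^ (j : ℕ)) *ᵥ (c • w)) i) =
      c • (Matrix.of fun i j : Fin n => ((N ^ (j : ℕ)) *ᵥ w) i) := by
    ext i j
    simp [Matrix.mulVec_smul]
  rw [krylovDet, this, Matrix.det_smul, Fintype.card_fin]
  rfl

/-- The Krylov determinant under conjugation. -/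
theorem krylovDet_mulVec {n : ℕ} (N N' g : Matrix (Fin n) (Fin n) R) (w : Fin n → R)
    (h : N * g = g * N') : krylovDet N (g *ᵥ w) = g.det * krylovDet N' w := by
  have hpow : ∀ j : ℕ, N ^ j * g = g * N' ^ j := by
    intro j
    induction j with
    | zero => simp
    | succ j ih => rw [pow_succ, mul_assoc, h, ← mul_assoc, ih, mul_assoc, ← pow_succ]
  have : (Matrix.of fun i j : Fin n => ((N ^ (j : ℕ)) *ᵥ (g *ᵥ w)) i) =
      g * (Matrix.of fun i j : Fin n => ((N' ^ (j : ℕ)) *ᵥ w) i) := by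
    ext i j
    rw [Matrix.of_apply, Matrix.mulVec_mulVec, hpow, ← Matrix.mulVec_mulVec, Matrix.mul_apply]
    rfl
  rw [krylovDet, this, Matrix.det_mul]
  rfl

theorem krylovDet_add_vecMulVec {n : ℕ} (N : Matrix (Fin n) (Fin n) R) (w a : Fin n → R) :
    krylovDet (N + vecMulVec w a) w = krylovDet N w := by
  rw [← det_of_krylov_recursion N w (fun j => ((N + vecMulVec w a) ^ j) *ᵥ w)
    (fun j => a ⬝ᵥ (((N + vecMulVec w a) ^ j) *ᵥ w)) (by simp)]
  · rfl
  · intro j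
    rw [pow_succ', ← Matrix.mulVec_mulVec, Matrix.add_mulVec, Matrix.vecMulVec_mulVec]
    simp

theorem krylovDet_single_zero {n : ℕ} (M : Matrix (Fin (n + 1)) (Fin (n + 1)) R) :
    krylovDet M (Pi.single 0 1) =
      krylovDet (M.submatrix Fin.succ Fin.succ) (fun i => M i.succ 0) := by
  rw [← det_of_krylov_recursion (M.submatrix Fin.succ Fin.succ) (fun i => M i.succ 0)
    (fun j i => ((M ^ (j + 1)) *ᵥ Pi.single 0 1) i.succ)
    (fun j => ((M ^ (j + 1)) *ᵥ Pi.single 0 1) 0)]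
  · rw [krylovDet, Matrix.det_succ_column_zero, Finset.sum_eq_single 0]
    · simp [Matrix.submatrix]
    · intro i _ hi
      simp [hi]
    · simp
  · ext i
    simp
  · intro j
    ext i
    rw [pow_succ', ← Matrix.mulVec_mulVec]
    simp [Matrix.mulVec, dotProduct, Fin.sum_univ_succ, mul_comm, add_comm]

theorem charpoly_add_vecMulVec {n : ℕ} (N : Matrix (Fin n) (Fin n) R) (b a : Fin n → R)
    (Q : Fin n → R[X])
    (hQ : N.charmatrix *ᵥ Q = N.charpoly • (fun i => C (b i))) :
    (N + vecMulVec b a).charpoly = N.charpoly - (fun i => C (a i)) ⬝ᵥ Q := by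
  rcases Nat.eq_zero_or_pos n with rfl | hn
  · simp [Matrix.charpoly, dotProduct]
  have hreg : IsRegular (N.charpoly ^ n) := (N.charpoly_monic.pow n).isRegular
  apply hreg.left
  have h1 : N.charpoly • (N + vecMulVec b a).charmatrix = N.charmatrix *
      (Matrix.scalar (Fin n) N.charpoly - vecMulVec Q (fun i => C (a i))) := by
    have h2 : (N + vecMulVec b a).charmatrix =
        N.charmatrix - vecMulVec (fun i => C (b i)) (fun i => C (a i)) := by
      ext1 i j
      simp [Matrix.charmatrix_apply, Matrix.vecMulVec_apply, sub_sub]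
    rw [h2, mul_sub, Matrix.mul_vecMulVec, hQ, smul_sub, Matrix.smul_vecMulVec]
    congr 1
    ext1 i j
    simp [Matrix.scalar_apply, mul_comm]
  have h3 := congrArg Matrix.det h1
  rw [Matrix.det_smul, Matrix.det_mul, ← Matrix.eval_charpoly, Matrix.charpoly_vecMulVec,
    Fintype.card_fin] at h3
  simp only [eval_sub, eval_pow, eval_X, eval_smul, smul_eq_mul] at h3
  change N.charpoly ^ n * (N + vecMulVec b a).charpoly = _
  change N.charpoly ^ n * (N + vecMulVec b a).charpoly = N.charpoly * _ at h3
  rw [h3, dotProduct_comm]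
  obtain ⟨m, rfl⟩ : ∃ m, n = m + 1 := ⟨n - 1, by omega⟩
  simp only [Nat.add_sub_cancel]
  ring

theorem exists_charpoly_coeff_add_vecMulVec {n : ℕ} (N : Matrix (Fin n) (Fin n) R)
    (b : Fin n → R) :
    ∃ W : Matrix (Fin n) (Fin n) R, (∃ s : Rˣ, W.det = s * krylovDet N b) ∧
      ∀ (a : Fin n → R) (k : Fin n), (N + vecMulVec b a).charpoly.coeff k =
        N.charpoly.coeff k + (W *ᵥ a) k := by
  nontriviality R
  set u : ℕ → R := fun j => N.charpoly.coeff (n - 1 - j) with hu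
  set q : ℕ → Fin n → R := fun j => Nat.rec b (fun j x => N *ᵥ x + u j • b) j with hq
  have h0 : q 0 = b := rfl
  have hs : ∀ j, q (j + 1) = N *ᵥ q j + u j • b := fun j => rfl
  have hqn : q n = 0 := by
    rw [krylov_recursion N b q u h0 hs n]
    have hCH := congrArg (fun A => A *ᵥ b) (Matrix.aeval_self_charpoly N)
    simp only [Matrix.zero_mulVec] at hCH
    rw [← hCH, aeval_eq_sum_range, Matrix.charpoly_natDegree_eq_dim, Fintype.card_fin,
      Finset.sum_range_succ, Matrix.add_mulVec, Matrix.sum_mulVec, add_comm]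
    congr 1
    · refine Finset.sum_congr rfl fun i hi => ?_
      rw [Finset.mem_range] at hi
      rw [Matrix.smul_mulVec, hu]
      simp only
      congr 2
      omega
    · have := N.charpoly_monic.coeff_natDegree
      rw [Matrix.charpoly_natDegree_eq_dim, Fintype.card_fin] at this
      rw [this, one_smul]
  set Q : Fin n → R[X] := fun i => ∑ j ∈ Finset.range n, C (q j i) * X ^ (n - 1 - j) with hQdef
  have hQ : N.charmatrix *ᵥ Q = N.charpoly • (fun i => C (b i)) := by
    ext1 i
    have hχ : N.charpoly = X ^ n + ∑ j ∈ Finset.range n, C (u j) * X ^ (n - 1 - j) := by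
      conv_lhs => rw [N.charpoly.as_sum_range_C_mul_X_pow]
      have := N.charpoly_monic.coeff_natDegree
      rw [Matrix.charpoly_natDegree_eq_dim, Fintype.card_fin] at this ⊢
      rw [Finset.sum_range_succ, this, C_1, one_mul, add_comm, ← Finset.sum_range_reflect]
    have hNq : ∀ j, ∑ l, C (N i l) * C (q j l) = C (q (j + 1) i) - C (u j) * C (b i) := by
      intro j
      rw [hs]
      simp [Matrix.mulVec, dotProduct]
    have h1 : (N.charmatrix *ᵥ Q) i = X * Q i - ∑ l, C (N i l) * Q l := by
      simp only [Matrix.mulVec, dotProduct, Matrix.charmatrix_apply, sub_mul,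
        Finset.sum_sub_distrib]
      congr 1
      rw [Finset.sum_eq_single i] <;> simp +contextual [eq_comm]
    rw [h1]
    simp only [hQdef, Finset.mul_sum]
    rw [Finset.sum_comm, ← Finset.sum_sub_distrib]
    have h2 : ∀ j ∈ Finset.range n, X * (C (q j i) * X ^ (n - 1 - j)) -
        ∑ l, C (N i l) * (C (q j l) * X ^ (n - 1 - j)) =
        (C (q j i) * X ^ (n - j) - C (q (j + 1) i) * X ^ (n - (j + 1))) +
          C (b i) * (C (u j) * X ^ (n - 1 - j)) := by
      intro j hj
      rw [Finset.mem_range] at hj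
      simp only [← mul_assoc]
      rw [← Finset.sum_mul, hNq, show n - j = (n - 1 - j) + 1 by omega,
        show n - (j + 1) = n - 1 - j by omega]
      ring
    rw [Finset.sum_congr rfl h2, Finset.sum_add_distrib,
      Finset.sum_range_sub' (fun j => C (q j i) * X ^ (n - j)) n, hqn, h0, ← Finset.mul_sum]
    simp only [Pi.zero_apply, C_0, zero_mul, Pi.smul_apply, smul_eq_mul, tsub_zero]
    rw [hχ]
    ring
  refine ⟨Matrix.of fun k l => - q (n - 1 - k) l, ?_, fun a k => ?_⟩
  · refine ⟨(-1) ^ n * Units.map (Int.castRingHom R).toMonoidHom (Equiv.Perm.sign (Fin.revPerm (n := n))), ?_⟩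
    have h1 : (Matrix.of fun k l => - q (n - 1 - k) l : Matrix (Fin n) (Fin n) R) =
        -((Matrix.of fun i j : Fin n => q j i)ᵀ.submatrix (Fin.revPerm : Fin n → Fin n) id) := by
      ext k l
      simp only [Matrix.of_apply, Matrix.neg_apply, Matrix.submatrix_apply, Matrix.transpose_apply,
        Fin.revPerm_apply, Fin.val_rev, id_eq]
      rw [show n - 1 - (k : ℕ) = n - (k + 1) by omega]
    rw [h1, Matrix.det_neg, Matrix.det_permute, Matrix.det_transpose,
      det_of_krylov_recursion N b q u h0 hs]
    simp [mul_assoc]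
  · rw [charpoly_add_vecMulVec N b a Q hQ, coeff_sub, sub_eq_add_neg]
    congr 1
    simp only [dotProduct, hQdef, finsetSum_coeff, coeff_C_mul, coeff_X_pow, Matrix.mulVec,
      Matrix.of_apply]
    rw [← Finset.sum_neg_distrib]
    refine Finset.sum_congr rfl fun l _ => ?_
    rw [Finset.sum_eq_single (n - 1 - (k : ℕ))]
    · have : (k : ℕ) = n - 1 - (n - 1 - k) := by omega
      rw [if_pos this]; ring
    · intro j hj hjk
      rw [Finset.mem_range] at hj
      rw [if_neg (by omega), mul_zero]
    · intro h
      exact absurd (Finset.mem_range.2 (by omega)) h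

end Krylov

section HaarHom

open scoped ENNReal

theorem MeasureTheory.isAddHaarMeasure_volume_prod {G H : Type*} [AddGroup G]
    [TopologicalSpace G] [MeasureSpace G] [AddGroup H] [TopologicalSpace H] [MeasureSpace H]
    [MeasurableAdd G] [MeasurableAdd H]
    [SFinite (volume : Measure G)] [SFinite (volume : Measure H)]
    [(volume : Measure G).IsAddHaarMeasure] [(volume : Measure H).IsAddHaarMeasure] :
    (volume : Measure (G × H)).IsAddHaarMeasure :=
  inferInstanceAs ((volume : Measure G).prod (volume : Measure H)).IsAddHaarMeasure

theorem MeasureTheory.isAddHaarMeasure_volume_fun {ι G : Type*} [Fintype ι] [AddGroup G]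
    [TopologicalSpace G] [MeasureSpace G] [MeasurableAdd G]
    [SigmaFinite (volume : Measure G)] [(volume : Measure G).IsAddHaarMeasure] :
    (volume : Measure (ι → G)).IsAddHaarMeasure :=
  Measure.pi.isAddHaarMeasure _

attribute [local instance] MeasureTheory.isAddHaarMeasure_volume_prod
  MeasureTheory.isAddHaarMeasure_volume_fun

theorem MeasureTheory.lintegral_comp_addMonoidHom {G H : Type*} [AddGroup G]
    [TopologicalSpace G] [MeasureSpace G] [IsTopologicalAddGroup G] [BorelSpace G]
    [AddGroup H] [TopologicalSpace H] [MeasureSpace H] [IsTopologicalAddGroup H] [BorelSpace H]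
    [CompactSpace H] [(volume : Measure G).IsAddHaarMeasure]
    [(volume : Measure H).IsAddHaarMeasure] [IsProbabilityMeasure (volume : Measure G)]
    [IsProbabilityMeasure (volume : Measure H)] (f : G → H) (hadd : ∀ x y, f (x + y) = f x + f y)
    (hcont : Continuous f) (hsurj : Function.Surjective f) (F : H → ℝ≥0∞) (hF : Measurable F) :
    ∫⁻ x, F (f x) = ∫⁻ y, F y :=
  (AddMonoidHom.measurePreserving (μ := volume) (ν := volume) (f := AddMonoidHom.mk' f hadd)
    hcont hsurj (by simp)).lintegral_comp hF

end HaarHom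

section NegativeMoments

open scoped ENNReal

variable {p : ℕ} [Fact p.Prime]

theorem PadicInt.lintegral_enorm_rpow_neg_lt_top {t : ℝ} (ht0 : 0 < t) (ht1 : t < 1) :
    ∫⁻ x : ℤ_[p], ‖x‖ₑ ^ (-t) < ⊤ := by
  have hp1 : 1 < (p : ℝ) := by exact_mod_cast (Fact.out : p.Prime).one_lt
  have hp0 : 0 < (p : ℝ) := by linarith
  have hle : ∀ x : ℤ_[p], ‖x‖ₑ ^ (-t) ≤ ∑' k : ℕ, Set.indicator {x : ℤ_[p] | ‖x - 0‖ ≤ (p : ℝ) ^ (-k : ℤ)}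
      (fun _ => ENNReal.ofReal ((p : ℝ) ^ (k * t))) x := by
    intro x
    rcases eq_or_ne x 0 with rfl | hx
    · have : ∀ k : ℕ, (1 : ℝ≥0∞) ≤ Set.indicator {x : ℤ_[p] | ‖x - 0‖ ≤ (p : ℝ) ^ (-k : ℤ)}
          (fun _ => ENNReal.ofReal ((p : ℝ) ^ (k * t))) 0 := by
        intro k
        rw [Set.indicator_of_mem (by simp only [Set.mem_ofPred_eq, sub_self, norm_zero]; positivity)]
        exact ENNReal.one_le_ofReal.2 (Real.one_le_rpow hp1.le (by positivity))
      have h2 := ENNReal.tsum_le_tsum this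
      rw [ENNReal.tsum_const_eq_top_of_ne_zero one_ne_zero] at h2
      exact le_top.trans h2
    · refine le_trans ?_ (ENNReal.le_tsum x.valuation)
      rw [Set.indicator_of_mem]
      · rw [← ofReal_norm, ENNReal.ofReal_rpow_of_pos (norm_pos_iff.2 hx)]
        refine le_of_eq (congrArg _ ?_)
        rw [PadicInt.norm_eq_zpow_neg_valuation hx, ← Real.rpow_intCast, ← Real.rpow_mul hp0.le]
        congr 1
        push_cast
        ring
      · rw [Set.mem_ofPred_eq, sub_zero, PadicInt.norm_eq_zpow_neg_valuation hx]
  have hterm : ∀ k : ℕ, ∫⁻ x : ℤ_[p], Set.indicator {x : ℤ_[p] | ‖x - 0‖ ≤ (p : ℝ) ^ (-k : ℤ)}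
      (fun _ => ENNReal.ofReal ((p : ℝ) ^ (k * t))) x ≤
      ENNReal.ofReal ((p : ℝ) ^ (t - 1)) ^ k := by
    intro k
    rw [lintegral_indicator_const]
    · calc _ ≤ ENNReal.ofReal ((p : ℝ) ^ (k * t)) * ENNReal.ofReal ((p : ℝ) ^ (-k : ℤ)) :=
            mul_le_mul_right (PadicInt.volume_norm_sub_le 0 _) _
        _ = _ := by
            rw [← ENNReal.ofReal_mul (by positivity), ← ENNReal.ofReal_pow (by positivity),
              ← Real.rpow_intCast, ← Real.rpow_add hp0, ← Real.rpow_natCast, ← Real.rpow_mul hp0.le]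
            congr 2
            push_cast
            ring
    · exact (isClosed_le (by fun_prop) continuous_const).measurableSet
  calc _ ≤ _ := lintegral_mono hle
    _ = _ := lintegral_tsum fun k => (measurable_const.indicator
        (isClosed_le (by fun_prop) continuous_const).measurableSet).aemeasurable
    _ ≤ ∑' k : ℕ, ENNReal.ofReal ((p : ℝ) ^ (t - 1)) ^ k := ENNReal.tsum_le_tsum hterm
    _ = (1 - ENNReal.ofReal ((p : ℝ) ^ (t - 1)))⁻¹ := ENNReal.tsum_geometric _
    _ < ⊤ := by
        rw [ENNReal.inv_lt_top, tsub_pos_iff_lt, ENNReal.ofReal_lt_one]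
        exact Real.rpow_lt_one_of_one_lt_of_neg hp1 (by linarith)

theorem MeasureTheory.lintegral_pi_fin_prod {X : Type*} [MeasureSpace X]
    [SigmaFinite (volume : Measure X)] (f : X → ℝ≥0∞) (hf : Measurable f) (n : ℕ) :
    ∫⁻ x : Fin n → X, ∏ i, f (x i) = (∫⁻ x, f x) ^ n := by
  induction n with
  | zero =>
    simp only [Finset.univ_eq_empty, Finset.prod_empty, lintegral_const, one_mul, pow_zero]
    rw [volume_pi, Measure.pi_univ]
    simp
  | succ n ih =>
    have hm : Measurable fun y : X × (Fin n → X) => f y.1 * ∏ i, f (y.2 i) := by fun_prop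
    have h1 := (volume_preserving_piFinSuccAbove (fun _ : Fin (n + 1) => X) 0).lintegral_comp hm
    rw [Measure.volume_eq_prod, lintegral_prod_mul (f := f) (g := fun y : Fin n → X => ∏ i, f (y i))
      hf.aemeasurable
      (Finset.measurable_prod _ fun i _ => hf.comp (measurable_pi_apply i)).aemeasurable, ih] at h1
    rw [pow_succ', ← h1]
    refine lintegral_congr fun x => ?_
    rw [Fin.prod_univ_succ]
    simp [Fin.consEquiv_symm_apply, Fin.tail]

theorem PadicInt.lintegral_enorm_pi_rpow_neg_lt_top {t : ℝ} (ht0 : 0 < t) (ht1 : t < 1) (n : ℕ) :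
    ∫⁻ x : Fin n → ℤ_[p], (‖x‖ₑ ^ n) ^ (-t) < ⊤ := by
  calc _ ≤ ∫⁻ x : Fin n → ℤ_[p], ∏ i, ‖x i‖ₑ ^ (-t) := by
        refine lintegral_mono fun x => ?_
        rw [ENNReal.prod_rpow_of_ne_top (by simp), ENNReal.rpow_neg, ENNReal.rpow_neg,
          ENNReal.inv_le_inv]
        refine ENNReal.rpow_le_rpow ?_ ht0.le
        calc ∏ i, ‖x i‖ₑ ≤ ∏ i : Fin n, ‖x‖ₑ := Finset.prod_le_prod' fun i _ => by
              rw [enorm_le_iff_norm_le]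
              exact norm_le_pi_norm x i
          _ = _ := by simp
    _ = _ := MeasureTheory.lintegral_pi_fin_prod (fun x : ℤ_[p] => ‖x‖ₑ ^ (-t)) (by fun_prop) n
    _ < ⊤ := ENNReal.pow_lt_top (PadicInt.lintegral_enorm_rpow_neg_lt_top ht0 ht1)

theorem PadicInt.exists_eq_smul_mulVec_single {n : ℕ} (b : Fin (n + 1) → ℤ_[p]) :
    ∃ (c : ℤ_[p]) (h : Matrix (Fin (n + 1)) (Fin (n + 1)) ℤ_[p]), IsUnit h.det ∧ ‖c‖ₑ = ‖b‖ₑ ∧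
      b = c • (h.mulVec (Pi.single 0 1)) := by
  rcases eq_or_ne b 0 with rfl | hb
  · exact ⟨0, 1, by simp, by simp, by simp⟩
  obtain ⟨i0, hi0⟩ := Finite.exists_max (fun i => ‖b i‖)
  have hbn : ‖b i0‖ = ‖b‖ := le_antisymm (norm_le_pi_norm b i0)
    ((pi_norm_le_iff_of_nonneg (norm_nonneg _)).2 hi0)
  have hc : b i0 ≠ 0 := by
    rw [← norm_ne_zero_iff, hbn]; exact norm_ne_zero_iff.2 hb
  have hdvd : ∀ i, ∃ v : ℤ_[p], b i = b i0 * v := by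
    intro i
    have hc' : (b i0 : ℚ_[p]) ≠ 0 := PadicInt.coe_ne_zero.2 hc
    refine ⟨⟨(b i : ℚ_[p]) / b i0, ?_⟩, ?_⟩
    · rw [norm_div]
      exact div_le_one_of_le₀ (hi0 i) (norm_nonneg _)
    · exact Subtype.ext (mul_div_cancel₀ (b i : ℚ_[p]) hc').symm
  choose v hv using hdvd
  have hv0 : v i0 = 1 := by
    have := hv i0
    exact (mul_left_cancel₀ hc (by rw [mul_one]; exact this)).symm
  refine ⟨b i0, ((1 : Matrix (Fin (n + 1)) (Fin (n + 1)) ℤ_[p]).updateCol i0 v).submatrix id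
    (Equiv.swap 0 i0), ?_, ?_, ?_⟩
  · rw [Matrix.det_permute', ← Matrix.cramer_apply, Matrix.cramer_one]
    simp only [Module.End.one_apply, hv0, mul_one]
    exact (Units.map (Int.castRingHom ℤ_[p]).toMonoidHom (Equiv.Perm.sign (Equiv.swap 0 i0))).isUnit
  · rw [← ofReal_norm, ← ofReal_norm, hbn]
  · ext i
    simp [hv i]

end NegativeMoments

section KrylovMoment

open scoped ENNReal
attribute [local instance] MeasureTheory.isAddHaarMeasure_volume_fun

variable {p : ℕ} [Fact p.Prime]

theorem PadicInt.isAddHaarMeasure_volume_matrix_prod (m n k l : ℕ) :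
    (volume : Measure ((Fin m → Fin n → ℤ_[p]) × (Fin k → Fin l → ℤ_[p]))).IsAddHaarMeasure :=
  MeasureTheory.isAddHaarMeasure_volume_prod

theorem PadicInt.isAddHaarMeasure_volume_vector_matrix_prod (j m n k l : ℕ) :
    (volume : Measure ((Fin j → ℤ_[p]) × (Fin m → Fin n → ℤ_[p]) ×
      (Fin k → Fin l → ℤ_[p]))).IsAddHaarMeasure :=
  have := PadicInt.isAddHaarMeasure_volume_matrix_prod (p := p) m n k l
  have : MeasurableAdd ((Fin m → Fin n → ℤ_[p]) × (Fin k → Fin l → ℤ_[p])) :=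
    ⟨fun _ => (continuous_const.add continuous_id).measurable,
      fun _ => (continuous_id.add continuous_const).measurable⟩
  MeasureTheory.isAddHaarMeasure_volume_prod

attribute [local instance] PadicInt.isAddHaarMeasure_volume_matrix_prod
  PadicInt.isAddHaarMeasure_volume_vector_matrix_prod

@[fun_prop]
theorem Continuous.krylovDet {X R : Type*} [TopologicalSpace X] [CommRing R] [TopologicalSpace R]
    [IsTopologicalRing R] {n : ℕ} {N : X → Matrix (Fin n) (Fin n) R} {w : X → Fin n → R}
    (hN : Continuous N) (hw : Continuous w) : Continuous fun x => krylovDet (N x) (w x) := by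
  refine Continuous.matrix_det (continuous_matrix fun i j => ?_)
  have : Continuous fun x => ((N x) ^ (j : ℕ)).mulVec (w x) := (hN.pow _).matrix_mulVec hw
  exact (continuous_apply i).comp this

/-- Negative moment of the Krylov determinant for a fixed vector. -/
theorem krylovDet_moment_step_left {t : ℝ} {n : ℕ} (b : Fin (n + 2) → ℤ_[p]) :
    ∫⁻ x : (Fin (n + 2) → Fin (n + 1) → ℤ_[p]) × (Fin (n + 1) → Fin (n + 2) → ℤ_[p]),
      ‖krylovDet (Matrix.of x.1 * Matrix.of x.2) b‖ₑ ^ (-t) =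
    (‖b‖ₑ ^ (n + 2)) ^ (-t) * ∫⁻ y : (Fin (n + 1) → ℤ_[p]) ×
      (Fin (n + 1) → Fin (n + 1) → ℤ_[p]) × (Fin (n + 1) → Fin (n + 1) → ℤ_[p]),
      ‖krylovDet (Matrix.of y.2.1 * Matrix.of y.2.2) ((Matrix.of y.2.1).mulVec y.1)‖ₑ ^ (-t) := by
  obtain ⟨c, h, hh, hc, hb⟩ := PadicInt.exists_eq_smul_mulVec_single b
  have hh1 : h * h⁻¹ = 1 := Matrix.mul_nonsing_inv h hh
  have hh2 : h⁻¹ * h = 1 := Matrix.nonsing_inv_mul h hh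
  set f : (Fin (n + 2) → Fin (n + 1) → ℤ_[p]) × (Fin (n + 1) → Fin (n + 2) → ℤ_[p]) →
      (Fin (n + 1) → ℤ_[p]) × (Fin (n + 1) → Fin (n + 1) → ℤ_[p]) ×
        (Fin (n + 1) → Fin (n + 1) → ℤ_[p]) := fun x =>
    (fun i => (Matrix.of x.2 * h) i 0, fun i j => (h⁻¹ * Matrix.of x.1) i.succ j,
      fun i j => (Matrix.of x.2 * h) i j.succ) with hf
  have hdet : ‖h.det‖ₑ = 1 := by
    rw [← ofReal_norm, PadicInt.isUnit_iff.1 hh, ENNReal.ofReal_one]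
  have hkr : ∀ x : (Fin (n + 2) → Fin (n + 1) → ℤ_[p]) × (Fin (n + 1) → Fin (n + 2) → ℤ_[p]),
      ‖krylovDet (Matrix.of x.1 * Matrix.of x.2) b‖ₑ ^ (-t) = (‖b‖ₑ ^ (n + 2)) ^ (-t) *
      ‖krylovDet (Matrix.of (f x).2.1 * Matrix.of (f x).2.2)
        ((Matrix.of (f x).2.1).mulVec (f x).1)‖ₑ ^ (-t) := by
    intro x
    rw [← ENNReal.mul_rpow_of_ne_top (by simp) (by simp)]
    congr 1
    rw [hb, krylovDet_smul, enorm_mul, enorm_pow, hc, krylovDet_mulVec _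
      (h⁻¹ * Matrix.of x.1 * (Matrix.of x.2 * h)) h, enorm_mul, hdet, one_mul,
      krylovDet_single_zero, ← hb]
    · rfl
    · simp only [← Matrix.mul_assoc, hh1, Matrix.one_mul]
  have hcont : Continuous fun y : (Fin (n + 1) → ℤ_[p]) ×
      (Fin (n + 1) → Fin (n + 1) → ℤ_[p]) × (Fin (n + 1) → Fin (n + 1) → ℤ_[p]) =>
      krylovDet (Matrix.of y.2.1 * Matrix.of y.2.2) ((Matrix.of y.2.1).mulVec y.1) := by
    have h1 : Continuous fun y : (Fin (n + 1) → ℤ_[p]) × (Fin (n + 1) → Fin (n + 1) → ℤ_[p]) ×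
        (Fin (n + 1) → Fin (n + 1) → ℤ_[p]) => (Matrix.of y.2.1 : Matrix _ _ ℤ_[p]) :=
      continuous_fst.comp continuous_snd
    have h2 : Continuous fun y : (Fin (n + 1) → ℤ_[p]) × (Fin (n + 1) → Fin (n + 1) → ℤ_[p]) ×
        (Fin (n + 1) → Fin (n + 1) → ℤ_[p]) => (Matrix.of y.2.2 : Matrix _ _ ℤ_[p]) :=
      continuous_snd.comp continuous_snd
    exact Continuous.krylovDet (h1.matrix_mul h2) (h1.matrix_mulVec continuous_fst)
  have hmeas : Measurable fun y : (Fin (n + 1) → ℤ_[p]) ×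
      (Fin (n + 1) → Fin (n + 1) → ℤ_[p]) × (Fin (n + 1) → Fin (n + 1) → ℤ_[p]) =>
      ‖krylovDet (Matrix.of y.2.1 * Matrix.of y.2.2) ((Matrix.of y.2.1).mulVec y.1)‖ₑ ^ (-t) :=
    hcont.enorm.measurable.pow_const _
  have hfc : Continuous f := by
    have h1 : Continuous fun x : (Fin (n + 2) → Fin (n + 1) → ℤ_[p]) ×
        (Fin (n + 1) → Fin (n + 2) → ℤ_[p]) => h⁻¹ * Matrix.of x.1 :=
      Continuous.matrix_mul continuous_const continuous_fst
    have h2 : Continuous fun x : (Fin (n + 2) → Fin (n + 1) → ℤ_[p]) ×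
        (Fin (n + 1) → Fin (n + 2) → ℤ_[p]) => Matrix.of x.2 * h :=
      Continuous.matrix_mul continuous_snd continuous_const
    refine Continuous.prodMk ?_ (Continuous.prodMk ?_ ?_)
    · exact continuous_pi fun i => h2.matrix_elem i 0
    · exact continuous_pi fun i => continuous_pi fun j => h1.matrix_elem i.succ j
    · exact continuous_pi fun i => continuous_pi fun j => h2.matrix_elem i j.succ
  simp only [hkr]
  have hm2 : Measurable fun x => ‖krylovDet (Matrix.of (f x).2.1 * Matrix.of (f x).2.2)
        ((Matrix.of (f x).2.1).mulVec (f x).1)‖ₑ ^ (-t) := hmeas.comp hfc.measurable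
  rw [lintegral_const_mul _ hm2]
  congr 1
  refine MeasureTheory.lintegral_comp_addMonoidHom f ?_ hfc ?_ (fun y =>
    ‖krylovDet (Matrix.of y.2.1 * Matrix.of y.2.2) ((Matrix.of y.2.1).mulVec y.1)‖ₑ ^ (-t)) hmeas
  · intro x y
    simp only [hf, Prod.mk_add_mk, Prod.mk.injEq, Prod.fst_add, Prod.snd_add]
    refine ⟨?_, ?_, ?_⟩ <;> ext <;>
      simp [Matrix.mul_apply, add_mul, mul_add, Finset.sum_add_distrib]
  · rintro ⟨a, B, A⟩
    refine ⟨(h * (Matrix.of (Fin.cons 0 B : Fin (n + 2) → Fin (n + 1) → ℤ_[p])),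
      (Matrix.of fun i => (Fin.cons (a i) (A i) : Fin (n + 2) → ℤ_[p])) * h⁻¹), ?_⟩
    have e1 : h⁻¹ * Matrix.of (h * (Matrix.of (Fin.cons 0 B : Fin (n + 2) → Fin (n + 1) → ℤ_[p])))
      = Matrix.of (Fin.cons 0 B : Fin (n + 2) → Fin (n + 1) → ℤ_[p]) := by
      change h⁻¹ * (h * (Matrix.of (Fin.cons 0 B) : Matrix (Fin (n + 2)) (Fin (n + 1)) ℤ_[p])) = _
      rw [← Matrix.mul_assoc, hh2, Matrix.one_mul]
    have e2 : Matrix.of ((Matrix.of fun i => (Fin.cons (a i) (A i) : Fin (n + 2) → ℤ_[p])) * h⁻¹)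
        * h = (Matrix.of fun i => (Fin.cons (a i) (A i) : Fin (n + 2) → ℤ_[p])) := by
      change ((Matrix.of fun i => Fin.cons (a i) (A i) :
        Matrix (Fin (n + 1)) (Fin (n + 2)) ℤ_[p]) * h⁻¹) * h = _
      rw [Matrix.mul_assoc, hh2, Matrix.mul_one]
    simp only [hf, e1, e2]
    simp

/-- Negative moment of the Krylov determinant of `(B * A, B a)` for a fixed vector `a`. -/
theorem krylovDet_moment_step_right {t : ℝ} {n : ℕ} (a : Fin (n + 1) → ℤ_[p]) :
    ∫⁻ x : (Fin (n + 1) → Fin (n + 1) → ℤ_[p]) × (Fin (n + 1) → Fin (n + 1) → ℤ_[p]),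
      ‖krylovDet (Matrix.of x.1 * Matrix.of x.2) ((Matrix.of x.1).mulVec a)‖ₑ ^ (-t) =
    (‖a‖ₑ ^ (n + 1)) ^ (-t) * ∫⁻ y : (Fin (n + 1) → ℤ_[p]) ×
      (Fin (n + 1) → Fin n → ℤ_[p]) × (Fin n → Fin (n + 1) → ℤ_[p]),
      ‖krylovDet (Matrix.of y.2.1 * Matrix.of y.2.2) y.1‖ₑ ^ (-t) := by
  obtain ⟨c, g, hg, hc, ha⟩ := PadicInt.exists_eq_smul_mulVec_single a
  have hg1 : g * g⁻¹ = 1 := Matrix.mul_nonsing_inv g hg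
  have hg2 : g⁻¹ * g = 1 := Matrix.nonsing_inv_mul g hg
  set f : (Fin (n + 1) → Fin (n + 1) → ℤ_[p]) × (Fin (n + 1) → Fin (n + 1) → ℤ_[p]) →
      (Fin (n + 1) → ℤ_[p]) × (Fin (n + 1) → Fin n → ℤ_[p]) ×
        (Fin n → Fin (n + 1) → ℤ_[p]) := fun x =>
    (fun i => (Matrix.of x.1 * g) i 0, fun i j => (Matrix.of x.1 * g) i j.succ,
      fun i j => (g⁻¹ * Matrix.of x.2) i.succ j) with hf
  have hkr : ∀ x : (Fin (n + 1) → Fin (n + 1) → ℤ_[p]) × (Fin (n + 1) → Fin (n + 1) → ℤ_[p]),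
      ‖krylovDet (Matrix.of x.1 * Matrix.of x.2) ((Matrix.of x.1).mulVec a)‖ₑ ^ (-t) =
      (‖a‖ₑ ^ (n + 1)) ^ (-t) *
      ‖krylovDet (Matrix.of (f x).2.1 * Matrix.of (f x).2.2) (f x).1‖ₑ ^ (-t) := by
    intro x
    rw [← ENNReal.mul_rpow_of_ne_top (by simp) (by simp)]
    congr 1
    have e1 : (Matrix.of x.1).mulVec a = c • (f x).1 := by
      rw [ha, Matrix.mulVec_smul, Matrix.mulVec_mulVec]
      congr 1
      ext i
      simp [hf]
    have e2 : Matrix.of x.1 * Matrix.of x.2 = Matrix.of (f x).2.1 * Matrix.of (f x).2.2 +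
        Matrix.vecMulVec (f x).1 ((g⁻¹ * Matrix.of x.2) 0) := by
      have : Matrix.of x.1 * Matrix.of x.2 = (Matrix.of x.1 * g) * (g⁻¹ * Matrix.of x.2) := by
        rw [Matrix.mul_assoc, ← Matrix.mul_assoc g, hg1, Matrix.one_mul]
      rw [this]
      ext i j
      rw [Matrix.mul_apply, Fin.sum_univ_succ, add_comm]
      rfl
    rw [e1, krylovDet_smul, enorm_mul, enorm_pow, hc, e2, krylovDet_add_vecMulVec]
  have hcont : Continuous fun y : (Fin (n + 1) → ℤ_[p]) ×
      (Fin (n + 1) → Fin n → ℤ_[p]) × (Fin n → Fin (n + 1) → ℤ_[p]) =>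
      krylovDet (Matrix.of y.2.1 * Matrix.of y.2.2) y.1 := by
    have h1 : Continuous fun y : (Fin (n + 1) → ℤ_[p]) × (Fin (n + 1) → Fin n → ℤ_[p]) ×
        (Fin n → Fin (n + 1) → ℤ_[p]) => (Matrix.of y.2.1 : Matrix _ _ ℤ_[p]) :=
      continuous_fst.comp continuous_snd
    have h2 : Continuous fun y : (Fin (n + 1) → ℤ_[p]) × (Fin (n + 1) → Fin n → ℤ_[p]) ×
        (Fin n → Fin (n + 1) → ℤ_[p]) => (Matrix.of y.2.2 : Matrix _ _ ℤ_[p]) :=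
      continuous_snd.comp continuous_snd
    exact Continuous.krylovDet (h1.matrix_mul h2) continuous_fst
  have hmeas : Measurable fun y : (Fin (n + 1) → ℤ_[p]) ×
      (Fin (n + 1) → Fin n → ℤ_[p]) × (Fin n → Fin (n + 1) → ℤ_[p]) =>
      ‖krylovDet (Matrix.of y.2.1 * Matrix.of y.2.2) y.1‖ₑ ^ (-t) :=
    hcont.enorm.measurable.pow_const _
  have hfc : Continuous f := by
    have h1 : Continuous fun x : (Fin (n + 1) → Fin (n + 1) → ℤ_[p]) ×
        (Fin (n + 1) → Fin (n + 1) → ℤ_[p]) => Matrix.of x.1 * g :=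
      Continuous.matrix_mul continuous_fst continuous_const
    have h2 : Continuous fun x : (Fin (n + 1) → Fin (n + 1) → ℤ_[p]) ×
        (Fin (n + 1) → Fin (n + 1) → ℤ_[p]) => g⁻¹ * Matrix.of x.2 :=
      Continuous.matrix_mul continuous_const continuous_snd
    refine Continuous.prodMk ?_ (Continuous.prodMk ?_ ?_)
    · exact continuous_pi fun i => h1.matrix_elem i 0
    · exact continuous_pi fun i => continuous_pi fun j => h1.matrix_elem i j.succ
    · exact continuous_pi fun i => continuous_pi fun j => h2.matrix_elem i.succ j
  simp only [hkr]
  have hm2 : Measurable fun x => ‖krylovDet (Matrix.of (f x).2.1 * Matrix.of (f x).2.2)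
        (f x).1‖ₑ ^ (-t) := hmeas.comp hfc.measurable
  rw [lintegral_const_mul _ hm2]
  congr 1
  refine MeasureTheory.lintegral_comp_addMonoidHom f ?_ hfc ?_ (fun y =>
    ‖krylovDet (Matrix.of y.2.1 * Matrix.of y.2.2) y.1‖ₑ ^ (-t)) hmeas
  · intro x y
    simp only [hf, Prod.mk_add_mk, Prod.mk.injEq, Prod.fst_add, Prod.snd_add]
    refine ⟨?_, ?_, ?_⟩ <;> ext <;>
      simp [Matrix.mul_apply, add_mul, mul_add, Finset.sum_add_distrib]
  · rintro ⟨b, B, A⟩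
    refine ⟨((Matrix.of fun i => (Fin.cons (b i) (B i) : Fin (n + 1) → ℤ_[p])) * g⁻¹,
      g * (Matrix.of (Fin.cons 0 A : Fin (n + 1) → Fin (n + 1) → ℤ_[p]))), ?_⟩
    have e1 : g⁻¹ * Matrix.of (g * (Matrix.of (Fin.cons 0 A : Fin (n + 1) → Fin (n + 1) → ℤ_[p])))
      = Matrix.of (Fin.cons 0 A : Fin (n + 1) → Fin (n + 1) → ℤ_[p]) := by
      change g⁻¹ * (g * _) = _
      rw [← Matrix.mul_assoc, hg2, Matrix.one_mul]
    have e2 : Matrix.of ((Matrix.of fun i => (Fin.cons (b i) (B i) : Fin (n + 1) → ℤ_[p])) * g⁻¹)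
        * g = (Matrix.of fun i => (Fin.cons (b i) (B i) : Fin (n + 1) → ℤ_[p])) := by
      change (_ * g⁻¹) * g = _
      rw [Matrix.mul_assoc, hg2, Matrix.mul_one]
    simp only [hf, e1, e2]
    simp

theorem krylovDet_moment_lt_top {t : ℝ} (ht0 : 0 < t) (ht1 : t < 1) (n : ℕ) :
    ∫⁻ y : (Fin (n + 1) → ℤ_[p]) × (Fin (n + 1) → Fin n → ℤ_[p]) × (Fin n → Fin (n + 1) → ℤ_[p]),
      ‖krylovDet (Matrix.of y.2.1 * Matrix.of y.2.2) y.1‖ₑ ^ (-t) < ⊤ := by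
  induction n with
  | zero =>
    have h := PadicInt.lintegral_enorm_pi_rpow_neg_lt_top (p := p) ht0 ht1 1
    have hm : Measurable fun x : Fin 1 → ℤ_[p] => (‖x‖ₑ ^ 1) ^ (-t) :=
      ((continuous_id.enorm.measurable).pow_const _).pow_const _
    rw [← MeasureTheory.lintegral_comp_addMonoidHom (G := (Fin 1 → ℤ_[p]) ×
      (Fin 1 → Fin 0 → ℤ_[p]) × (Fin 0 → Fin 1 → ℤ_[p])) Prod.fst (fun _ _ => rfl) continuous_fst
      Prod.fst_surjective (fun x : Fin 1 → ℤ_[p] => (‖x‖ₑ ^ 1) ^ (-t)) hm] at h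
    convert h using 5 with y
    rw [pow_one, ← ofReal_norm, ← ofReal_norm]
    congr 1
    simp [krylovDet, Pi.norm_def]
  | succ n ih =>
    have c1 : Continuous fun y : (Fin (n + 2) → ℤ_[p]) × (Fin (n + 2) → Fin (n + 1) → ℤ_[p]) ×
        (Fin (n + 1) → Fin (n + 2) → ℤ_[p]) =>
        krylovDet (Matrix.of y.2.1 * Matrix.of y.2.2) y.1 := by
      have h1 : Continuous fun y : (Fin (n + 2) → ℤ_[p]) × (Fin (n + 2) → Fin (n + 1) → ℤ_[p]) ×
          (Fin (n + 1) → Fin (n + 2) → ℤ_[p]) => (Matrix.of y.2.1 : Matrix _ _ ℤ_[p]) :=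
        continuous_fst.comp continuous_snd
      have h2 : Continuous fun y : (Fin (n + 2) → ℤ_[p]) × (Fin (n + 2) → Fin (n + 1) → ℤ_[p]) ×
          (Fin (n + 1) → Fin (n + 2) → ℤ_[p]) => (Matrix.of y.2.2 : Matrix _ _ ℤ_[p]) :=
        continuous_snd.comp continuous_snd
      exact Continuous.krylovDet (h1.matrix_mul h2) continuous_fst
    have c2 : Continuous fun y : (Fin (n + 1) → ℤ_[p]) ×
        (Fin (n + 1) → Fin (n + 1) → ℤ_[p]) × (Fin (n + 1) → Fin (n + 1) → ℤ_[p]) =>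
        krylovDet (Matrix.of y.2.1 * Matrix.of y.2.2) ((Matrix.of y.2.1).mulVec y.1) := by
      have h1 : Continuous fun y : (Fin (n + 1) → ℤ_[p]) × (Fin (n + 1) → Fin (n + 1) → ℤ_[p]) ×
          (Fin (n + 1) → Fin (n + 1) → ℤ_[p]) => (Matrix.of y.2.1 : Matrix _ _ ℤ_[p]) :=
        continuous_fst.comp continuous_snd
      have h2 : Continuous fun y : (Fin (n + 1) → ℤ_[p]) × (Fin (n + 1) → Fin (n + 1) → ℤ_[p]) ×
          (Fin (n + 1) → Fin (n + 1) → ℤ_[p]) => (Matrix.of y.2.2 : Matrix _ _ ℤ_[p]) :=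
        continuous_snd.comp continuous_snd
      exact Continuous.krylovDet (h1.matrix_mul h2) (h1.matrix_mulVec continuous_fst)
    rw [Measure.volume_eq_prod, lintegral_prod _ (c1.enorm.measurable.pow_const _).aemeasurable]
    simp only [krylovDet_moment_step_left]
    have hmleft : Measurable fun x : Fin (n + 2) → ℤ_[p] => (‖x‖ₑ ^ (n + 2)) ^ (-t) :=
      ((continuous_id.enorm.measurable).pow_const _).pow_const _
    rw [lintegral_mul_const _ hmleft]
    refine ENNReal.mul_lt_top (PadicInt.lintegral_enorm_pi_rpow_neg_lt_top ht0 ht1 _) ?_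
    rw [Measure.volume_eq_prod, lintegral_prod _ (c2.enorm.measurable.pow_const _).aemeasurable]
    simp only [krylovDet_moment_step_right]
    have hmright : Measurable fun x : Fin (n + 1) → ℤ_[p] => (‖x‖ₑ ^ (n + 1)) ^ (-t) :=
      ((continuous_id.enorm.measurable).pow_const _).pow_const _
    rw [lintegral_mul_const _ hmright]
    exact ENNReal.mul_lt_top (PadicInt.lintegral_enorm_pi_rpow_neg_lt_top ht0 ht1 _) ih

end KrylovMoment

section LinearPushforward

open scoped ENNReal

theorem MeasureTheory.volume_range_mul_volume_preimage {H : Type*} [AddCommGroup H]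
    [TopologicalSpace H] [CompactSpace H] [T2Space H] [MeasureSpace H] [BorelSpace H]
    [IsTopologicalAddGroup H] [SecondCountableTopology H]
    [(volume : Measure H).IsAddHaarMeasure] [IsProbabilityMeasure (volume : Measure H)]
    (L : H →+ H) (hL : Continuous L) {S : Set H} (hS : MeasurableSet S) :
    volume (Set.range L) * volume (L ⁻¹' S) = volume (Set.range L ∩ S) := by
  have hT : MeasurableSet (Set.range L) := (isCompact_range hL).isClosed.measurableSet
  set U : Set (H × H) := {x | x.1 ∈ Set.range L ∧ L x.2 + x.1 ∈ S} with hU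
  have hUm : MeasurableSet U := by
    refine (measurable_fst hT).inter ?_
    exact ((hL.comp continuous_snd).add continuous_fst).measurable hS
  have h1 : (volume : Measure (H × H)) U = volume (Set.range L) * volume (L ⁻¹' S) := by
    rw [Measure.volume_eq_prod, Measure.prod_apply hUm]
    calc _ = ∫⁻ h : H, (Set.range L).indicator (fun _ => volume (L ⁻¹' S)) h := by
          refine lintegral_congr fun h => ?_
          by_cases hh : h ∈ Set.range L
          · rw [Set.indicator_of_mem hh]
            obtain ⟨β, rfl⟩ := hh
            rw [← measure_preimage_add_right volume β (L ⁻¹' S)]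
            congr 1
            ext α
            simp [hU, map_add]
          · rw [Set.indicator_of_notMem hh]
            convert measure_empty (μ := (volume : Measure H))
            ext α
            simp only [hU, Set.mem_preimage, Set.mem_ofPred_eq, Set.mem_empty_iff_false, iff_false]
            exact fun h' => hh h'.1
      _ = _ := by rw [lintegral_indicator_const hT, mul_comm]
  have h2 : (volume : Measure (H × H)) U = volume (Set.range L ∩ S) := by
    rw [Measure.volume_eq_prod, Measure.prod_apply_symm hUm]
    calc _ = ∫⁻ _ : H, volume (Set.range L ∩ S) := by
          refine lintegral_congr fun α => ?_
          rw [← measure_preimage_add volume (L α) (Set.range L ∩ S)]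
          congr 1
          ext h
          simp only [hU, Set.mem_preimage, Set.mem_ofPred_eq, Set.mem_inter_iff, Set.mem_range]
          refine and_congr_left fun _ => ⟨?_, ?_⟩
          · rintro ⟨y, rfl⟩; exact ⟨α + y, by simp⟩
          · rintro ⟨y, hy⟩; exact ⟨y - α, by simp [hy]⟩
      _ = _ := by simp
  rw [← h1, h2]

variable {p : ℕ} [Fact p.Prime]

attribute [local instance] MeasureTheory.isAddHaarMeasure_volume_fun

theorem PadicInt.volume_norm_le_norm (d : ℤ_[p]) :
    volume {x : ℤ_[p] | ‖x‖ ≤ ‖d‖} = ‖d‖ₑ := by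
  by_cases hd : d = 0
  · subst hd
    have h := PadicInt.volume_norm_sub_le (p := p) 0 0
    simpa using h
  · have h := PadicInt.volume_toZModPow_fiber (p := p) d.valuation 0
    have h3 : ‖d‖ₑ = ((p : ℝ≥0∞) ^ d.valuation)⁻¹ := by
      rw [← ofReal_norm, PadicInt.norm_eq_zpow_neg_valuation hd, zpow_neg, zpow_natCast,
        ENNReal.ofReal_inv_of_pos (by have := (Fact.out : p.Prime).pos; positivity),
        ENNReal.ofReal_pow (by positivity), ENNReal.ofReal_natCast]
    rw [h3, ← h]
    congr 1
    ext x
    rw [Set.mem_ofPred_eq, Set.mem_ofPred_eq, PadicInt.norm_eq_zpow_neg_valuation hd,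
      PadicInt.norm_le_pow_iff_mem_span_pow, ← PadicInt.ker_toZModPow, RingHom.mem_ker]

theorem PadicInt.enorm_det_le_volume_range {n : ℕ} (W : Matrix (Fin n) (Fin n) ℤ_[p]) :
    ‖W.det‖ₑ ≤ volume (Set.range W.mulVec) := by
  by_cases hd : W.det = 0
  · simp [hd]
  have hcont : Continuous W.mulVec := continuous_const.matrix_mulVec continuous_id
  set L : (Fin n → ℤ_[p]) →+ (Fin n → ℤ_[p]) := AddMonoidHom.mk' W.mulVec (W.mulVec_add)
  set S : Set (Fin n → ℤ_[p]) := Set.pi Set.univ fun _ => {x : ℤ_[p] | ‖x‖ ≤ ‖W.det‖} with hS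
  have hSm : MeasurableSet S :=
    MeasurableSet.univ_pi fun i => (isClosed_le continuous_norm continuous_const).measurableSet
  have h := MeasureTheory.volume_range_mul_volume_preimage L hcont hSm
  have hST : S ⊆ Set.range W.mulVec := by
    intro x hx
    have : ∀ i, ∃ y, x i = W.det * y := by
      intro i
      have := hx i trivial
      rw [Set.mem_ofPred_eq] at this
      have hd' : (W.det : ℚ_[p]) ≠ 0 := by simpa using hd
      refine ⟨⟨(x i : ℚ_[p]) / W.det, ?_⟩, ?_⟩
      · rw [norm_div, div_le_one (norm_pos_iff.2 hd')]
        exact this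
      · exact PadicInt.ext (show (x i : ℚ_[p]) = (W.det : ℚ_[p]) * (x i / W.det) from
          (mul_div_cancel₀ _ hd').symm)
    choose y hy using this
    refine ⟨W.adjugate.mulVec y, ?_⟩
    rw [Matrix.mulVec_mulVec, Matrix.mul_adjugate]
    ext i
    simp [hy, Matrix.smul_mulVec]
  rw [Set.inter_eq_right.2 (show S ⊆ Set.range L from hST)] at h
  have hvS : volume S = ‖W.det‖ₑ ^ n := by
    rw [hS, volume_pi_pi]
    simp [PadicInt.volume_norm_le_norm]
  have hemb : PadicInt.emb p ℚ_[p] W.det ≠ 0 := by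
    rw [← norm_ne_zero_iff, PadicInt.norm_emb]
    exact norm_ne_zero_iff.2 hd
  set A : Matrix (Fin n) (Fin n) ℚ_[p] :=
    (PadicInt.emb p ℚ_[p] W.det)⁻¹ • W.map (PadicInt.emb p ℚ_[p]) with hA
  have hV := Matrix.norm_det_mul_volume_affine_le_one (p := p) n A 0
  have hset : {g : Fin n → ℤ_[p] | ∀ i, ‖∑ j, A i j * PadicInt.emb p ℚ_[p] (g j) +
      (0 : Fin n → ℚ_[p]) i‖ ≤ 1} = L ⁻¹' S := by
    ext g
    rw [Set.mem_preimage, hS, Set.mem_univ_pi, Set.mem_ofPred_eq]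
    refine forall_congr' fun i => ?_
    have e : ∑ j, A i j * PadicInt.emb p ℚ_[p] (g j) + (0 : Fin n → ℚ_[p]) i =
        (PadicInt.emb p ℚ_[p] W.det)⁻¹ * PadicInt.emb p ℚ_[p] (W.mulVec g i) := by
      simp only [hA, Matrix.mulVec, dotProduct, map_sum, map_mul, Finset.mul_sum, Pi.zero_apply,
        add_zero, Matrix.smul_apply, Matrix.map_apply, smul_eq_mul, mul_assoc]
    rw [e, norm_mul, norm_inv, PadicInt.norm_emb, PadicInt.norm_emb,
      inv_mul_le_one₀ (norm_pos_iff.2 hd)]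
    rfl
  have hdetA : ENNReal.ofReal ‖A.det‖ = (‖W.det‖ₑ ^ n)⁻¹ * ‖W.det‖ₑ := by
    rw [hA, Matrix.det_smul, ← RingHom.mapMatrix_apply, ← RingHom.map_det, norm_mul, norm_pow,
      norm_inv, PadicInt.norm_emb, Fintype.card_fin, inv_pow,
      ENNReal.ofReal_mul (by positivity),
      ENNReal.ofReal_inv_of_pos (pow_pos (norm_pos_iff.2 hd) _),
      ENNReal.ofReal_pow (norm_nonneg _), ofReal_norm]
  rw [hset, hdetA] at hV
  rw [hvS] at h
  have h0 : ‖W.det‖ₑ ^ n ≠ 0 := by simpa using fun h : W.det = 0 => absurd h hd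
  have h1 : ‖W.det‖ₑ ^ n ≠ ⊤ := by simp
  calc ‖W.det‖ₑ = (‖W.det‖ₑ ^ n)⁻¹ * ‖W.det‖ₑ * ‖W.det‖ₑ ^ n := by
        rw [mul_right_comm, ENNReal.inv_mul_cancel h0 h1, one_mul]
    _ = ((‖W.det‖ₑ ^ n)⁻¹ * ‖W.det‖ₑ * volume (L ⁻¹' S)) * volume (Set.range L) := by
        rw [← h]; ring
    _ ≤ 1 * volume (Set.range L) := by gcongr
    _ = _ := one_mul _

theorem PadicInt.enorm_det_mul_volume_affine_le {n : ℕ} (W : Matrix (Fin n) (Fin n) ℤ_[p])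
    (c : Fin n → ℤ_[p]) {S : Set (Fin n → ℤ_[p])} (hS : MeasurableSet S) :
    ‖W.det‖ₑ * volume {a | c + W.mulVec a ∈ S} ≤ volume S := by
  have hcont : Continuous W.mulVec := continuous_const.matrix_mulVec continuous_id
  have h := MeasureTheory.volume_range_mul_volume_preimage
    (AddMonoidHom.mk' W.mulVec (W.mulVec_add)) hcont
    ((measurable_const_add c) hS)
  calc _ ≤ _ := mul_le_mul_left (PadicInt.enorm_det_le_volume_range W) _
    _ = _ := h
    _ ≤ volume ((fun x => c + x) ⁻¹' S) := measure_mono Set.inter_subset_right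
    _ = _ := measure_preimage_add volume c S

theorem PadicInt.volume_affine_le_rpow {n : ℕ} {t : ℝ} (ht0 : 0 < t) (ht1 : t < 1)
    (W : Matrix (Fin n) (Fin n) ℤ_[p])
    (c : Fin n → ℤ_[p]) {S : Set (Fin n → ℤ_[p])} (hS : MeasurableSet S) {w : ℝ≥0∞} (hw : w ≠ 0)
    (hSw : volume S ≤ w) :
    volume {a | c + W.mulVec a ∈ S} ≤ ‖W.det‖ₑ ^ (-t) * w ^ t := by
  have h1 : volume {a | c + W.mulVec a ∈ S} ≤ 1 := prob_le_one
  have h2 := (PadicInt.enorm_det_mul_volume_affine_le W c hS).trans hSw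
  set v := volume {a | c + W.mulVec a ∈ S}
  by_cases hd : W.det = 0
  · rw [hd, enorm_zero, ENNReal.zero_rpow_of_neg (by linarith), ENNReal.top_mul]
    · exact le_top
    · simp [ENNReal.rpow_eq_zero_iff, hw, ht0.le]
  calc v = v ^ (1 : ℝ) := (ENNReal.rpow_one _).symm
    _ ≤ v ^ t := ENNReal.rpow_le_rpow_of_exponent_ge h1 ht1.le
    _ ≤ (‖W.det‖ₑ⁻¹ * w) ^ t := by
      refine ENNReal.rpow_le_rpow ?_ ht0.le
      calc v = ‖W.det‖ₑ⁻¹ * (‖W.det‖ₑ * v) := by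
            rw [← mul_assoc, ENNReal.inv_mul_cancel (by simpa using hd) (by simp), one_mul]
        _ ≤ _ := by gcongr
    _ = _ := by rw [ENNReal.mul_rpow_of_nonneg _ _ ht0.le, ENNReal.inv_rpow, ENNReal.rpow_neg]

end LinearPushforward

section CharpolyPushforward

open scoped ENNReal

variable {p : ℕ} [Fact p.Prime]

attribute [local instance] MeasureTheory.isAddHaarMeasure_volume_fun
  PadicInt.isAddHaarMeasure_volume_matrix_prod PadicInt.isAddHaarMeasure_volume_vector_matrix_prod

theorem Continuous.matrix_charpoly_coeff {X R m : Type*} [TopologicalSpace X] [CommRing R]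
    [TopologicalSpace R] [IsTopologicalRing R] [Fintype m] [DecidableEq m] {M : X → Matrix m m R}
    (hM : Continuous M) (k : ℕ) : Continuous fun x => (M x).charpoly.coeff k := by
  have h : ∀ x, (M x).charpoly.coeff k = MvPolynomial.eval (fun ij : m × m => M x ij.1 ij.2)
      ((Matrix.charpoly.univ R m).coeff k) := by
    intro x
    exact (Matrix.charpoly.univ_coeff_eval₂Hom m (RingHom.id R) (fun ij => M x ij.1 ij.2) k).symm
  simp only [h]
  exact (MvPolynomial.continuous_eval _).comp (continuous_pi fun ij => hM.matrix_elem _ _)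

theorem Matrix.volume_charpoly_mul_le {t : ℝ} (ht0 : 0 < t) (ht1 : t < 1) (n : ℕ) :
    ∃ E : ℝ≥0∞, E < ⊤ ∧ ∀ (S : Set (Fin (n + 1) → ℤ_[p])) (w : ℝ≥0∞), w ≠ 0 → volume S ≤ w →
      volume {x : (Fin (n + 1) → Fin (n + 1) → ℤ_[p]) × (Fin (n + 1) → Fin (n + 1) → ℤ_[p]) |
        (fun k : Fin (n + 1) => (Matrix.of x.1 * Matrix.of x.2).charpoly.coeff k) ∈ S} ≤
      E * w ^ t := by
  refine ⟨_, krylovDet_moment_lt_top (p := p) ht0 ht1 n, fun S₀ w hw hSw₀ => ?_⟩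
  set S := toMeasurable volume S₀ with hSdef
  have hS : MeasurableSet S := measurableSet_toMeasurable _ _
  have hSw : volume S ≤ w := by rwa [hSdef, measure_toMeasurable]
  let V := (Fin (n + 1) → ℤ_[p]) × (Fin (n + 1) → Fin n → ℤ_[p]) × (Fin n → Fin (n + 1) → ℤ_[p])
  let M : V → Matrix (Fin (n + 1)) (Fin (n + 1)) ℤ_[p] :=
    fun y => Matrix.of y.2.1 * Matrix.of y.2.2
  let U : Set (V × (Fin (n + 1) → ℤ_[p])) :=
    {z | (fun k : Fin (n + 1) => (M z.1 + Matrix.vecMulVec z.1.1 z.2).charpoly.coeff k) ∈ S}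
  have hMc : Continuous M := by
    have h1 : Continuous fun y : V => (Matrix.of y.2.1 : Matrix _ _ ℤ_[p]) :=
      continuous_fst.comp continuous_snd
    have h2 : Continuous fun y : V => (Matrix.of y.2.2 : Matrix _ _ ℤ_[p]) :=
      continuous_snd.comp continuous_snd
    exact h1.matrix_mul h2
  have hUm : MeasurableSet U := by
    refine Continuous.measurable (f := fun z : V × (Fin (n + 1) → ℤ_[p]) =>
      (fun k : Fin (n + 1) => (M z.1 + Matrix.vecMulVec z.1.1 z.2).charpoly.coeff k)) ?_ hS
    refine continuous_pi fun k => Continuous.matrix_charpoly_coeff ?_ _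
    exact (hMc.comp continuous_fst).add ((continuous_fst.comp continuous_fst).matrix_vecMulVec
      continuous_snd)
  have : (volume : Measure V).IsAddHaarMeasure := inferInstanceAs
    (volume : Measure ((Fin (n + 1) → ℤ_[p]) × (Fin (n + 1) → Fin n → ℤ_[p]) ×
      (Fin n → Fin (n + 1) → ℤ_[p]))).IsAddHaarMeasure
  have : BorelSpace V := inferInstanceAs (BorelSpace ((Fin (n + 1) → ℤ_[p]) × (Fin (n + 1) → Fin n → ℤ_[p]) ×
      (Fin n → Fin (n + 1) → ℤ_[p])))
  have : SecondCountableTopology V := inferInstanceAs (SecondCountableTopology ((Fin (n + 1) → ℤ_[p]) × (Fin (n + 1) → Fin n → ℤ_[p]) ×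
      (Fin n → Fin (n + 1) → ℤ_[p])))
  have : BorelSpace (V × (Fin (n + 1) → ℤ_[p])) := Prod.borelSpace
  have : MeasurableAdd V := ⟨fun _ => (continuous_const.add continuous_id).measurable,
      fun _ => (continuous_id.add continuous_const).measurable⟩
  have : (volume : Measure (V × (Fin (n + 1) → ℤ_[p]))).IsAddHaarMeasure :=
    MeasureTheory.isAddHaarMeasure_volume_prod
  let g : (Fin (n + 1) → Fin (n + 1) → ℤ_[p]) × (Fin (n + 1) → Fin (n + 1) → ℤ_[p]) →
      V × (Fin (n + 1) → ℤ_[p]) := fun x =>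
    ((fun i => x.2 i 0, fun i j => x.2 i j.succ, fun i => x.1 i.succ), x.1 0)
  have hgc : Continuous g := by fun_prop
  have hgs : Function.Surjective g := by
    rintro ⟨⟨b, B, A⟩, a⟩
    exact ⟨(Fin.cons a A, fun i => Fin.cons (b i) (B i)), by simp [g]⟩
  have hU : {x : (Fin (n + 1) → Fin (n + 1) → ℤ_[p]) × (Fin (n + 1) → Fin (n + 1) → ℤ_[p]) |
        (fun k : Fin (n + 1) => (Matrix.of x.1 * Matrix.of x.2).charpoly.coeff k) ∈ S} =
      g ⁻¹' U := by
    ext x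
    have : M (g x).1 + Matrix.vecMulVec (g x).1.1 (g x).2 = Matrix.of x.2 * Matrix.of x.1 := by
      ext i j
      rw [Matrix.mul_apply, Fin.sum_univ_succ, add_comm]
      rfl
    rw [Set.mem_ofPred_eq, Matrix.charpoly_mul_comm, ← this]
    rfl
  have hgU : volume (g ⁻¹' U) = volume U := by
    have := MeasureTheory.lintegral_comp_addMonoidHom g (fun _ _ => rfl) hgc hgs
      (U.indicator 1) (measurable_one.indicator hUm)
    rw [lintegral_indicator_one hUm] at this
    rw [← this, ← lintegral_indicator_one (hgc.measurable hUm)]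
    rfl
  calc _ ≤ volume {x : (Fin (n + 1) → Fin (n + 1) → ℤ_[p]) ×
          (Fin (n + 1) → Fin (n + 1) → ℤ_[p]) |
        (fun k : Fin (n + 1) => (Matrix.of x.1 * Matrix.of x.2).charpoly.coeff k) ∈ S} :=
        measure_mono fun x hx => subset_toMeasurable _ _ hx
    _ = ∫⁻ y : V, volume (Prod.mk y ⁻¹' U) := by
        rw [hU, hgU, Measure.volume_eq_prod, Measure.prod_apply hUm]
    _ ≤ ∫⁻ y : V, ‖krylovDet (M y) y.1‖ₑ ^ (-t) * w ^ t := by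
        refine lintegral_mono fun y => ?_
        obtain ⟨W, ⟨s, hs⟩, hW⟩ := exists_charpoly_coeff_add_vecMulVec (M y) y.1
        have h := PadicInt.volume_affine_le_rpow ht0 ht1 W
          (fun k : Fin (n + 1) => (M y).charpoly.coeff k) hS hw hSw
        have hs1 : ‖(s : ℤ_[p])‖ₑ = 1 := by
          rw [← ofReal_norm, PadicInt.isUnit_iff.1 s.isUnit, ENNReal.ofReal_one]
        rw [hs, enorm_mul, hs1, one_mul] at h
        convert h using 3
        ext a
        simp only [Set.mem_preimage, U, Set.mem_ofPred_eq, hW]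
        rfl
    _ = _ := by
        refine lintegral_mul_const _ ?_
        exact ((Continuous.krylovDet hMc continuous_fst).enorm.measurable).pow_const _

end CharpolyPushforward

section Slab

open scoped ENNReal

variable {p : ℕ} [Fact p.Prime] {Ω : Type*} [NormedField Ω] [NormedAlgebra ℚ_[p] Ω]

variable (p Ω) in
theorem Padic.norm_natCast_self_algebra : ‖(p : Ω)‖ = (p : ℝ)⁻¹ := by
  rw [← map_natCast (algebraMap ℚ_[p] Ω), norm_algebraMap', Padic.norm_p]

variable (p Ω) in
theorem Padic.natCast_self_algebra_ne_zero : (p : Ω) ≠ 0 := by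
  rw [← norm_ne_zero_iff, Padic.norm_natCast_self_algebra]
  exact inv_ne_zero (Nat.cast_ne_zero.2 (Fact.out : p.Prime).ne_zero)

variable (p Ω) in
theorem Padic.exists_zpow_norm_mem {s : ℝ} (hs : 0 < s) :
    ∃ m : ℤ, s ≤ ‖(p : Ω) ^ m‖ ∧ ‖(p : Ω) ^ m‖ < p * s := by
  have hp : (1 : ℝ) < p := Nat.one_lt_cast.2 (Fact.out : p.Prime).one_lt
  obtain ⟨m, hm⟩ := exists_mem_Ioc_zpow hs hp
  refine ⟨-(m + 1), ?_⟩
  rw [norm_zpow, Padic.norm_natCast_self_algebra, inv_zpow', neg_neg]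
  refine ⟨hm.2, ?_⟩
  rw [zpow_add_one₀ (by positivity), mul_comm]
  exact mul_lt_mul_of_pos_left hm.1 (by positivity)

theorem Matrix.det_updateRow_one {R : Type*} [CommRing R] {n : ℕ} (i : Fin n) (u : Fin n → R) :
    ((1 : Matrix (Fin n) (Fin n) R).updateRow i u).det = u i := by
  rw [← Matrix.cramer_transpose_apply, Matrix.transpose_one, Matrix.cramer_one]
  rfl

variable [IsUltrametricDist Ω]

theorem PadicInt.volume_linearForm_le {n : ℕ} {u : Fin n → Ω} (hu : u ≠ 0) :
    ∃ C : ℝ, 0 < C ∧ ∀ s : ℝ, 0 < s →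
      volume {c : Fin n → ℤ_[p] | ‖∑ j, u j * PadicInt.emb p Ω (c j)‖ ≤ s} ≤
        ENNReal.ofReal (C * s) := by
  obtain ⟨i, hi⟩ := Function.ne_iff.1 hu
  rw [Pi.zero_apply] at hi
  have hp : (0 : ℝ) < p := Nat.cast_pos.2 (Fact.out : p.Prime).pos
  refine ⟨‖u i‖⁻¹ * p, by positivity, fun s hs => ?_⟩
  obtain ⟨m, hm1, hm2⟩ := Padic.exists_zpow_norm_mem p Ω hs
  set σ : Ω := (p : Ω) ^ m
  have hσ : σ ≠ 0 := zpow_ne_zero _ (Padic.natCast_self_algebra_ne_zero p Ω)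
  have h := Matrix.norm_det_mul_volume_affine_le_one (p := p) n
    ((1 : Matrix (Fin n) (Fin n) Ω).updateRow i (σ⁻¹ • u)) 0
  rw [Matrix.det_updateRow_one, Pi.smul_apply, smul_eq_mul] at h
  have hsub : {c : Fin n → ℤ_[p] | ‖∑ j, u j * PadicInt.emb p Ω (c j)‖ ≤ s} ⊆
      {g : Fin n → ℤ_[p] | ∀ k, ‖∑ j, ((1 : Matrix (Fin n) (Fin n) Ω).updateRow i (σ⁻¹ • u)) k j *
        PadicInt.emb p Ω (g j) + (0 : Fin n → Ω) k‖ ≤ 1} := by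
    intro c hc k
    by_cases hk : k = i
    · subst hk
      simp only [Matrix.updateRow_self, Pi.smul_apply, smul_eq_mul, mul_assoc, Pi.zero_apply,
        add_zero, ← Finset.mul_sum]
      rw [norm_mul, norm_inv, inv_mul_le_one₀ (norm_pos_iff.2 hσ)]
      exact le_trans hc hm1
    · simp only [Matrix.updateRow_ne hk, Matrix.one_apply, ite_mul, one_mul, zero_mul,
        Finset.sum_ite_eq, Finset.mem_univ, if_true, Pi.zero_apply, add_zero]
      rw [PadicInt.norm_emb]
      exact PadicInt.norm_le_one _
  set v := volume {c : Fin n → ℤ_[p] | ‖∑ j, u j * PadicInt.emb p Ω (c j)‖ ≤ s}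
  have h2 : ENNReal.ofReal ‖σ⁻¹ * u i‖ * v ≤ 1 :=
    le_trans (by gcongr; exact measure_mono hsub) h
  have hpos : 0 < ‖σ⁻¹ * u i‖ := norm_pos_iff.2 (mul_ne_zero (inv_ne_zero hσ) hi)
  calc v ≤ (ENNReal.ofReal ‖σ⁻¹ * u i‖)⁻¹ := by
        rw [ENNReal.le_inv_iff_mul_le, mul_comm]
        exact h2
    _ = ENNReal.ofReal (‖u i‖⁻¹ * ‖σ‖) := by
        rw [← ENNReal.ofReal_inv_of_pos hpos, norm_mul, norm_inv]
        congr 1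
        field_simp
    _ ≤ _ := ENNReal.ofReal_le_ofReal (by
        rw [mul_assoc]
        exact mul_le_mul_of_nonneg_left hm2.le (by positivity))

end Slab

section DiscNorm

open scoped ENNReal

variable {Ω : Type*} [NormedField Ω] {n : ℕ}

/-- The absolute value of the Weyl discriminant attached to the eigenvalues `±y_i`. -/
noncomputable def pairDisc (y : Fin n → Ω) : ℝ :=
  (∏ i, ‖2 * y i‖ ^ 2) * ∏ i, ∏ j ∈ {i}ᶜ, ‖y i ^ 2 - y j ^ 2‖ ^ 2

theorem pow_le_pairDisc {y : Fin n → Ω} {s : ℝ} (hs : 0 ≤ s) (h1 : ∀ i, s ≤ ‖2 * y i‖)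
    (h2 : ∀ i j, i ≠ j → s ≤ ‖y i - y j‖) (h3 : ∀ i j, i ≠ j → s ≤ ‖y i + y j‖) :
    s ^ (2 * n + n * (n - 1) * 4) ≤ pairDisc y := by
  have e1 : s ^ (2 * n) = ∏ _i : Fin n, s ^ 2 := by simp [pow_mul]
  have e2 : s ^ (n * (n - 1) * 4) = ∏ i : Fin n, ∏ j ∈ ({i}ᶜ : Finset (Fin n)), s ^ 4 := by
    simp only [Finset.prod_const, Finset.card_compl, Finset.card_singleton, Fintype.card_fin,
      Finset.card_univ]
    ring
  rw [pow_add, e1, e2, pairDisc]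
  refine mul_le_mul ?_ ?_ (by positivity) (by positivity)
  · exact Finset.prod_le_prod (fun _ _ => by positivity) fun i _ =>
      pow_le_pow_left₀ hs (h1 i) 2
  · refine Finset.prod_le_prod (fun _ _ => by positivity) fun i _ =>
      Finset.prod_le_prod (fun _ _ => by positivity) fun j hj => ?_
    have hij : i ≠ j := by
      simpa [eq_comm] using hj
    rw [sq_sub_sq, norm_mul, mul_pow]
    calc s ^ 4 = s ^ 2 * s ^ 2 := by ring
      _ ≤ _ := mul_le_mul (pow_le_pow_left₀ hs (h3 i j hij) 2)
        (pow_le_pow_left₀ hs (h2 i j hij) 2) (by positivity) (by positivity)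

theorem pairDisc_ne_zero_iff {y : Fin n → Ω} :
    pairDisc y ≠ 0 ↔ (∀ i, 2 * y i ≠ 0) ∧ ∀ i j, i ≠ j → y i ^ 2 - y j ^ 2 ≠ 0 := by
  rw [pairDisc, mul_ne_zero_iff, Finset.prod_ne_zero_iff, Finset.prod_ne_zero_iff]
  refine and_congr (by simp) ?_
  simp only [Finset.prod_ne_zero_iff, Finset.mem_compl, Finset.mem_singleton, Finset.mem_univ,
    true_imp_iff, ne_eq, OfNat.ofNat_ne_zero, not_false_eq_true, pow_eq_zero_iff, norm_eq_zero]
  exact forall_congr' fun i => forall_congr' fun j => by rw [eq_comm]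

end DiscNorm

section SlabDisc

open scoped ENNReal

variable {p : ℕ} [Fact p.Prime] {Ω : Type*} [NormedField Ω] [NormedAlgebra ℚ_[p] Ω]
  [IsUltrametricDist Ω]

/-- The parametrization of points of `Ω^n` by `ℤ_p^n` through a matrix. -/
noncomputable def PadicInt.param {n : ℕ} (Y : Matrix (Fin n) (Fin n) Ω) (c : Fin n → ℤ_[p]) :
    Fin n → Ω :=
  Y.mulVec fun j => PadicInt.emb p Ω (c j)

theorem PadicInt.volume_pairDisc_param_le {n : ℕ} (hn : 0 < n) (Y : Matrix (Fin n) (Fin n) Ω)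
    (h0 : ∃ c : Fin n → ℤ_[p], pairDisc (PadicInt.param Y c) ≠ 0) :
    ∃ C : ℝ, 0 < C ∧ ∀ v : ℝ, 0 < v →
      volume {c : Fin n → ℤ_[p] | pairDisc (PadicInt.param Y c) = v} ≤
        ENNReal.ofReal (C * v ^ (((2 * n + n * (n - 1) * 4 : ℕ) : ℝ)⁻¹)) := by
  obtain ⟨c₀, hc₀⟩ := h0
  rw [pairDisc_ne_zero_iff] at hc₀
  set N : ℕ := 2 * n + n * (n - 1) * 4 with hN
  have hN0 : N ≠ 0 := by omega
  let form : Fin n × Fin n × Bool → Fin n → Ω := fun x =>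
    if x.1 = x.2.1 then (2 : Ω) • Y x.1 else if x.2.2 then Y x.1 - Y x.2.1 else Y x.1 + Y x.2.1
  have hform : ∀ (x) (c : Fin n → ℤ_[p]), ∑ j, form x j * PadicInt.emb p Ω (c j) =
      if x.1 = x.2.1 then 2 * PadicInt.param Y c x.1 else if x.2.2 then
        PadicInt.param Y c x.1 - PadicInt.param Y c x.2.1 else
        PadicInt.param Y c x.1 + PadicInt.param Y c x.2.1 := by
    intro x c
    simp only [form, PadicInt.param, Matrix.mulVec, dotProduct]
    split_ifs
    · simp [Finset.mul_sum, mul_assoc]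
    · simp [sub_mul, Finset.sum_sub_distrib]
    · simp [add_mul, Finset.sum_add_distrib]
  have hne : ∀ x, form x ≠ 0 := by
    intro x hx
    have h := hform x c₀
    rw [hx] at h
    simp only [Pi.zero_apply, zero_mul, Finset.sum_const_zero] at h
    split_ifs at h with h1 h2
    · exact hc₀.1 _ h.symm
    · exact hc₀.2 _ _ h1 (by rw [sq_sub_sq, ← h, mul_zero])
    · exact hc₀.2 _ _ h1 (by rw [sq_sub_sq, ← h, zero_mul])
  choose C hC hvol using fun x => PadicInt.volume_linearForm_le (p := p) (hne x)
  have : Nonempty (Fin n × Fin n × Bool) := ⟨⟨0, hn⟩, ⟨0, hn⟩, true⟩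
  refine ⟨(∑ x, C x) * 2 ^ ((N : ℝ)⁻¹), mul_pos (Finset.sum_pos (fun x _ => hC x)
    Finset.univ_nonempty) (by positivity), fun v hv => ?_⟩
  set s : ℝ := 2 ^ ((N : ℝ)⁻¹) * v ^ ((N : ℝ)⁻¹) with hs
  have hs0 : 0 < s := by positivity
  have hsN : s ^ N = 2 * v := by
    rw [hs, mul_pow, Real.rpow_inv_natCast_pow (by norm_num) hN0, Real.rpow_inv_natCast_pow hv.le hN0]
  have hsub : {c : Fin n → ℤ_[p] | pairDisc (PadicInt.param Y c) = v} ⊆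
      ⋃ x, {c : Fin n → ℤ_[p] | ‖∑ j, form x j * PadicInt.emb p Ω (c j)‖ ≤ s} := by
    intro c hc
    rw [Set.mem_ofPred_eq] at hc
    by_contra hcon
    simp only [Set.mem_iUnion, Set.mem_ofPred_eq, not_exists, not_le, hform] at hcon
    have := pow_le_pairDisc (y := PadicInt.param Y c) hs0.le
      (fun i => by simpa using (hcon (i, i, true)).le)
      (fun i j hij => by simpa [hij] using (hcon (i, j, true)).le)
      (fun i j hij => by simpa [hij] using (hcon (i, j, false)).le)
    rw [hc, hsN] at this
    linarith
  calc _ ≤ volume (⋃ x, {c : Fin n → ℤ_[p] | ‖∑ j, form x j * PadicInt.emb p Ω (c j)‖ ≤ s}) :=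
        measure_mono hsub
    _ ≤ ∑ x, volume {c : Fin n → ℤ_[p] | ‖∑ j, form x j * PadicInt.emb p Ω (c j)‖ ≤ s} :=
        measure_iUnion_fintype_le _ _
    _ ≤ ∑ x, ENNReal.ofReal (C x * s) := Finset.sum_le_sum fun x _ => hvol x s hs0
    _ = ENNReal.ofReal (∑ x, C x * s) :=
        (ENNReal.ofReal_sum_of_nonneg fun x _ => (mul_pos (hC x) hs0).le).symm
    _ = _ := by rw [← Finset.sum_mul, hs, mul_assoc]

end SlabDisc

section Perturb

open Polynomial
open scoped ENNReal

variable {Ω : Type*} [NormedField Ω] [IsUltrametricDist Ω] {n : ℕ}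

theorem norm_eq_of_norm_sub_lt_of_ultrametric {a b : Ω} (h : ‖a - b‖ < ‖b‖) : ‖a‖ = ‖b‖ := by
  have := IsUltrametricDist.norm_eq_of_add_norm_lt_max (x := a) (y := -b)
    (by rw [← sub_eq_add_neg, norm_neg]; exact lt_max_of_lt_right h)
  rwa [norm_neg] at this

variable {y y₀ : Fin n → Ω} {η : ℝ}

theorem norm_sq_sub_sq_eq_of_near (hη : ∀ i, ‖y i - y₀ i‖ ≤ η)
    (h2 : ∀ i j, i ≠ j → η < ‖y₀ i - y₀ j‖) (h3 : ∀ i j, i ≠ j → η < ‖y₀ i + y₀ j‖)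
    {i j : Fin n} (hij : i ≠ j) : ‖y₀ i ^ 2 - y j ^ 2‖ = ‖y₀ i ^ 2 - y₀ j ^ 2‖ := by
  rw [sq_sub_sq, sq_sub_sq, norm_mul, norm_mul]
  congr 1
  · refine norm_eq_of_norm_sub_lt_of_ultrametric (lt_of_le_of_lt ?_ (h3 i j hij))
    rw [add_sub_add_left_eq_sub]
    exact hη j
  · refine norm_eq_of_norm_sub_lt_of_ultrametric (lt_of_le_of_lt ?_ (h2 i j hij))
    rw [sub_sub_sub_cancel_left, norm_sub_rev]
    exact hη j

theorem norm_two_mul_eq_of_near (hη : ∀ i, ‖y i - y₀ i‖ ≤ η)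
    (h1 : ∀ i, η < ‖2 * y₀ i‖) (i : Fin n) : ‖2 * y i‖ = ‖2 * y₀ i‖ := by
  refine norm_eq_of_norm_sub_lt_of_ultrametric (lt_of_le_of_lt ?_ (h1 i))
  rw [← mul_sub, two_mul]
  exact (IsUltrametricDist.norm_add_le_max _ _).trans (max_le (hη i) (hη i))

theorem pairDisc_eq_of_near (hη : ∀ i, ‖y i - y₀ i‖ ≤ η) (h1 : ∀ i, η < ‖2 * y₀ i‖)
    (h2 : ∀ i j, i ≠ j → η < ‖y₀ i - y₀ j‖) (h3 : ∀ i j, i ≠ j → η < ‖y₀ i + y₀ j‖) :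
    pairDisc y = pairDisc y₀ := by
  unfold pairDisc
  congr 1
  · exact Finset.prod_congr rfl fun i _ => by rw [norm_two_mul_eq_of_near hη h1]
  · refine Finset.prod_congr rfl fun i _ => Finset.prod_congr rfl fun j hj => ?_
    have hij : i ≠ j := by simpa [eq_comm] using hj
    congr 1
    rw [sq_sub_sq, sq_sub_sq, norm_mul, norm_mul]
    congr 1
    · refine norm_eq_of_norm_sub_lt_of_ultrametric (lt_of_le_of_lt ?_ (h3 i j hij))
      rw [add_sub_add_comm]
      exact (IsUltrametricDist.norm_add_le_max _ _).trans (max_le (hη i) (hη j))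
    · refine norm_eq_of_norm_sub_lt_of_ultrametric (lt_of_le_of_lt ?_ (h2 i j hij))
      rw [sub_sub_sub_comm]
      exact (norm_sub_le_max_of_ultrametric _ _).trans (max_le (hη i) (hη j))

theorem norm_prod_sq_sub_le_of_near (hη : ∀ i, ‖y i - y₀ i‖ ≤ η) (h1 : ∀ i, η < ‖2 * y₀ i‖)
    (h2 : ∀ i j, i ≠ j → η < ‖y₀ i - y₀ j‖) (h3 : ∀ i j, i ≠ j → η < ‖y₀ i + y₀ j‖) (i : Fin n) :
    ‖∏ j, (y₀ i ^ 2 - y j ^ 2)‖ ≤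
      η * ‖2 * y₀ i‖ * ∏ j ∈ {i}ᶜ, ‖y₀ i ^ 2 - y₀ j ^ 2‖ := by
  rw [Fintype.prod_eq_mul_prod_compl i, norm_mul, norm_prod]
  refine mul_le_mul ?_ (le_of_eq ?_) (by positivity) ?_
  · rw [sq_sub_sq, norm_mul, mul_comm]
    refine mul_le_mul ?_ (le_of_eq ?_) (norm_nonneg _) ((norm_nonneg _).trans (hη i))
    · rw [norm_sub_rev]
      exact hη i
    · refine norm_eq_of_norm_sub_lt_of_ultrametric (lt_of_le_of_lt ?_ (h1 i))
      rw [two_mul, add_sub_add_left_eq_sub]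
      exact hη i
  · refine Finset.prod_congr rfl fun j hj => ?_
    exact norm_sq_sub_sq_eq_of_near hη h2 h3 (by simpa [eq_comm] using hj)
  · have := (norm_nonneg _).trans (hη i)
    positivity

omit [IsUltrametricDist Ω] in
theorem norm_det_vandermonde_sq_eq (x : Fin n → Ω) :
    ‖(Matrix.vandermonde x).det‖ ^ 2 = ∏ i, ∏ j ∈ {i}ᶜ, ‖x i - x j‖ := by
  rw [Matrix.det_vandermonde, norm_prod, ← Finset.prod_pow]
  simp only [norm_prod, ← Finset.prod_pow]
  have := Finset.prod_prod_Ioi_mul_eq_prod_prod_off_diag fun i j => ‖x j - x i‖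
  rw [← this]
  refine Finset.prod_congr rfl fun i _ => Finset.prod_congr rfl fun j _ => ?_
  rw [sq, norm_sub_rev (x i)]

end Perturb

section ImageVolume

open Polynomial
open scoped ENNReal

variable {p : ℕ} [Fact p.Prime] {Ω : Type*} [NormedField Ω] [NormedAlgebra ℚ_[p] Ω]
  [IsUltrametricDist Ω] {n : ℕ}

/-- The squares of `y` are the roots of the monic polynomial with lower coefficients `f`. -/
def PadicInt.IsSqRoots (f : Fin n → ℤ_[p]) (y : Fin n → Ω) : Prop :=
  X ^ n + ∑ i, C (PadicInt.emb p Ω (f i)) * X ^ (i : ℕ) = ∏ i, (X - C (y i ^ 2))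

omit [IsUltrametricDist Ω] in
theorem PadicInt.IsSqRoots.eval_eq {f : Fin n → ℤ_[p]} {y : Fin n → Ω} (h : PadicInt.IsSqRoots f y)
    (x : Ω) : x ^ n + ∑ i, PadicInt.emb p Ω (f i) * x ^ (i : ℕ) = ∏ i, (x - y i ^ 2) := by
  have := congrArg (Polynomial.eval x) h
  simpa [Polynomial.eval_finsetSum, Polynomial.eval_prod] using this

/-- The polynomials whose roots are squares of a vector close to `y₀` have small volume. -/
theorem PadicInt.volume_isSqRoots_near_le (y₀ : Fin n → Ω) (f₀ : Fin n → ℤ_[p])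
    (hf₀ : PadicInt.IsSqRoots f₀ y₀) (β : Ω) (hβ : β ≠ 0)
    (h1 : ∀ i, ‖β‖ < ‖2 * y₀ i‖) (h2 : ∀ i j, i ≠ j → ‖β‖ < ‖y₀ i - y₀ j‖)
    (h3 : ∀ i j, i ≠ j → ‖β‖ < ‖y₀ i + y₀ j‖) :
    volume {f : Fin n → ℤ_[p] | ∃ y : Fin n → Ω, (∀ i, ‖y i - y₀ i‖ ≤ ‖β‖) ∧
      PadicInt.IsSqRoots f y} ≤
      ENNReal.ofReal (‖β‖ ^ n * (∏ i, ‖2 * y₀ i‖) *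
        ‖(Matrix.vandermonde fun i => y₀ i ^ 2).det‖) := by
  set V := Matrix.vandermonde fun i => y₀ i ^ 2 with hV
  set ω : Fin n → Ω := fun i => β * (2 * y₀ i) * ∏ j ∈ {i}ᶜ, (y₀ i ^ 2 - y₀ j ^ 2) with hω
  have hβ' : 0 ≤ ‖β‖ := norm_nonneg _
  have hprod : ∀ i, ∏ j ∈ {i}ᶜ, (y₀ i ^ 2 - y₀ j ^ 2) ≠ 0 := by
    intro i
    refine Finset.prod_ne_zero_iff.2 fun j hj => ?_
    have hij : i ≠ j := by simpa [eq_comm] using hj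
    rw [sq_sub_sq]
    exact mul_ne_zero (norm_pos_iff.1 (hβ'.trans_lt (h3 i j hij)))
      (norm_pos_iff.1 (hβ'.trans_lt (h2 i j hij)))
  have hω0 : ∀ i, ω i ≠ 0 := fun i =>
    mul_ne_zero (mul_ne_zero hβ (norm_pos_iff.1 (hβ'.trans_lt (h1 i)))) (hprod i)
  have hdet : ‖V.det‖ ≠ 0 := by
    rw [← pow_ne_zero_iff (two_ne_zero), hV, norm_det_vandermonde_sq_eq]
    refine Finset.prod_ne_zero_iff.2 fun i _ => ?_
    rw [← norm_prod]
    exact norm_ne_zero_iff.2 (hprod i)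
  set A : Matrix (Fin n) (Fin n) Ω := Matrix.diagonal (fun i => (ω i)⁻¹) * V with hA
  set d : Fin n → Ω := fun i => -∑ j, A i j * PadicInt.emb p Ω (f₀ j) with hd
  have hvol := Matrix.norm_det_mul_volume_affine_le_one (p := p) n A d
  have hsub : {f : Fin n → ℤ_[p] | ∃ y : Fin n → Ω, (∀ i, ‖y i - y₀ i‖ ≤ ‖β‖) ∧
      PadicInt.IsSqRoots f y} ⊆
      {g : Fin n → ℤ_[p] | ∀ i, ‖∑ j, A i j * PadicInt.emb p Ω (g j) + d i‖ ≤ 1} := by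
    rintro f ⟨y, hy, hf⟩ i
    have e0 : ∀ g : Fin n → ℤ_[p], ∑ j, A i j * PadicInt.emb p Ω (g j) =
        (ω i)⁻¹ * ∑ j, PadicInt.emb p Ω (g j) * (y₀ i ^ 2) ^ (j : ℕ) := by
      intro g
      rw [hA, Finset.mul_sum]
      refine Finset.sum_congr rfl fun j _ => ?_
      rw [Matrix.diagonal_mul, hV, Matrix.vandermonde_apply]
      ring
    have e1 := hf.eval_eq (y₀ i ^ 2)
    have e2 := hf₀.eval_eq (y₀ i ^ 2)
    rw [Finset.prod_eq_zero (Finset.mem_univ i) (sub_self _)] at e2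
    have e3 : ∑ j, A i j * PadicInt.emb p Ω (f j) + d i =
        (ω i)⁻¹ * ∏ j, (y₀ i ^ 2 - y j ^ 2) := by
      rw [hd]
      simp only []
      rw [e0, e0, ← sub_eq_add_neg, ← mul_sub, ← e1]
      congr 1
      linear_combination -e2
    rw [e3, norm_mul, norm_inv, inv_mul_le_one₀ (norm_pos_iff.2 (hω0 i))]
    refine (norm_prod_sq_sub_le_of_near hy h1 h2 h3 i).trans (le_of_eq ?_)
    rw [hω]
    simp only [norm_mul, norm_prod]
  have hdetA : ‖A.det‖ = (‖β‖ ^ n * (∏ i, ‖2 * y₀ i‖) * ‖V.det‖)⁻¹ := by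
    rw [hA, Matrix.det_mul, Matrix.det_diagonal, Finset.prod_inv_distrib, norm_mul, norm_inv,
      norm_prod]
    have : ∏ i, ‖ω i‖ = ‖β‖ ^ n * (∏ i, ‖2 * y₀ i‖) * ‖V.det‖ ^ 2 := by
      rw [hV, norm_det_vandermonde_sq_eq]
      simp only [hω, norm_mul, norm_prod, Finset.prod_mul_distrib, Finset.prod_const,
        Finset.card_univ, Fintype.card_fin]
    rw [this, sq, ← mul_assoc, mul_inv_rev (_ * _) ‖V.det‖, mul_right_comm,
      inv_mul_cancel₀ hdet, one_mul]
  have hpos : 0 < ‖β‖ ^ n * (∏ i, ‖2 * y₀ i‖) * ‖V.det‖ := by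
    have : 0 < ∏ i, ‖2 * y₀ i‖ := Finset.prod_pos fun i _ => hβ'.trans_lt (h1 i)
    have := norm_pos_iff.2 hβ
    have := (norm_nonneg V.det).lt_of_ne' hdet
    positivity
  rw [hdetA, ENNReal.ofReal_inv_of_pos hpos, mul_comm, ← div_eq_mul_inv,
    ENNReal.div_le_iff (ENNReal.ofReal_pos.2 hpos).ne' ENNReal.ofReal_ne_top, one_mul] at hvol
  exact (measure_mono hsub).trans hvol

end ImageVolume

section ImageParam

open Polynomial
open scoped ENNReal

variable {p : ℕ} [Fact p.Prime] {Ω : Type*} [NormedField Ω] [NormedAlgebra ℚ_[p] Ω]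
  [IsUltrametricDist Ω] {n : ℕ}

omit [IsUltrametricDist Ω] in
theorem PadicInt.continuous_param (Y : Matrix (Fin n) (Fin n) Ω) :
    Continuous (PadicInt.param (p := p) Y) := by
  refine continuous_pi fun i => ?_
  simp only [PadicInt.param, Matrix.mulVec, dotProduct]
  have := PadicInt.continuous_emb (p := p) (Ω := Ω)
  fun_prop

theorem PadicInt.norm_param_le {Y : Matrix (Fin n) (Fin n) Ω} {B : ℝ} (hB : 0 ≤ B)
    (h : ∀ i j, ‖Y i j‖ ≤ B) {c : Fin n → ℤ_[p]} {s : ℝ} (hs : 0 ≤ s) (hc : ∀ j, ‖c j‖ ≤ s)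
    (i : Fin n) : ‖PadicInt.param Y c i‖ ≤ B * s := by
  simp only [PadicInt.param, Matrix.mulVec, dotProduct]
  refine IsUltrametricDist.norm_sum_le_of_forall_le_of_nonneg (by positivity) fun j _ => ?_
  rw [norm_mul, PadicInt.norm_emb]
  exact mul_le_mul (h i j) (hc j) (norm_nonneg _) hB

omit [IsUltrametricDist Ω] in
theorem PadicInt.param_sub (Y : Matrix (Fin n) (Fin n) Ω) (c c' : Fin n → ℤ_[p]) (i : Fin n) :
    PadicInt.param Y c i - PadicInt.param Y c' i = PadicInt.param Y (c - c') i := by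
  simp [PadicInt.param, Matrix.mulVec, dotProduct, mul_sub, Finset.sum_sub_distrib]

omit [NormedAlgebra ℚ_[p] Ω] [IsUltrametricDist Ω] in
theorem pairDisc_eq_sq_mul_pow (y : Fin n → Ω) : pairDisc y =
    (∏ i, ‖2 * y i‖) ^ 2 * ‖(Matrix.vandermonde fun i => y i ^ 2).det‖ ^ 4 := by
  rw [pairDisc, Finset.prod_pow, show 4 = 2 * 2 from rfl, pow_mul, norm_det_vandermonde_sq_eq]
  simp only [← Finset.prod_pow]

omit [NormedAlgebra ℚ_[p] Ω] [IsUltrametricDist Ω] in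
theorem prod_mul_norm_det_eq (y : Fin n → Ω) :
    (∏ i, ‖2 * y i‖) * ‖(Matrix.vandermonde fun i => y i ^ 2).det‖ =
    (∏ i, ‖2 * y i‖) ^ (1 / 2 : ℝ) * pairDisc y ^ (1 / 4 : ℝ) := by
  have hP : 0 ≤ ∏ i, ‖2 * y i‖ := by positivity
  have hD := norm_nonneg (Matrix.vandermonde fun i => y i ^ 2).det
  rw [pairDisc_eq_sq_mul_pow, Real.mul_rpow (by positivity) (by positivity), ← Real.rpow_natCast,
    ← Real.rpow_natCast, ← Real.rpow_mul hP, ← Real.rpow_mul hD, ← mul_assoc,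
    ← Real.rpow_add_of_nonneg hP (by norm_num) (by norm_num)]
  norm_num

/-- Discriminant level sets in the image of a parametrization have small volume. -/
theorem PadicInt.volume_isSqRoots_param_le (hn : 0 < n) (Y : Matrix (Fin n) (Fin n) Ω) :
    ∃ C : ℝ, 0 < C ∧ ∀ v : ℝ, 0 < v →
      volume {f : Fin n → ℤ_[p] | ∃ c : Fin n → ℤ_[p], pairDisc (PadicInt.param Y c) = v ∧
        PadicInt.IsSqRoots f (PadicInt.param Y c)} ≤
      ENNReal.ofReal (C * v ^ (1 / 4 + ((2 * n + n * (n - 1) * 4 : ℕ) : ℝ)⁻¹)) := by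
  by_cases h0 : ∃ c : Fin n → ℤ_[p], pairDisc (PadicInt.param Y c) ≠ 0
  swap
  · refine ⟨1, one_pos, fun v hv => ?_⟩
    have : {f : Fin n → ℤ_[p] | ∃ c : Fin n → ℤ_[p], pairDisc (PadicInt.param Y c) = v ∧
        PadicInt.IsSqRoots f (PadicInt.param Y c)} = ∅ := by
      refine Set.eq_empty_of_forall_notMem fun f => ?_
      rintro ⟨c, hc, -⟩
      exact h0 ⟨c, hc ▸ hv.ne'⟩
    rw [this, measure_empty]
    exact zero_le
  obtain ⟨C, hC, hvol⟩ := PadicInt.volume_pairDisc_param_le hn Y h0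
  obtain ⟨m, hm, -⟩ := Padic.exists_zpow_norm_mem p Ω
    (show (0 : ℝ) < 1 + ∑ i, ∑ j, ‖Y i j‖ by positivity)
  set b : Ω := (p : Ω) ^ m with hb
  have hb0 : 0 < ‖b‖ := lt_of_lt_of_le (by positivity) hm
  have hY : ∀ i j, ‖Y i j‖ ≤ ‖b‖ := by
    intro i j
    have h1 : ‖Y i j‖ ≤ ∑ j, ‖Y i j‖ :=
      Finset.single_le_sum (f := fun j => ‖Y i j‖) (fun _ _ => norm_nonneg _) (Finset.mem_univ j)
    have h2 : ∑ j, ‖Y i j‖ ≤ ∑ i, ∑ j, ‖Y i j‖ :=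
      Finset.single_le_sum (f := fun i => ∑ j, ‖Y i j‖) (fun _ _ => by positivity)
        (Finset.mem_univ i)
    linarith
  set κ : ℝ := ‖b‖ ^ n * (‖b‖ ^ n) ^ (1 / 2 : ℝ) with hκ
  have hκ0 : 0 < κ := by positivity
  refine ⟨κ * C, mul_pos hκ0 hC, fun v hv => ?_⟩
  set K : Set (Fin n → ℤ_[p]) := {c | pairDisc (PadicInt.param Y c) = v} with hK
  have hcont := PadicInt.continuous_param (p := p) Y
  have hci : ∀ i, Continuous fun c => PadicInt.param (p := p) Y c i :=
    fun i => (continuous_apply i).comp hcont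
  have hKc : IsClosed K := by
    refine isClosed_eq ?_ continuous_const
    unfold pairDisc
    fun_prop
  have hKne : ∀ c ∈ K, (∀ i, 2 * PadicInt.param Y c i ≠ 0) ∧
      ∀ i j, i ≠ j → PadicInt.param Y c i ^ 2 - PadicInt.param Y c j ^ 2 ≠ 0 := fun c hc =>
    pairDisc_ne_zero_iff.1 (by rw [hc]; exact hv.ne')
  have hlim : Filter.Tendsto (fun k : ℕ => ‖b * (p : Ω) ^ k‖) Filter.atTop (nhds 0) := by
    have h1 : ∀ k : ℕ, ‖b * (p : Ω) ^ k‖ = ‖b‖ * ((p : ℝ)⁻¹) ^ k := fun k => by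
      rw [norm_mul, norm_pow, Padic.norm_natCast_self_algebra]
    simp only [h1]
    rw [← mul_zero ‖b‖]
    refine (tendsto_pow_atTop_nhds_zero_of_lt_one (by positivity) ?_).const_mul _
    exact inv_lt_one_of_one_lt₀ (by exact_mod_cast (Fact.out : p.Prime).one_lt)
  have hev : ∀ g : (Fin n → ℤ_[p]) → Ω, Continuous g → (∀ c ∈ K, g c ≠ 0) →
      ∀ᶠ k : ℕ in Filter.atTop, ∀ c ∈ K, ‖b * (p : Ω) ^ k‖ < ‖g c‖ := by
    intro g hg hne
    obtain ⟨ε, hε, hle⟩ := hKc.isCompact.exists_forall_le' (f := fun c => ‖g c‖) (a := 0)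
      hg.norm.continuousOn fun c hc => norm_pos_iff.2 (hne c hc)
    filter_upwards [hlim.eventually_lt_const hε] with k hk c hc
    exact hk.trans_le (hle c hc)
  have hev1 : ∀ᶠ k : ℕ in Filter.atTop, ∀ i, ∀ c ∈ K,
      ‖b * (p : Ω) ^ k‖ < ‖2 * PadicInt.param Y c i‖ :=
    Filter.eventually_all.2 fun i => hev _ ((hci i).const_mul 2) fun c hc => (hKne c hc).1 i
  have hev2 : ∀ᶠ k : ℕ in Filter.atTop, ∀ i j, i ≠ j → ∀ c ∈ K,
      ‖b * (p : Ω) ^ k‖ < ‖PadicInt.param Y c i - PadicInt.param Y c j‖ := by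
    refine Filter.eventually_all.2 fun i => Filter.eventually_all.2 fun j => ?_
    by_cases hij : i = j
    · simp [hij]
    · filter_upwards [hev _ ((hci i).sub (hci j)) fun c hc h => (hKne c hc).2 i j hij (by
        rw [sq_sub_sq, sub_eq_zero.2 (sub_eq_zero.1 h), mul_zero])] with k hk _ c hc
      exact hk c hc
  have hev3 : ∀ᶠ k : ℕ in Filter.atTop, ∀ i j, i ≠ j → ∀ c ∈ K,
      ‖b * (p : Ω) ^ k‖ < ‖PadicInt.param Y c i + PadicInt.param Y c j‖ := by
    refine Filter.eventually_all.2 fun i => Filter.eventually_all.2 fun j => ?_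
    by_cases hij : i = j
    · simp [hij]
    · filter_upwards [hev _ ((hci i).add (hci j)) fun c hc h => (hKne c hc).2 i j hij (by
        rw [sq_sub_sq, show _ + _ = (0 : Ω) from h, zero_mul])] with k hk _ c hc
      exact hk c hc
  obtain ⟨k, hk1, hk2, hk3⟩ := (hev1.and (hev2.and hev3)).exists
  set β : Ω := b * (p : Ω) ^ k with hβ
  have hp0 : (p : Ω) ≠ 0 := Padic.natCast_self_algebra_ne_zero p Ω
  have hβ0 : β ≠ 0 := mul_ne_zero (norm_pos_iff.1 hb0) (pow_ne_zero _ hp0)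
  have hβn : ‖β‖ = ‖b‖ * ((p : ℝ) ^ k)⁻¹ := by
    rw [hβ, norm_mul, norm_pow, Padic.norm_natCast_self_algebra, inv_pow]
  have : NeZero (p ^ k) := ⟨pow_ne_zero _ (Fact.out : p.Prime).ne_zero⟩
  let T : (Fin n → ZMod (p ^ k)) → Set (Fin n → ℤ_[p]) := fun a =>
    Set.univ.pi fun j => {x | PadicInt.toZModPow k x = a j}
  have hT : ∀ a, volume (T a) = ENNReal.ofReal ((((p : ℝ) ^ k)⁻¹) ^ n) := by
    intro a
    rw [volume_pi_pi]
    simp only [PadicInt.volume_toZModPow_fiber, Finset.prod_const, Finset.card_univ,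
      Fintype.card_fin]
    have hpp : (0 : ℝ) < (p : ℝ) ^ k := by
      have := (Fact.out : p.Prime).pos
      positivity
    rw [ENNReal.ofReal_pow (by positivity), ENNReal.ofReal_inv_of_pos hpp,
      ENNReal.ofReal_pow (by positivity), ENNReal.ofReal_natCast]
  have hTm : ∀ a, MeasurableSet (T a) := by
    intro a
    refine MeasurableSet.univ_pi fun j => ?_
    obtain ⟨x, hx⟩ := ZMod.ringHom_surjective (PadicInt.toZModPow (p := p) k) (a j)
    rw [← hx, PadicInt.setOf_toZModPow_eq]
    exact (isClosed_le (by fun_prop) continuous_const).measurableSet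
  have hnear : ∀ a, ∀ c ∈ T a, ∀ c' ∈ T a, ∀ i,
      ‖PadicInt.param Y c i - PadicInt.param Y c' i‖ ≤ ‖β‖ := by
    intro a c hc c' hc' i
    rw [PadicInt.param_sub, hβn]
    refine PadicInt.norm_param_le hb0.le hY (by positivity) (fun j => ?_) i
    have h1 := (hc j trivial).trans (hc' j trivial).symm
    have h2 : c j ∈ {x | PadicInt.toZModPow k x = PadicInt.toZModPow k (c' j)} := h1
    rw [PadicInt.setOf_toZModPow_eq] at h2
    simpa using h2
  have hstep : ∀ a, volume {f : Fin n → ℤ_[p] | ∃ c ∈ T a, pairDisc (PadicInt.param Y c) = v ∧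
      PadicInt.IsSqRoots f (PadicInt.param Y c)} ≤
      ENNReal.ofReal (κ * v ^ (1 / 4 : ℝ)) * volume (K ∩ T a) := by
    intro a
    by_cases hex : ∃ f : Fin n → ℤ_[p], ∃ c ∈ T a, pairDisc (PadicInt.param Y c) = v ∧
      PadicInt.IsSqRoots f (PadicInt.param Y c)
    swap
    · push Not at hex
      have : {f : Fin n → ℤ_[p] | ∃ c ∈ T a, pairDisc (PadicInt.param Y c) = v ∧
          PadicInt.IsSqRoots f (PadicInt.param Y c)} = ∅ :=
        Set.eq_empty_of_forall_notMem fun f ⟨c, hc, h1, h2⟩ => hex f c hc h1 h2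
      rw [this, measure_empty]
      exact zero_le
    obtain ⟨f₀, c₀, hc₀, hv₀, hf₀⟩ := hex
    have hKT : K ∩ T a = T a := by
      refine Set.inter_eq_right.2 fun c hc => ?_
      have := pairDisc_eq_of_near (hnear a c hc c₀ hc₀) (fun i => hk1 i c₀ hv₀)
        (fun i j hij => hk2 i j hij c₀ hv₀) (fun i j hij => hk3 i j hij c₀ hv₀)
      exact this.trans hv₀
    rw [hKT, hT, ← ENNReal.ofReal_mul (by positivity)]
    refine (measure_mono ?_).trans ((PadicInt.volume_isSqRoots_near_le _ f₀ hf₀ β hβ0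
      (fun i => hk1 i c₀ hv₀) (fun i j hij => hk2 i j hij c₀ hv₀)
      (fun i j hij => hk3 i j hij c₀ hv₀)).trans (ENNReal.ofReal_le_ofReal ?_))
    · rintro f ⟨c, hc, -, hf⟩
      exact ⟨_, hnear a c hc c₀ hc₀, hf⟩
    · rw [mul_assoc, prod_mul_norm_det_eq, hv₀, hβn, mul_pow]
      have hP : ∏ i, ‖2 * PadicInt.param Y c₀ i‖ ≤ ‖b‖ ^ n := by
        refine (Finset.prod_le_prod (g := fun _ => ‖b‖) (fun _ _ => norm_nonneg _)
          fun i _ => ?_).trans (by simp)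
        have h1 := PadicInt.norm_param_le hb0.le hY zero_le_one
          (fun j => PadicInt.norm_le_one (c₀ j)) i
        rw [mul_one] at h1
        rw [two_mul]
        exact (IsUltrametricDist.norm_add_le_max _ _).trans (max_le h1 h1)
      have hP2 := Real.rpow_le_rpow (by positivity) hP (show (0 : ℝ) ≤ 1 / 2 by norm_num)
      calc _ ≤ ‖b‖ ^ n * ((p : ℝ) ^ k)⁻¹ ^ n * ((‖b‖ ^ n) ^ (1 / 2 : ℝ) * v ^ (1 / 4 : ℝ)) := by
            gcongr
        _ = _ := by rw [hκ]; ring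
  calc _ ≤ volume (⋃ a, {f : Fin n → ℤ_[p] | ∃ c ∈ T a, pairDisc (PadicInt.param Y c) = v ∧
      PadicInt.IsSqRoots f (PadicInt.param Y c)}) := by
        refine measure_mono ?_
        rintro f ⟨c, hc, hf⟩
        exact Set.mem_iUnion.2 ⟨fun j => PadicInt.toZModPow k (c j), c, fun j _ => rfl, hc, hf⟩
    _ ≤ ∑ a, ENNReal.ofReal (κ * v ^ (1 / 4 : ℝ)) * volume (K ∩ T a) :=
        (measure_iUnion_fintype_le _ _).trans (Finset.sum_le_sum fun a _ => hstep a)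
    _ = ENNReal.ofReal (κ * v ^ (1 / 4 : ℝ)) * volume (⋃ a, K ∩ T a) := by
        rw [← Finset.mul_sum, measure_iUnion, tsum_fintype]
        · intro a a' haa
          refine Set.disjoint_left.2 fun c hc hc' => haa (funext fun j => ?_)
          exact (hc.2 j trivial).symm.trans (hc'.2 j trivial)
        · exact fun a => hKc.measurableSet.inter (hTm a)
    _ ≤ ENNReal.ofReal (κ * v ^ (1 / 4 : ℝ)) * ENNReal.ofReal
          (C * v ^ (((2 * n + n * (n - 1) * 4 : ℕ) : ℝ)⁻¹)) :=
        mul_le_mul_right ((measure_mono (Set.iUnion_subset fun a => Set.inter_subset_left)).trans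
          (hvol v hv)) _
    _ = _ := by
        rw [← ENNReal.ofReal_mul (by positivity), Real.rpow_add hv]
        congr 1
        ring

end ImageParam

section MonicPoly

open Polynomial

variable {Ω : Type*} [NormedField Ω]

theorem Multiset.exists_fin_map_eq {α : Type*} {m : ℕ} (s : Multiset α) (hs : s.card = m) :
    ∃ θ : Fin m → α, (Finset.univ : Finset (Fin m)).val.map θ = s := by
  obtain ⟨l, rfl⟩ := Quot.exists_rep s
  obtain rfl : l.length = m := hs
  refine ⟨l.get, ?_⟩
  simp [Fin.univ_def]

theorem exists_prod_X_sub_C_eq [IsAlgClosed Ω] {m : ℕ} (g : Fin m → Ω) :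
    ∃ θ : Fin m → Ω, X ^ m + ∑ i, C (g i) * X ^ (i : ℕ) = ∏ i, (X - C (θ i)) := by
  set P : Polynomial Ω := X ^ m + ∑ i, C (g i) * X ^ (i : ℕ) with hP
  have hdeg : (∑ i, C (g i) * X ^ (i : ℕ)).degree < (m : WithBot ℕ) := degree_sum_fin_lt g
  have hmonic : P.Monic := monic_X_pow_add hdeg
  have hnat : P.natDegree = m := natDegree_eq_of_degree_eq_some (by
    rw [hP, degree_add_eq_left_of_degree_lt (by rwa [degree_X_pow]), degree_X_pow])
  have hsplit := IsAlgClosed.splits P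
  have hroots := hsplit.eq_prod_roots_of_monic hmonic
  obtain ⟨θ, hθ⟩ := P.roots.exists_fin_map_eq (by rw [← hsplit.natDegree_eq_card_roots, hnat])
  refine ⟨θ, ?_⟩
  rw [hroots, ← hθ, Multiset.map_map]
  rfl

theorem eval_prod_X_sub_C_eq {m : ℕ} {S : Finset Ω} (hS : S.card = m) (x : Ω) :
    ∏ s ∈ S, (x - s) = x ^ m + ∑ i : Fin m, (∏ s ∈ S, (X - C s)).coeff i * x ^ (i : ℕ) := by
  have hmonic : (∏ s ∈ S, (X - C s)).Monic := monic_prod_of_monic _ _ fun s _ => monic_X_sub_C s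
  have hnat : (∏ s ∈ S, (X - C s)).natDegree = m := by
    rw [natDegree_prod_of_monic _ _ fun s _ => monic_X_sub_C s]
    simp [hS]
  have h := congrArg (eval x) hmonic.as_sum
  refine Eq.trans ?_ (congrArg (x ^ m + ·) (Fin.sum_univ_eq_sum_range
    (fun k : ℕ => (∏ s ∈ S, (X - C s)).coeff k * x ^ k) m).symm)
  rw [hnat, eval_prod, eval_add, eval_finsetSum, eval_pow, eval_X] at h
  simpa using h

theorem exists_norm_sub_lt_of_norm_prod_lt {ι : Type*} {T : Finset ι} {θ : ι → Ω} {x : Ω} {δ : ℝ}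
    (hδ : 0 ≤ δ) (h : ‖∏ i ∈ T, (x - θ i)‖ < δ ^ T.card) : ∃ i ∈ T, ‖x - θ i‖ < δ := by
  by_contra! hcon
  rw [norm_prod, ← Finset.prod_const] at h
  exact absurd h (not_lt.2 (Finset.prod_le_prod (fun _ _ => hδ) hcon))

variable [IsUltrametricDist Ω]

theorem norm_le_one_of_monic_eq_zero {m : ℕ} {f : Fin m → Ω} (hf : ∀ i, ‖f i‖ ≤ 1) {x : Ω}
    (hx : x ^ m + ∑ i, f i * x ^ (i : ℕ) = 0) : ‖x‖ ≤ 1 := by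
  by_contra! hcon
  have h1 : ‖x ^ m‖ = ‖∑ i, f i * x ^ (i : ℕ)‖ := by
    rw [eq_neg_of_add_eq_zero_left hx, norm_neg]
  have h2 : ‖∑ i, f i * x ^ (i : ℕ)‖ ≤ ‖x‖ ^ m / ‖x‖ := by
    refine IsUltrametricDist.norm_sum_le_of_forall_le_of_nonneg (by positivity) fun i _ => ?_
    rw [le_div_iff₀ (by linarith), norm_mul, norm_pow, mul_assoc, ← pow_succ]
    calc _ ≤ 1 * ‖x‖ ^ m := mul_le_mul (hf i) (pow_le_pow_right₀ hcon.le i.2) (by positivity)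
          zero_le_one
      _ = _ := one_mul _
  rw [← h1, norm_pow, le_div_iff₀ (by linarith)] at h2
  have : 0 < ‖x‖ ^ m := pow_pos (by linarith) _
  nlinarith

theorem norm_coeff_prod_X_sub_C_le_one (S : Finset Ω) (hS : ∀ s ∈ S, ‖s‖ ≤ 1) (k : ℕ) :
    ‖(∏ s ∈ S, (X - C s)).coeff k‖ ≤ 1 := by
  classical
  induction S using Finset.induction_on generalizing k with
  | empty =>
    rw [Finset.prod_empty, coeff_one]
    split_ifs <;> simp
  | insert a S ha ih =>
    have ih' := ih fun s hs => hS s (Finset.mem_insert_of_mem hs)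
    have h1 : ∀ k, ‖a * (∏ s ∈ S, (X - C s)).coeff k‖ ≤ 1 := fun k => by
      rw [norm_mul]
      exact mul_le_one₀ (hS a (Finset.mem_insert_self a S)) (norm_nonneg _) (ih' k)
    rw [Finset.prod_insert ha, sub_mul, coeff_sub, coeff_C_mul]
    refine (norm_sub_le_max_of_ultrametric _ _).trans (max_le ?_ (h1 k))
    cases k with
    | zero => simp
    | succ k => rw [coeff_X_mul]; exact ih' k

theorem exists_pow_le_norm_coeff {m : ℕ} {f : Fin m → Ω} {x : Ω} {r : ℝ} (hr : 0 < r)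
    (hrx : r < ‖x‖) (hx1 : ‖x‖ ≤ 1) (hx : x ^ m + ∑ i, f i * x ^ (i : ℕ) = 0) :
    ∃ i, r ^ m ≤ ‖f i‖ := by
  by_contra! hcon
  have h1 : ‖x ^ m‖ = ‖∑ i, f i * x ^ (i : ℕ)‖ := by
    rw [eq_neg_of_add_eq_zero_left hx, norm_neg]
  rcases Nat.eq_zero_or_pos m with rfl | hm
  · simp at h1
  have h2 : ‖∑ i, f i * x ^ (i : ℕ)‖ ≤ r ^ m := by
    refine IsUltrametricDist.norm_sum_le_of_forall_le_of_nonneg (by positivity) fun i _ => ?_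
    rw [norm_mul, norm_pow]
    exact (mul_le_mul (hcon i).le (pow_le_one₀ (norm_nonneg _) hx1) (by positivity)
      (by positivity)).trans (mul_one _).le
  rw [← h1, norm_pow] at h2
  exact absurd h2 (not_le.2 (pow_lt_pow_left₀ hrx hr.le hm.ne'))

theorem norm_eval_sub_eval_le {m : ℕ} {f g : Fin m → Ω} {ε : ℝ} (hε : 0 ≤ ε)
    (hfg : ∀ i, ‖f i - g i‖ ≤ ε) {x : Ω} (hx : ‖x‖ ≤ 1) :
    ‖(x ^ m + ∑ i, f i * x ^ (i : ℕ)) - (x ^ m + ∑ i, g i * x ^ (i : ℕ))‖ ≤ ε := by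
  rw [add_sub_add_left_eq_sub, ← Finset.sum_sub_distrib]
  refine IsUltrametricDist.norm_sum_le_of_forall_le_of_nonneg hε fun i _ => ?_
  rw [← sub_mul, norm_mul, norm_pow]
  exact (mul_le_mul (hfg i) (pow_le_one₀ (norm_nonneg _) hx) (by positivity) hε).trans
    (mul_one _).le

omit [IsUltrametricDist Ω] in
theorem exists_ne_of_trace_zero [CharZero Ω] {m : ℕ} {g θ : Fin (m + 1) → Ω}
    (h : X ^ (m + 1) + ∑ i, C (g i) * X ^ (i : ℕ) = ∏ i, (X - C (θ i)))
    (h0 : g (Fin.last m) = 0) (hne : ∃ i, g i ≠ 0) (i : Fin (m + 1)) : ∃ j, θ j ≠ θ i := by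
  by_contra! hcon
  have hc : ∀ k : Fin (m + 1), (∏ i, (X - C (θ i))).coeff k = g k := by
    intro k
    rw [← h, coeff_add, coeff_X_pow, if_neg k.2.ne, zero_add, finsetSum_coeff]
    simp [coeff_X_pow, Fin.val_inj]
  have hs := Polynomial.prod_X_sub_C_coeff_card_pred (Finset.univ : Finset (Fin (m + 1))) θ (by simp)
  have h1 := hc (Fin.last m)
  simp only [Finset.card_univ, Fintype.card_fin, Nat.add_sub_cancel] at hs
  rw [Fin.val_last, hs, h0, neg_eq_zero] at h1
  simp only [hcon, Finset.sum_const, Finset.card_univ, Fintype.card_fin, nsmul_eq_mul] at h1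
  have hθ : θ i = 0 := by
    rcases mul_eq_zero.1 h1 with h | h
    · exact absurd h (Nat.cast_ne_zero.2 (Nat.succ_ne_zero m))
    · exact h
  obtain ⟨k, hk⟩ := hne
  apply hk
  rw [← hc k]
  simp [hcon, hθ, coeff_X_pow, k.2.ne]

end MonicPoly

section StableSets

open Polynomial

variable {p : ℕ} [Fact p.Prime] {Ω : Type*} [NormedField Ω] [NormedAlgebra ℚ_[p] Ω]

/-- A finite set stable under the automorphisms fixing `K` pointwise. -/
def IsGalStable (K : IntermediateField ℚ_[p] Ω) (S : Finset Ω) : Prop :=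
  ∀ σ : Gal(Ω/ℚ_[p]), (∀ x ∈ K, σ x = x) → ∀ s ∈ S, σ s ∈ S

variable {K : IntermediateField ℚ_[p] Ω} {S : Finset Ω}

theorem IsGalStable.image_eq [DecidableEq Ω] (h : IsGalStable K S) {σ : Gal(Ω/ℚ_[p])}
    (hσ : ∀ x ∈ K, σ x = x) : S.image σ = S := by
  refine Finset.eq_of_subset_of_card_le ?_ (Finset.card_image_of_injective S σ.injective).ge
  exact Finset.image_subset_iff.2 (h σ hσ)

theorem IntermediateField.mem_of_forall_fixed [IsGalois ℚ_[p] Ω] (K : IntermediateField ℚ_[p] Ω)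
    {x : Ω} (h : ∀ σ : Gal(Ω/ℚ_[p]), (∀ x ∈ K, σ x = x) → σ x = x) : x ∈ K := by
  rw [← InfiniteGalois.fixedField_fixingSubgroup K, IntermediateField.mem_fixedField_iff]
  exact fun σ hσ => h σ ((IntermediateField.mem_fixingSubgroup_iff K σ).1 hσ)

theorem IsGalStable.coeff_mem [IsGalois ℚ_[p] Ω] (h : IsGalStable K S) (k : ℕ) :
    (∏ s ∈ S, (X - C s)).coeff k ∈ K := by
  classical
  refine K.mem_of_forall_fixed fun σ hσ => ?_
  have h1 : (∏ s ∈ S, (X - C s)).map (σ : Ω →+* Ω) = ∏ s ∈ S, (X - C s) := by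
    rw [Polynomial.map_prod]
    conv_rhs => rw [← h.image_eq hσ, Finset.prod_image σ.injective.injOn]
    simp
  conv_rhs => rw [← h1, coeff_map]
  rfl

theorem IsGalStable.sum_mem [IsGalois ℚ_[p] Ω] (h : IsGalStable K S) : ∑ s ∈ S, s ∈ K := by
  classical
  refine K.mem_of_forall_fixed fun σ hσ => ?_
  rw [map_sum]
  conv_rhs => rw [← h.image_eq hσ, Finset.sum_image σ.injective.injOn]

theorem IsGalStable.mono {L : IntermediateField ℚ_[p] Ω} (h : IsGalStable K S) (hKL : K ≤ L) :
    IsGalStable L S :=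
  fun σ hσ => h σ fun x hx => hσ x (hKL hx)

theorem IsGalStable.image_affine [DecidableEq Ω] (h : IsGalStable K S) {t b : Ω} (ht : t ∈ K)
    (hb : b ∈ K) : IsGalStable K (S.image fun s => (s - t) / b) := by
  intro σ hσ s hs
  obtain ⟨a, ha, rfl⟩ := Finset.mem_image.1 hs
  refine Finset.mem_image.2 ⟨σ a, h σ hσ a ha, ?_⟩
  rw [map_div₀, map_sub, hσ t ht, hσ b hb]

theorem IsGalStable.filter_norm_sub_lt (hiso : ∀ (σ : Gal(Ω/ℚ_[p])) (x : Ω), ‖σ x‖ = ‖x‖)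
    (h : IsGalStable K S) {θ : Ω} (hθ : θ ∈ K) (δ : ℝ) :
    IsGalStable K (S.filter fun s => ‖s - θ‖ < δ) := by
  intro σ hσ s hs
  rw [Finset.mem_filter] at hs ⊢
  refine ⟨h σ hσ s hs.1, ?_⟩
  rw [← hσ θ hθ, ← map_sub, hiso]
  exact hs.2

variable [IsUltrametricDist Ω]

/-- Around a separated monic polynomial, the splitting fields of monic polynomials are contained
in a common finite extension. -/
theorem exists_nhds_stable_subset [IsAlgClosure ℚ_[p] Ω]
    (hiso : ∀ (σ : Gal(Ω/ℚ_[p])) (x : Ω), ‖σ x‖ = ‖x‖) {m : ℕ}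
    (ih : ∀ K : IntermediateField ℚ_[p] Ω, FiniteDimensional ℚ_[p] K →
      ∃ M : IntermediateField ℚ_[p] Ω, FiniteDimensional ℚ_[p] M ∧
        ∀ S : Finset Ω, S.card ≤ m → IsGalStable K S → ∀ s ∈ S, s ∈ M)
    (K : IntermediateField ℚ_[p] Ω) (hK : FiniteDimensional ℚ_[p] K)
    (g : Fin (m + 1) → Ω) (hg : ∀ i, ‖g i‖ ≤ 1) (hg0 : g (Fin.last m) = 0) (hgne : ∃ i, g i ≠ 0) :
    ∃ t ∈ nhds g, ∃ M : IntermediateField ℚ_[p] Ω, FiniteDimensional ℚ_[p] M ∧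
      ∀ S : Finset Ω, S.card = m + 1 → IsGalStable K S → (∀ s ∈ S, ‖s‖ ≤ 1) →
        (fun i : Fin (m + 1) => (∏ s ∈ S, (X - C s)).coeff i) ∈ t → ∀ s ∈ S, s ∈ M := by
  have := IsAlgClosure.isAlgClosed ℚ_[p] (K := Ω)
  have hchar : CharZero Ω := charZero_of_injective_algebraMap (algebraMap ℚ_[p] Ω).injective
  obtain ⟨θ, hθ⟩ := exists_prod_X_sub_C_eq g
  have hev : ∀ x, x ^ (m + 1) + ∑ i, g i * x ^ (i : ℕ) = ∏ i, (x - θ i) := by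
    intro x
    have := congrArg (eval x) hθ
    simpa [eval_finsetSum, eval_prod] using this
  have hθ1 : ∀ i, ‖θ i‖ ≤ 1 := fun i => norm_le_one_of_monic_eq_zero hg (by
    rw [hev, Finset.prod_eq_zero (Finset.mem_univ i) (sub_self _)])
  set K' : IntermediateField ℚ_[p] Ω := K ⊔ IntermediateField.adjoin ℚ_[p] (Set.range θ) with hK'
  have hfd : FiniteDimensional ℚ_[p] (IntermediateField.adjoin ℚ_[p] (Set.range θ)) :=
    IntermediateField.finiteDimensional_adjoin fun x _ => Algebra.IsIntegral.isIntegral x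
  obtain ⟨M, hM, hMS⟩ := ih K' (IntermediateField.finiteDimensional_sup K _)
  have hδ : ∃ δ : ℝ, 0 < δ ∧ ∀ i j, θ i ≠ θ j → δ ≤ ‖θ i - θ j‖ := by
    have h1 : ∀ᶠ δ : ℝ in nhdsWithin 0 (Set.Ioi 0), ∀ i j, θ i ≠ θ j → δ ≤ ‖θ i - θ j‖ := by
      refine Filter.eventually_all.2 fun i => Filter.eventually_all.2 fun j => ?_
      by_cases hij : θ i = θ j
      · simp [hij]
      · have : ∀ᶠ δ : ℝ in nhds 0, δ < ‖θ i - θ j‖ :=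
          eventually_lt_nhds (norm_pos_iff.2 (sub_ne_zero.2 hij))
        filter_upwards [mem_nhdsWithin_of_mem_nhds this] with δ h _ using le_of_lt h
    obtain ⟨δ, h2, h3⟩ := (h1.and self_mem_nhdsWithin).exists
    exact ⟨δ, h3, h2⟩
  obtain ⟨δ, hδ0, hδ⟩ := hδ
  set ε : ℝ := δ ^ (m + 1) / 2 with hε
  have hε0 : 0 < ε := by positivity
  have hε1 : ε < δ ^ (m + 1) := half_lt_self (by positivity)
  refine ⟨Metric.closedBall g ε, Metric.closedBall_mem_nhds g hε0, M, hM, ?_⟩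
  intro S hcard hS hS1 hf s hs
  set f : Fin (m + 1) → Ω := fun i => (∏ s ∈ S, (X - C s)).coeff i with hfdef
  rw [mem_closedBall_iff_norm, pi_norm_le_iff_of_nonneg hε0.le] at hf
  have hfev := eval_prod_X_sub_C_eq hcard
  have hclose : ∀ x, ‖x‖ ≤ 1 → ‖∏ s ∈ S, (x - s) - ∏ i, (x - θ i)‖ ≤ ε := by
    intro x hx
    rw [hfev, ← hev]
    exact norm_eval_sub_eval_le hε0.le hf hx
  have h1 := hclose s (hS1 s hs)
  rw [Finset.prod_eq_zero hs (sub_self s), zero_sub, norm_neg] at h1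
  obtain ⟨i, -, hi⟩ := exists_norm_sub_lt_of_norm_prod_lt (T := Finset.univ) (θ := θ) hδ0.le (by
    rw [Finset.card_univ, Fintype.card_fin]
    exact h1.trans_lt hε1)
  obtain ⟨j, hj⟩ := exists_ne_of_trace_zero hθ hg0 hgne i
  have h2 := hclose (θ j) (hθ1 j)
  rw [Finset.prod_eq_zero (Finset.mem_univ j) (sub_self (θ j)), sub_zero] at h2
  obtain ⟨s', hs', hsj⟩ := exists_norm_sub_lt_of_norm_prod_lt (T := S) (θ := fun s => s) hδ0.le (by
    rw [hcard]
    exact h2.trans_lt hε1)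
  have hθK : ∀ i, θ i ∈ K' := fun i =>
    (le_sup_right : _ ≤ K') (IntermediateField.subset_adjoin _ _ ⟨i, rfl⟩)
  refine hMS (S.filter fun s => ‖s - θ i‖ < δ) ?_
    ((hS.mono le_sup_left).filter_norm_sub_lt hiso (hθK i) δ) s (Finset.mem_filter.2 ⟨hs, hi⟩)
  rw [← Nat.lt_succ_iff, Nat.succ_eq_add_one, ← hcard]
  refine Finset.card_lt_card (Finset.filter_ssubset.2 ⟨s', hs', fun hcon => ?_⟩)
  refine absurd (hδ j i hj) (not_le.2 ?_)
  rw [← sub_add_sub_cancel (θ j) s' (θ i)]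
  exact (IsUltrametricDist.norm_add_le_max _ _).trans_lt (max_lt hsj hcon)

end StableSets

section StableSetsFinite

open Polynomial

variable {p : ℕ} [Fact p.Prime] {Ω : Type*} [NormedField Ω] [NormedAlgebra ℚ_[p] Ω]
  [IsUltrametricDist Ω]

theorem exists_stable_subset_of_normalized [IsAlgClosure ℚ_[p] Ω]
    (hiso : ∀ (σ : Gal(Ω/ℚ_[p])) (x : Ω), ‖σ x‖ = ‖x‖) {m : ℕ}
    (ih : ∀ K : IntermediateField ℚ_[p] Ω, FiniteDimensional ℚ_[p] K →
      ∃ M : IntermediateField ℚ_[p] Ω, FiniteDimensional ℚ_[p] M ∧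
        ∀ S : Finset Ω, S.card ≤ m → IsGalStable K S → ∀ s ∈ S, s ∈ M)
    (K : IntermediateField ℚ_[p] Ω) (hK : FiniteDimensional ℚ_[p] K) {r : ℝ} (hr : 0 < r) :
    ∃ M : IntermediateField ℚ_[p] Ω, FiniteDimensional ℚ_[p] M ∧
      ∀ S : Finset Ω, S.card = m + 1 → IsGalStable K S → (∀ s ∈ S, ‖s‖ ≤ 1) → ∑ s ∈ S, s = 0 →
        (∃ s ∈ S, r < ‖s‖) → ∀ s ∈ S, s ∈ M := by
  set N : Set (Fin (m + 1) → Ω) := (Set.univ.pi fun _ => Subtype.val '' Metric.closedBall (0 : K) 1) ∩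
    {g | g (Fin.last m) = 0 ∧ r ^ (m + 1) ≤ ‖g‖} with hN
  have hNc : IsCompact N := by
    refine IsCompact.inter_right (isCompact_univ_pi fun _ => ?_) ?_
    · have : ProperSpace K := FiniteDimensional.proper ℚ_[p] K
      exact (isCompact_closedBall _ _).image continuous_subtype_val
    · exact (isClosed_eq (continuous_apply _) continuous_const).inter
        (isClosed_le continuous_const continuous_norm)
  have hloc : ∃ M : IntermediateField ℚ_[p] Ω, FiniteDimensional ℚ_[p] M ∧
      ∀ S : Finset Ω, S.card = m + 1 → IsGalStable K S → (∀ s ∈ S, ‖s‖ ≤ 1) →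
        (fun i : Fin (m + 1) => (∏ s ∈ S, (X - C s)).coeff i) ∈ N → ∀ s ∈ S, s ∈ M := by
    refine hNc.induction_on (p := fun t => ∃ M : IntermediateField ℚ_[p] Ω,
      FiniteDimensional ℚ_[p] M ∧
      ∀ S : Finset Ω, S.card = m + 1 → IsGalStable K S → (∀ s ∈ S, ‖s‖ ≤ 1) →
        (fun i : Fin (m + 1) => (∏ s ∈ S, (X - C s)).coeff i) ∈ t → ∀ s ∈ S, s ∈ M) ?_ ?_ ?_ ?_
    · exact ⟨⊥, inferInstance, fun S _ _ _ h => h.elim⟩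
    · rintro s t hst ⟨M, hM, h⟩
      exact ⟨M, hM, fun S h1 h2 h3 h4 => h S h1 h2 h3 (hst h4)⟩
    · rintro s t ⟨M, hM, h⟩ ⟨M', hM', h'⟩
      refine ⟨M ⊔ M', IntermediateField.finiteDimensional_sup M M', ?_⟩
      rintro S h1 h2 h3 (h4 | h4) x hx
      · exact (le_sup_left : M ≤ M ⊔ M') (h S h1 h2 h3 h4 x hx)
      · exact (le_sup_right : M' ≤ M ⊔ M') (h' S h1 h2 h3 h4 x hx)
    · rintro g ⟨hg1, hg0, hgr⟩
      obtain ⟨t, ht, h⟩ := exists_nhds_stable_subset hiso ih K hK g (fun i => by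
        obtain ⟨x, hx, hxi⟩ := hg1 i trivial
        rw [← hxi]
        simpa using hx) hg0 (by
          by_contra! hcon
          have : g = 0 := funext hcon
          rw [this, norm_zero] at hgr
          exact absurd hgr (not_le.2 (by positivity)))
      exact ⟨t, mem_nhdsWithin_of_mem_nhds ht, h⟩
  obtain ⟨M, hM, h⟩ := hloc
  refine ⟨M, hM, fun S hcard hS hS1 hsum ⟨s₀, hs₀, hr₀⟩ => h S hcard hS hS1 ⟨fun i _ => ?_, ?_, ?_⟩⟩
  · have := IsAlgClosure.isAlgClosed ℚ_[p] (K := Ω)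
    exact ⟨⟨_, hS.coeff_mem i⟩, by simpa using norm_coeff_prod_X_sub_C_le_one S hS1 i, rfl⟩
  · have := prod_X_sub_C_coeff_card_pred S (fun s => s) (by omega)
    rw [hcard, Nat.add_sub_cancel, hsum, neg_zero] at this
    exact this
  · have hev := eval_prod_X_sub_C_eq hcard s₀
    rw [Finset.prod_eq_zero hs₀ (sub_self _)] at hev
    obtain ⟨i, hi⟩ := exists_pow_le_norm_coeff hr hr₀ (hS1 s₀ hs₀) hev.symm
    exact hi.trans (norm_le_pi_norm (fun i : Fin (m + 1) => (∏ s ∈ S, (X - C s)).coeff i) i)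

/-- Galois-stable sets of bounded size generate only finitely many extensions. -/
theorem exists_finiteDimensional_stable_subset [IsAlgClosure ℚ_[p] Ω]
    (hiso : ∀ (σ : Gal(Ω/ℚ_[p])) (x : Ω), ‖σ x‖ = ‖x‖) (m : ℕ) :
    ∀ K : IntermediateField ℚ_[p] Ω, FiniteDimensional ℚ_[p] K →
      ∃ M : IntermediateField ℚ_[p] Ω, FiniteDimensional ℚ_[p] M ∧
        ∀ S : Finset Ω, S.card ≤ m → IsGalStable K S → ∀ s ∈ S, s ∈ M := by
  classical
  have hchar : CharZero Ω := charZero_of_injective_algebraMap (algebraMap ℚ_[p] Ω).injective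
  induction m with
  | zero =>
    intro K _
    refine ⟨⊥, inferInstance, fun S hS _ s hs => ?_⟩
    rw [Finset.card_eq_zero.1 (Nat.le_zero.1 hS)] at hs
    simp at hs
  | succ m ih =>
    intro K hK
    have hp : (0 : ℝ) < p := by exact_mod_cast (Fact.out : p.Prime).pos
    obtain ⟨M₁, hM₁, h₁⟩ := exists_stable_subset_of_normalized hiso ih K hK (inv_pos.2 hp)
    obtain ⟨M₂, hM₂, h₂⟩ := ih K hK
    have := IntermediateField.finiteDimensional_sup M₁ M₂
    refine ⟨M₁ ⊔ M₂ ⊔ K, IntermediateField.finiteDimensional_sup _ K, fun S hcard hS => ?_⟩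
    rcases Nat.le_succ_iff.1 hcard with hcard | hcard
    · exact fun s hs => (le_sup_right.trans le_sup_left : M₂ ≤ M₁ ⊔ M₂ ⊔ K) (h₂ S hcard hS s hs)
    have hcard0 : ((m + 1 : ℕ) : Ω) ≠ 0 := Nat.cast_ne_zero.2 (Nat.succ_ne_zero m)
    set t : Ω := (∑ s ∈ S, s) / ((m + 1 : ℕ) : Ω) with ht
    have htK : t ∈ K := div_mem hS.sum_mem (natCast_mem K _)
    by_cases hall : ∀ s ∈ S, s = t
    · intro s hs
      rw [hall s hs]
      exact (le_sup_right : K ≤ M₁ ⊔ M₂ ⊔ K) htK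
    push Not at hall
    obtain ⟨s₀, hs₀, hne⟩ := hall
    obtain ⟨s₁, hs₁, hmax⟩ := S.exists_max_image (fun s => ‖s - t‖) ⟨s₀, hs₀⟩
    have hpos : 0 < ‖s₁ - t‖ :=
      (norm_pos_iff.2 (sub_ne_zero.2 hne)).trans_le (hmax s₀ hs₀)
    obtain ⟨k, hk1, hk2⟩ := Padic.exists_zpow_norm_mem p Ω hpos
    set b : Ω := (p : Ω) ^ k with hb
    have hbK : b ∈ K := zpow_mem (natCast_mem K p) k
    have hbpos : 0 < ‖b‖ := hpos.trans_le hk1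
    have hb0 : b ≠ 0 := norm_pos_iff.1 hbpos
    have hinj : Function.Injective fun s : Ω => (s - t) / b := fun x y hxy => by
      simpa [div_left_inj' hb0] using hxy
    intro s hs
    have hmem := h₁ (S.image fun s => (s - t) / b) (by
        rw [Finset.card_image_of_injective _ hinj, hcard])
      (hS.image_affine htK hbK) (by
        intro x hx
        obtain ⟨a, ha, rfl⟩ := Finset.mem_image.1 hx
        rw [norm_div, div_le_one hbpos]
        exact (hmax a ha).trans hk1) (by
        rw [Finset.sum_image hinj.injOn, ← Finset.sum_div, Finset.sum_sub_distrib,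
          Finset.sum_const, hcard, nsmul_eq_mul, ht, mul_div_cancel₀ _ hcard0, sub_self, zero_div])
      ⟨_, Finset.mem_image_of_mem _ hs₁, by
        rw [norm_div, lt_div_iff₀ hbpos, inv_mul_lt_iff₀ hp]
        exact hk2⟩ _ (Finset.mem_image_of_mem _ hs)
    have hs' : s = (s - t) / b * b + t := by
      rw [div_mul_cancel₀ _ hb0, sub_add_cancel]
    rw [hs']
    have hKM : K ≤ M₁ ⊔ M₂ ⊔ K := le_sup_right
    exact add_mem (mul_mem ((le_sup_left.trans le_sup_left : M₁ ≤ M₁ ⊔ M₂ ⊔ K) hmem) (hKM hbK))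
      (hKM htK)

end StableSetsFinite

section Param

open Polynomial

variable {p : ℕ} [Fact p.Prime] {Ω : Type*} [NormedField Ω] [NormedAlgebra ℚ_[p] Ω] {n : ℕ}

theorem PadicInt.IsSqRoots.map_eq_or {f : Fin n → ℤ_[p]} {y : Fin n → Ω}
    (h : PadicInt.IsSqRoots f y) {M : Subalgebra ℚ_[p] Ω} (φ : M →ₐ[ℚ_[p]] Ω) (i : Fin n)
    (hi : y i ∈ M) : ∃ j, φ ⟨y i, hi⟩ = y j ∨ φ ⟨y i, hi⟩ = -y j := by
  have h1 := h.eval_eq (y i ^ 2)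
  rw [Finset.prod_eq_zero (Finset.mem_univ i) (sub_self _)] at h1
  have h2 := h.eval_eq (φ ⟨y i, hi⟩ ^ 2)
  have h3 : (⟨y i, hi⟩ ^ 2 : M) ^ n + ∑ j, algebraMap ℚ_[p] M (f j) *
      (⟨y i, hi⟩ ^ 2 : M) ^ (j : ℕ) = 0 := by
    apply Subtype.ext
    push_cast
    exact h1
  have h4 := congrArg φ h3
  simp only [map_add, map_sum, map_mul, map_pow, AlgHom.commutes, map_zero] at h4
  rw [show (φ ⟨y i, hi⟩ ^ 2) ^ n + ∑ j, PadicInt.emb p Ω (f j) * (φ ⟨y i, hi⟩ ^ 2) ^ (j : ℕ) = 0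
    from h4, eq_comm, Finset.prod_eq_zero_iff] at h2
  obtain ⟨j, -, hj⟩ := h2
  exact ⟨j, sq_eq_sq_iff_eq_or_eq_neg.1 (sub_eq_zero.1 hj)⟩

/-- If two vectors are permuted with signs in the same way by the Galois group, the second one is
a rational odd polynomial in the first one. -/
theorem exists_eq_sum_odd_pow [IsGalois ℚ_[p] Ω] {y₀ y : Fin n → Ω} (h0 : ∀ i, y₀ i ≠ 0)
    (hinj : Function.Injective fun i => y₀ i ^ 2) (τ : Gal(Ω/ℚ_[p]) → Fin n → Fin n × ℤˣ)
    (h₀ : ∀ σ i, σ (y₀ i) = ((τ σ i).2 : ℤ) * y₀ (τ σ i).1)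
    (h : ∀ σ i, σ (y i) = ((τ σ i).2 : ℤ) * y (τ σ i).1) :
    ∃ c : Fin n → ℚ_[p], (∀ i, y i = ∑ j : Fin n, y₀ i ^ (2 * (j : ℕ) + 1) * algebraMap ℚ_[p] Ω (c j)) ∧
      ∀ j, algebraMap ℚ_[p] Ω (c j) =
        ∑ i, (Matrix.vandermonde fun i => y₀ i ^ 2)⁻¹ j i * (y i / y₀ i) := by
  set V := Matrix.vandermonde fun i => y₀ i ^ 2 with hV
  have hdet : IsUnit V.det := (Matrix.det_vandermonde_ne_zero_iff.2 hinj).isUnit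
  set z : Fin n → Ω := fun i => y i / y₀ i with hz
  set c : Fin n → Ω := V⁻¹.mulVec z with hc
  have hVc : V.mulVec c = z := by
    rw [hc, Matrix.mulVec_mulVec, Matrix.mul_nonsing_inv _ hdet, Matrix.one_mulVec]
  have hu : ∀ u : ℤˣ, (((u : ℤ) : Ω)) ^ 2 = 1 := fun u => by
    rcases Int.units_eq_one_or u with rfl | rfl <;> simp
  have hu0 : ∀ u : ℤˣ, (((u : ℤ) : Ω)) ≠ 0 := fun u hu' => by
    have := hu u
    rw [hu'] at this
    simp at this
  have hzσ : ∀ (σ : Gal(Ω/ℚ_[p])) i, σ (z i) = z (τ σ i).1 := by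
    intro σ i
    simp only [hz]
    rw [map_div₀, h, h₀, mul_div_mul_left _ _ (hu0 _)]
  have hxσ : ∀ (σ : Gal(Ω/ℚ_[p])) i, σ (y₀ i ^ 2) = y₀ (τ σ i).1 ^ 2 := by
    intro σ i
    rw [map_pow, h₀, mul_pow, hu, one_mul]
  have hρ : ∀ σ : Gal(Ω/ℚ_[p]), Function.Surjective fun i => (τ σ i).1 := by
    intro σ
    refine Finite.surjective_of_injective fun i j hij => hinj (σ.injective ?_)
    simp only at hij ⊢
    rw [hxσ, hxσ, hij]
  have hcσ : ∀ σ : Gal(Ω/ℚ_[p]), (fun j => σ (c j)) = c := by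
    intro σ
    have h1 : V.mulVec (fun j => σ (c j)) = z := by
      funext k
      obtain ⟨i, rfl⟩ := hρ σ k
      have h2 := congrArg σ (congrFun hVc i)
      rw [hzσ] at h2
      simp only [← h2, Matrix.mulVec, dotProduct, map_sum, map_mul, hV, Matrix.vandermonde_apply,
        map_pow σ (y₀ i ^ 2), hxσ]
    calc _ = V⁻¹.mulVec (V.mulVec fun j => σ (c j)) := by
          rw [Matrix.mulVec_mulVec, Matrix.nonsing_inv_mul _ hdet, Matrix.one_mulVec]
      _ = c := by rw [h1]
  have hrat : ∀ j, ∃ a : ℚ_[p], algebraMap ℚ_[p] Ω a = c j := fun j =>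
    (InfiniteGalois.mem_range_algebraMap_iff_fixed (c j)).2 fun σ => congrFun (hcσ σ) j
  choose a ha using hrat
  refine ⟨a, fun i => ?_, fun j => ?_⟩
  · have h1 := congrFun hVc i
    simp only [hz, Matrix.mulVec, dotProduct, hV, Matrix.vandermonde_apply] at h1
    rw [eq_div_iff (h0 i), Finset.sum_mul] at h1
    rw [← h1]
    refine Finset.sum_congr rfl fun j _ => ?_
    rw [ha]
    ring
  · rw [ha]
    rfl

variable [IsUltrametricDist Ω]

theorem PadicInt.IsSqRoots.norm_le_one {f : Fin n → ℤ_[p]} {y : Fin n → Ω}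
    (h : PadicInt.IsSqRoots f y) (i : Fin n) : ‖y i‖ ≤ 1 := by
  have h1 := h.eval_eq (y i ^ 2)
  rw [Finset.prod_eq_zero (Finset.mem_univ i) (sub_self _)] at h1
  have h2 := norm_le_one_of_monic_eq_zero (fun i => by
    rw [PadicInt.norm_emb]; exact PadicInt.norm_le_one _) h1
  rw [norm_pow] at h2
  exact (pow_le_one_iff_of_nonneg (norm_nonneg _) two_ne_zero).1 h2

omit [IsUltrametricDist Ω] in
theorem PadicInt.exists_param_of_same_type [IsGalois ℚ_[p] Ω] {y₀ : Fin n → Ω} (h0 : ∀ i, y₀ i ≠ 0)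
    (hinj : Function.Injective fun i => y₀ i ^ 2) (τ : Gal(Ω/ℚ_[p]) → Fin n → Fin n × ℤˣ)
    (h₀ : ∀ σ i, σ (y₀ i) = ((τ σ i).2 : ℤ) * y₀ (τ σ i).1) :
    ∃ Y : Matrix (Fin n) (Fin n) Ω, ∀ y : Fin n → Ω, (∀ i, ‖y i‖ ≤ 1) →
      (∀ σ i, σ (y i) = ((τ σ i).2 : ℤ) * y (τ σ i).1) →
      ∃ c : Fin n → ℤ_[p], y = PadicInt.param Y c := by
  set V := Matrix.vandermonde fun i => y₀ i ^ 2 with hV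
  obtain ⟨m, hm, -⟩ := Padic.exists_zpow_norm_mem p Ω
    (show (0 : ℝ) < 1 + ∑ j, ∑ i, ‖V⁻¹ j i * (y₀ i)⁻¹‖ by positivity)
  have hb0 : (p : Ω) ^ m ≠ 0 := zpow_ne_zero _ (Padic.natCast_self_algebra_ne_zero p Ω)
  refine ⟨Matrix.of fun i j => (p : Ω) ^ m * y₀ i ^ (2 * (j : ℕ) + 1), fun y hy h => ?_⟩
  obtain ⟨c, hc, hcV⟩ := exists_eq_sum_odd_pow h0 hinj τ h₀ h
  have hmap : ∀ j, algebraMap ℚ_[p] Ω (c j / (p : ℚ_[p]) ^ m) =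
      algebraMap ℚ_[p] Ω (c j) / (p : Ω) ^ m := fun j => by
    rw [map_div₀, map_zpow₀, map_natCast]
  have hcn : ∀ j, ‖c j / (p : ℚ_[p]) ^ m‖ ≤ 1 := by
    intro j
    rw [← norm_algebraMap' Ω, hmap, norm_div, div_le_one (norm_pos_iff.2 hb0), hcV]
    calc _ ≤ ∑ i, ‖V⁻¹ j i * (y₀ i)⁻¹‖ := by
          refine (norm_sum_le _ _).trans (Finset.sum_le_sum fun i _ => ?_)
          rw [div_eq_inv_mul, ← mul_assoc, norm_mul]
          exact mul_le_of_le_one_right (norm_nonneg _) (hy i)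
      _ ≤ ∑ j, ∑ i, ‖V⁻¹ j i * (y₀ i)⁻¹‖ :=
          Finset.single_le_sum (f := fun j => ∑ i, ‖V⁻¹ j i * (y₀ i)⁻¹‖) (fun _ _ => by positivity)
            (Finset.mem_univ j)
      _ ≤ _ := by linarith
  refine ⟨fun j => ⟨c j / (p : ℚ_[p]) ^ m, hcn j⟩, funext fun i => ?_⟩
  rw [hc i]
  simp only [PadicInt.param, Matrix.mulVec, dotProduct, Matrix.of_apply]
  refine Finset.sum_congr rfl fun j _ => ?_
  change _ = _ * algebraMap ℚ_[p] Ω (c j / (p : ℚ_[p]) ^ m)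
  rw [hmap]
  field_simp

/-- Finitely many parametrizations cover all square roots of the roots of separable monic
polynomials with `p`-adic integer coefficients. -/
theorem PadicInt.exists_finite_param [IsAlgClosure ℚ_[p] Ω]
    (hiso : ∀ (σ : Gal(Ω/ℚ_[p])) (x : Ω), ‖σ x‖ = ‖x‖) (n : ℕ) :
    ∃ 𝒴 : Set (Matrix (Fin n) (Fin n) Ω), 𝒴.Finite ∧
      ∀ (f : Fin n → ℤ_[p]) (y : Fin n → Ω), PadicInt.IsSqRoots f y → pairDisc y ≠ 0 →
        ∃ Y ∈ 𝒴, ∃ c : Fin n → ℤ_[p], y = PadicInt.param Y c := by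
  classical
  obtain ⟨M, hM, hMS⟩ := exists_finiteDimensional_stable_subset hiso (n + n)
    (⊥ : IntermediateField ℚ_[p] Ω) inferInstance
  have hmem : ∀ (f : Fin n → ℤ_[p]) (y : Fin n → Ω), PadicInt.IsSqRoots f y → ∀ i, y i ∈ M := by
    intro f y hf i
    refine hMS (Finset.univ.image y ∪ Finset.univ.image fun i => -y i) ?_ ?_ (y i)
      (Finset.mem_union_left _ (Finset.mem_image_of_mem _ (Finset.mem_univ i)))
    · refine (Finset.card_union_le _ _).trans (add_le_add ?_ ?_) <;>
      exact Finset.card_image_le.trans (by simp)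
    · have key : ∀ (σ : Gal(Ω/ℚ_[p])) i, ∃ j, σ (y i) = y j ∨ σ (y i) = -y j := fun σ i =>
        hf.map_eq_or (M := ⊤) (σ.toAlgHom.comp (Subalgebra.val ⊤)) i trivial
      intro σ _ s hs
      simp only [Finset.mem_union, Finset.mem_image, Finset.mem_univ, true_and] at hs ⊢
      rcases hs with ⟨i, rfl⟩ | ⟨i, rfl⟩ <;> obtain ⟨j, hj | hj⟩ := key σ i
      · exact Or.inl ⟨j, hj.symm⟩
      · exact Or.inr ⟨j, hj.symm⟩
      · exact Or.inr ⟨j, by rw [map_neg, hj]⟩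
      · exact Or.inl ⟨j, by rw [map_neg, hj, neg_neg]⟩
  let res : Gal(Ω/ℚ_[p]) → (M →ₐ[ℚ_[p]] Ω) := fun σ => σ.toAlgHom.comp M.val
  let good : ((M →ₐ[ℚ_[p]] Ω) → Fin n → Fin n × ℤˣ) → (Fin n → Ω) → Prop := fun τ y =>
    ∀ σ i, σ (y i) = ((τ (res σ) i).2 : ℤ) * y (τ (res σ) i).1
  have htype : ∀ (f : Fin n → ℤ_[p]) (y : Fin n → Ω), PadicInt.IsSqRoots f y → ∃ τ, good τ y := by
    intro f y hf
    have : ∀ (φ : M →ₐ[ℚ_[p]] Ω) (i : Fin n), ∃ x : Fin n × ℤˣ,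
        φ ⟨y i, hmem f y hf i⟩ = (x.2 : ℤ) * y x.1 := by
      intro φ i
      obtain ⟨j, hj | hj⟩ := hf.map_eq_or (M := M.toSubalgebra) φ i (hmem f y hf i)
      · exact ⟨(j, 1), hj.trans (by simp)⟩
      · exact ⟨(j, -1), hj.trans (by simp)⟩
    choose τ hτ using this
    exact ⟨τ, fun σ i => hτ (res σ) i⟩
  have hY : ∀ τ, ∃ Y : Matrix (Fin n) (Fin n) Ω, ∀ (f : Fin n → ℤ_[p]) (y : Fin n → Ω),
      PadicInt.IsSqRoots f y → pairDisc y ≠ 0 → good τ y →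
        ∃ c : Fin n → ℤ_[p], y = PadicInt.param Y c := by
    intro τ
    by_cases hex : ∃ y₀ : Fin n → Ω, pairDisc y₀ ≠ 0 ∧ good τ y₀
    · obtain ⟨y₀, hd, hg⟩ := hex
      rw [pairDisc_ne_zero_iff] at hd
      obtain ⟨Y, hY⟩ := PadicInt.exists_param_of_same_type (fun i => right_ne_zero_of_mul (hd.1 i))
        (fun i j hij => by
          by_contra hne
          exact hd.2 i j hne (sub_eq_zero.2 hij)) (fun σ => τ (res σ)) hg
      exact ⟨Y, fun f y hf _ hgy => hY y hf.norm_le_one hgy⟩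
    · exact ⟨0, fun f y _ h1 h2 => absurd ⟨y, h1, h2⟩ hex⟩
  choose Y hY using hY
  refine ⟨Set.range Y, Set.finite_range Y, fun f y hf hd => ?_⟩
  obtain ⟨τ, hτ⟩ := htype f y hf
  exact ⟨Y τ, ⟨τ, rfl⟩, hY τ f y hf hd hτ⟩

end Param

section SqRootsVolume

open scoped ENNReal

variable {p : ℕ} [Fact p.Prime] {Ω : Type*} [NormedField Ω] [NormedAlgebra ℚ_[p] Ω] {n : ℕ}
  [IsUltrametricDist Ω]

theorem PadicInt.volume_isSqRoots_pairDisc_le [IsAlgClosure ℚ_[p] Ω]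
    (hiso : ∀ (σ : Gal(Ω/ℚ_[p])) (x : Ω), ‖σ x‖ = ‖x‖) (hn : 0 < n) :
    ∃ C : ℝ, 0 < C ∧ ∀ v : ℝ, 0 < v →
      volume {f : Fin n → ℤ_[p] | ∃ y : Fin n → Ω, PadicInt.IsSqRoots f y ∧ pairDisc y = v} ≤
      ENNReal.ofReal (C * v ^ (1 / 4 + ((2 * n + n * (n - 1) * 4 : ℕ) : ℝ)⁻¹)) := by
  obtain ⟨𝒴, hfin, hY⟩ := PadicInt.exists_finite_param (p := p) hiso n
  choose C hC hvol using fun Y => PadicInt.volume_isSqRoots_param_le (p := p) (Ω := Ω) hn Y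
  set F := hfin.toFinset with hF
  refine ⟨1 + ∑ Y ∈ F, C Y, add_pos_of_pos_of_nonneg one_pos
    (Finset.sum_nonneg fun Y _ => (hC Y).le), fun v hv => ?_⟩
  calc _ ≤ volume (⋃ Y ∈ F, {f : Fin n → ℤ_[p] | ∃ c : Fin n → ℤ_[p],
        pairDisc (PadicInt.param Y c) = v ∧ PadicInt.IsSqRoots f (PadicInt.param Y c)}) := by
        refine measure_mono ?_
        rintro f ⟨y, hf, hyv⟩
        obtain ⟨Y, hYm, c, rfl⟩ := hY f y hf (by rw [hyv]; exact hv.ne')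
        exact Set.mem_biUnion (hfin.mem_toFinset.2 hYm) ⟨c, hyv, hf⟩
    _ ≤ ∑ Y ∈ F, ENNReal.ofReal
          (C Y * v ^ (1 / 4 + ((2 * n + n * (n - 1) * 4 : ℕ) : ℝ)⁻¹)) :=
        (measure_biUnion_finset_le _ _).trans (Finset.sum_le_sum fun Y _ => hvol Y v hv)
    _ = ENNReal.ofReal (∑ Y ∈ F, C Y * v ^ (1 / 4 + ((2 * n + n * (n - 1) * 4 : ℕ) : ℝ)⁻¹)) :=
        (ENNReal.ofReal_sum_of_nonneg fun Y _ =>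
          mul_nonneg (hC Y).le (Real.rpow_nonneg hv.le _)).symm
    _ ≤ _ := by
        rw [← Finset.sum_mul]
        have := Real.rpow_nonneg hv.le (1 / 4 + ((2 * n + n * (n - 1) * 4 : ℕ) : ℝ)⁻¹)
        refine ENNReal.ofReal_le_ofReal (mul_le_mul_of_nonneg_right ?_ this)
        linarith

theorem PadicAlgCl.norm_galois (σ : Gal(PadicAlgCl p/ℚ_[p])) (x : PadicAlgCl p) :
    ‖σ x‖ = ‖x‖ := by
  rw [← PadicAlgCl.spectralNorm_eq, ← PadicAlgCl.spectralNorm_eq]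
  exact (spectralNorm_eq_of_equiv σ x).symm

end SqRootsVolume

section AdjointCharpoly

open Polynomial

open scoped Kronecker Matrix

variable {ι : Type*} [Fintype ι] [DecidableEq ι]

theorem Matrix.charpoly_kronecker_sub_kronecker_transpose {R : Type*} [CommRing R]
    (M : Matrix ι ι R) (d : ι → R) (hd : M.charpoly = ∏ i, (X - C (d i))) :
    (M ⊗ₖ (1 : Matrix ι ι R) - (1 : Matrix ι ι R) ⊗ₖ Mᵀ).charpoly =
      ∏ i, ∏ j, (X - C (d i - d j)) := by
  set f : R[X][X] →+* Matrix ι ι R[X] := (aeval (M.map C)ᵀ : R[X][X] →ₐ[R[X]] _).toRingHom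
    with hf
  have hfX : f X = (M.map C)ᵀ := by simp [hf]
  have hfC : ∀ a, f (C a) = algebraMap R[X] _ a := fun a => by simp [hf]
  set N : Matrix ι ι R[X][X] := Matrix.scalar ι (C X + X) - M.map ((C : R[X] →+* _).comp C)
    with hN
  have h1 : N.det = ∏ i, (C X + X - C (C (d i))) := by
    rw [hN, ← Matrix.eval_charpoly, Matrix.charpoly_map, hd]
    simp [Polynomial.map_prod, eval_prod]
  have h2 : (N.map f).comp ι ι ι ι R[X] =
      (M ⊗ₖ (1 : Matrix ι ι R) - (1 : Matrix ι ι R) ⊗ₖ Mᵀ).charmatrix := by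
    ext1 ⟨i, k⟩ ⟨j, l⟩
    simp only [Matrix.comp_apply, Matrix.map_apply, hN, Matrix.sub_apply, map_sub, map_add,
      RingHom.comp_apply, hfC, Matrix.charmatrix_apply, Matrix.kroneckerMap_apply,
      Matrix.scalar_apply, Matrix.diagonal_apply, Matrix.one_apply, Matrix.transpose_apply,
      Matrix.algebraMap_matrix_apply, Prod.mk.injEq]
    by_cases hij : i = j <;> by_cases hkl : k = l <;>
      simp [hij, hkl, hfX, hfC, Matrix.algebraMap_matrix_apply] <;> ring
  rw [Matrix.charpoly, ← h2, ← Matrix.det_det, h1]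
  have h3 := map_prod ((Matrix.detMonoidHom (n := ι) (R := R[X])).comp (f : R[X][X] →* _))
    (fun i => C X + X - C (C (d i))) Finset.univ
  simp only [MonoidHom.comp_apply, Matrix.coe_detMonoidHom, MonoidHom.coe_coe] at h3
  rw [h3]
  refine Finset.prod_congr rfl fun i _ => ?_
  rw [map_sub, map_add, hfX, hfC, hfC]
  have h4 : algebraMap R[X] (Matrix ι ι R[X]) X + (M.map C)ᵀ - algebraMap R[X] _ (C (d i)) =
      - (Matrix.scalar ι (C (d i) - X) - M.map C)ᵀ := by
    refine Matrix.ext fun a b => ?_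
    by_cases hab : a = b
    · subst hab
      simp [Matrix.algebraMap_matrix_apply]
      ring
    · simp [Matrix.algebraMap_matrix_apply, hab]
  rw [h4, Matrix.det_neg, Matrix.det_transpose, ← Matrix.eval_charpoly, Matrix.charpoly_map, hd,
    Polynomial.map_prod, eval_prod, ← Finset.card_univ, ← Finset.prod_const,
    ← Finset.prod_mul_distrib]
  refine Finset.prod_congr rfl fun j _ => ?_
  simp
  ring

theorem Matrix.charpoly_mulLeft_sub_mulRight {K : Type*} [Field K] (M : Matrix ι ι K) :
    (LinearMap.mulLeft K M - LinearMap.mulRight K M).charpoly =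
      (M ⊗ₖ (1 : Matrix ι ι K) - (1 : Matrix ι ι K) ⊗ₖ Mᵀ).charpoly := by
  rw [← LinearMap.charpoly_toMatrix _ (Matrix.stdBasis K ι ι)]
  congr 1
  ext ⟨i, k⟩ ⟨j, l⟩
  rw [LinearMap.toMatrix_apply, Matrix.stdBasis_eq_single]
  simp [Matrix.stdBasis, Matrix.kroneckerMap_apply, Matrix.one_apply,
    Matrix.mul_apply, Matrix.single_apply]
  simp only [eq_comm (a := k) (b := l), eq_comm (a := i) (b := j)]
  by_cases hij : j = i <;> by_cases hkl : l = k <;> simp [hij, hkl]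

theorem Matrix.charpoly_fromBlocks_zero_zero {R : Type*} [CommRing R]
    (A B : Matrix ι ι R) :
    (Matrix.fromBlocks 0 A B 0).charpoly = (A * B).charpoly.comp (X ^ 2) := by
  set A' := A.map (C : R →+* R[X])
  set B' := B.map (C : R →+* R[X])
  have h1 : (Matrix.fromBlocks 0 A B 0).charmatrix * Matrix.fromBlocks (Matrix.scalar ι X) 0 B' 1 =
      Matrix.fromBlocks (Matrix.scalar ι (X ^ 2) - A' * B') (-A') 0 (Matrix.scalar ι X) := by
    rw [Matrix.charmatrix_fromBlocks, Matrix.fromBlocks_multiply, Matrix.charmatrix_zero]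
    congr 1
    · rw [← map_mul, ← sq]; simp [A', B', sub_eq_add_neg]
    · simp [A']
    · have := (Matrix.scalar_commute X (fun _ => Commute.all _ _) B').eq
      rw [this]; simp [B']
    · simp
  have h2 := congrArg Matrix.det h1
  have hdet : (Matrix.scalar ι (X : R[X])).det = X ^ Fintype.card ι := by simp
  rw [Matrix.det_mul, Matrix.det_fromBlocks_zero₁₂, Matrix.det_fromBlocks_zero₂₁, hdet,
    Matrix.det_one, mul_one] at h2
  have h3 := (isRegular_X_pow (R := R) (Fintype.card ι)).right h2
  rw [Matrix.charpoly, h3]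
  have : A' * B' = (A * B).map (C : R →+* R[X]) := by simp [A', B', Matrix.map_mul]
  rw [this, ← Matrix.eval_charpoly, Matrix.charpoly_map, eval_map]
  rfl

theorem Polynomial.coeff_prod_X_sub_C_sub {R : Type*} [CommRing R] (d : ι → R) :
    (∏ i, ∏ j, (X - C (d i - d j))).coeff (Fintype.card ι) =
      ∏ i, ∏ j ∈ {i}ᶜ, (d j - d i) := by
  have : ∀ i, ∏ j, (X - C (d i - d j)) = X * ∏ j ∈ {i}ᶜ, (X - C (d i - d j)) := fun i => by
    rw [← Finset.prod_mul_prod_compl {i}]; simp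
  simp_rw [this]
  rw [Finset.prod_mul_distrib, Finset.prod_const, Finset.card_univ, coeff_X_pow_mul' ]
  simp only [le_refl, if_true, Nat.sub_self, coeff_zero_eq_eval_zero, eval_prod]
  simp

end AdjointCharpoly

section WeylPairDisc

open Polynomial

variable {p : ℕ} [Fact p.Prime] {Ω : Type*} [NormedField Ω] [NormedAlgebra ℚ_[p] Ω] {n : ℕ}

omit [Fact p.Prime] [NormedAlgebra ℚ_[p] Ω] in
theorem prod_norm_sub_elim_neg_eq_pairDisc (y : Fin n → Ω) :
    (∏ a : Fin n ⊕ Fin n, ∏ b ∈ {a}ᶜ, ‖Sum.elim y (-y) b - Sum.elim y (-y) a‖) = pairDisc y := by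
  have hl (i : Fin n) : ({Sum.inl i}ᶜ : Finset (Fin n ⊕ Fin n)) =
      ({i}ᶜ : Finset (Fin n)).disjSum Finset.univ := by
    ext (j | j) <;> simp
  have hr (i : Fin n) : ({Sum.inr i}ᶜ : Finset (Fin n ⊕ Fin n)) =
      Finset.univ.disjSum ({i}ᶜ : Finset (Fin n)) := by
    ext (j | j) <;> simp
  have key (i : Fin n) :
      (∏ j, ‖y j + y i‖) * ∏ j ∈ {i}ᶜ, ‖y j - y i‖ =
      ‖2 * y i‖ * ∏ j ∈ {i}ᶜ, ‖y i ^ 2 - y j ^ 2‖ := by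
    rw [← Finset.prod_mul_prod_compl {i}, Finset.prod_singleton, ← two_mul, mul_assoc,
      ← Finset.prod_mul_distrib]
    congr 1
    refine Finset.prod_congr rfl fun j _ => ?_
    rw [← norm_mul, norm_sub_rev (y i ^ 2)]
    congr 1
    ring
  rw [Fintype.prod_sum_type]
  simp only [hl, hr, Finset.prod_disjSum, Sum.elim_inl, Sum.elim_inr, Pi.neg_apply]
  have e1 (i : Fin n) : (∏ j ∈ {i}ᶜ, ‖y j - y i‖) * ∏ j, ‖-y j - y i‖ =
      ‖2 * y i‖ * ∏ j ∈ {i}ᶜ, ‖y i ^ 2 - y j ^ 2‖ := by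
    rw [← key i, mul_comm]
    congr 1
    exact Finset.prod_congr rfl fun j _ => by rw [← norm_neg]; congr 1; ring
  have e2 (i : Fin n) : (∏ j, ‖y j - -y i‖) * (∏ j ∈ {i}ᶜ, ‖-y j - -y i‖) =
      ‖2 * y i‖ * ∏ j ∈ {i}ᶜ, ‖y i ^ 2 - y j ^ 2‖ := by
    rw [← key i]
    congr 1
    · simp
    · exact Finset.prod_congr rfl fun j _ => by rw [← norm_neg]; congr 1; ring
  simp only [e1, e2, pairDisc, Finset.prod_mul_distrib, Finset.prod_pow]
  ring

theorem norm_weylDiscriminantGuoJacquet_eq_pairDisc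
    (A B : Matrix (Fin n) (Fin n) ℚ_[p]) (y : Fin n → Ω)
    (hy : (A * B).charpoly.map (algebraMap ℚ_[p] Ω) = ∏ i, (X - C (y i ^ 2))) :
    ‖weylDiscriminantGuoJacquet p n (A, B)‖ = pairDisc y := by
  set φ := algebraMap ℚ_[p] Ω
  set M := Matrix.fromBlocks 0 A B 0 with hM
  have h1 : (M.map φ).charpoly = ∏ a, (X - C (Sum.elim y (-y) a)) := by
    rw [Matrix.charpoly_map, hM, Matrix.charpoly_fromBlocks_zero_zero, map_comp, hy,
      Fintype.prod_sum_type, ← Finset.prod_mul_distrib]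
    simp only [Polynomial.map_pow, map_X, prod_comp]
    refine Finset.prod_congr rfl fun i _ => ?_
    simp
    ring
  have h2 := Matrix.charpoly_kronecker_sub_kronecker_transpose (M.map φ) _ h1
  have h3 := congrArg (fun q => coeff q (2 * n)) h2
  have hc : 2 * n = Fintype.card (Fin n ⊕ Fin n) := by simp [two_mul]
  rw [← prod_norm_sub_elim_neg_eq_pairDisc, ← norm_algebraMap' Ω, weylDiscriminantGuoJacquet,
    Matrix.charpoly_mulLeft_sub_mulRight, ← coeff_map, ← Matrix.charpoly_map]
  conv_rhs at h3 => rw [hc, coeff_prod_X_sub_C_sub]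
  simp only [← norm_prod]
  rw [← h3]
  congr 3
  ext ⟨i, k⟩ ⟨j, l⟩
  simp [Matrix.kroneckerMap_apply, Matrix.one_apply, apply_ite (algebraMap ℚ_[p] Ω), φ, hM]

theorem PadicInt.exists_isSqRoots_norm_weylDiscriminantGuoJacquet [IsAlgClosed Ω]
    (A B : Matrix (Fin n) (Fin n) ℤ_[p]) : ∃ y : Fin n → Ω,
      PadicInt.IsSqRoots (fun k : Fin n => (A * B).charpoly.coeff k) y ∧
      ‖weylDiscriminantGuoJacquet p n
        (A.map (algebraMap ℤ_[p] ℚ_[p]), B.map (algebraMap ℤ_[p] ℚ_[p]))‖ = pairDisc y := by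
  obtain ⟨θ, hθ⟩ := exists_prod_X_sub_C_eq
    (fun k : Fin n => PadicInt.emb p Ω ((A * B).charpoly.coeff k))
  choose y hy using fun i => IsAlgClosed.exists_pow_nat_eq (θ i) (n := 2) two_pos
  simp only [← hy] at hθ
  refine ⟨y, hθ, norm_weylDiscriminantGuoJacquet_eq_pairDisc _ _ y ?_⟩
  rw [← hθ, ← Matrix.map_mul, Matrix.charpoly_map, Polynomial.map_map]
  have hdeg : (A * B).charpoly.natDegree = n := by simp
  conv_lhs => rw [(Matrix.charpoly_monic (A * B)).as_sum, hdeg]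
  simp [Polynomial.map_sum, Finset.sum_range, PadicInt.emb]
  rfl

end WeylPairDisc

section WeylScaling

open Polynomial
open scoped ENNReal

open scoped Kronecker

theorem Matrix.charpoly_smul_coeff_mul_pow {R ι : Type*} [CommRing R] [Fintype ι] [DecidableEq ι]
    (c : R) (N : Matrix ι ι R) (k : ℕ) :
    (c • N).charpoly.coeff k * c ^ k = c ^ Fintype.card ι * N.charpoly.coeff k := by
  rw [← comp_C_mul_X_coeff, ← coeff_C_mul]
  congr 1
  have h : (c • N).charpoly.comp (C c * X) =
      ((c • N).charmatrix.map (compRingHom (C c * X))).det := by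
    rw [Matrix.charpoly, ← Polynomial.coe_compRingHom_apply, RingHom.map_det]
    rfl
  rw [h, Matrix.charpoly, C_pow, ← Matrix.det_smul]
  congr 1
  refine Matrix.ext fun i j => ?_
  by_cases hij : i = j
  · subst hij; simp [mul_sub]
  · simp [hij]

variable {p : ℕ} [Fact p.Prime] {n : ℕ}

theorem weylDiscriminantGuoJacquet_eq_coeff_charpoly_kronecker
    (X : Matrix (Fin n) (Fin n) ℚ_[p] × Matrix (Fin n) (Fin n) ℚ_[p]) :
    weylDiscriminantGuoJacquet p n X =
      (Matrix.fromBlocks 0 X.1 X.2 0 ⊗ₖ (1 : Matrix (Fin n ⊕ Fin n) (Fin n ⊕ Fin n) ℚ_[p]) -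
        (1 : Matrix (Fin n ⊕ Fin n) (Fin n ⊕ Fin n) ℚ_[p]) ⊗ₖ
          (Matrix.fromBlocks 0 X.1 X.2 0).transpose).charpoly.coeff (2 * n) := by
  rw [weylDiscriminantGuoJacquet, Matrix.charpoly_mulLeft_sub_mulRight]

theorem continuous_weylDiscriminantGuoJacquet :
    Continuous (weylDiscriminantGuoJacquet p n) := by
  simp only [_root_.funext weylDiscriminantGuoJacquet_eq_coeff_charpoly_kronecker]
  refine Continuous.matrix_charpoly_coeff ?_ _
  refine continuous_matrix fun i j => ?_
  have h :
    Continuous fun X : Matrix (Fin n) (Fin n) ℚ_[p] × Matrix (Fin n) (Fin n) ℚ_[p] =>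
      Matrix.fromBlocks (0 : Matrix (Fin n) (Fin n) ℚ_[p]) X.1 X.2
        (0 : Matrix (Fin n) (Fin n) ℚ_[p]) :=
    continuous_const.matrix_fromBlocks continuous_fst continuous_snd continuous_const
  simp only [Matrix.sub_apply, Matrix.kroneckerMap_apply, Matrix.transpose_apply]
  exact ((h.matrix_elem _ _).mul continuous_const).sub
    (continuous_const.mul (h.matrix_elem _ _))

theorem weylDiscriminantGuoJacquet_smul_mul_pow (c : ℚ_[p])
    (X : Matrix (Fin n) (Fin n) ℚ_[p] × Matrix (Fin n) (Fin n) ℚ_[p]) :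
    weylDiscriminantGuoJacquet p n (c • X) * c ^ (2 * n) =
      c ^ Fintype.card ((Fin n ⊕ Fin n) × (Fin n ⊕ Fin n)) * weylDiscriminantGuoJacquet p n X := by
  rw [weylDiscriminantGuoJacquet_eq_coeff_charpoly_kronecker,
    weylDiscriminantGuoJacquet_eq_coeff_charpoly_kronecker, ← Matrix.charpoly_smul_coeff_mul_pow]
  have : Matrix.fromBlocks 0 (c • X).1 (c • X).2 0 = c • Matrix.fromBlocks 0 X.1 X.2 0 := by
    simp [Matrix.fromBlocks_smul]
  rw [this, smul_sub, Matrix.transpose_smul, Matrix.smul_kronecker, Matrix.kronecker_smul]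

theorem PadicInt.norm_weylDiscriminantGuoJacquet_le_one (A B : Matrix (Fin n) (Fin n) ℤ_[p]) :
    ‖weylDiscriminantGuoJacquet p n
      (A.map (algebraMap ℤ_[p] ℚ_[p]), B.map (algebraMap ℤ_[p] ℚ_[p]))‖ ≤ 1 := by
  set φ := algebraMap ℤ_[p] ℚ_[p]
  set M := Matrix.fromBlocks 0 A B 0 with hM
  have h : Matrix.fromBlocks 0 (A.map φ) (B.map φ) 0 = M.map φ := by
    rw [hM, Matrix.fromBlocks_map]; simp
  have h2 : (M.map φ) ⊗ₖ (1 : Matrix (Fin n ⊕ Fin n) (Fin n ⊕ Fin n) ℚ_[p]) -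
        (1 : Matrix (Fin n ⊕ Fin n) (Fin n ⊕ Fin n) ℚ_[p]) ⊗ₖ (M.map φ).transpose =
      (M ⊗ₖ (1 : Matrix (Fin n ⊕ Fin n) (Fin n ⊕ Fin n) ℤ_[p]) -
        (1 : Matrix (Fin n ⊕ Fin n) (Fin n ⊕ Fin n) ℤ_[p]) ⊗ₖ M.transpose).map φ := by
    ext ⟨i, k⟩ ⟨j, l⟩
    simp [Matrix.kroneckerMap_apply, Matrix.one_apply, apply_ite φ]
  rw [weylDiscriminantGuoJacquet_eq_coeff_charpoly_kronecker, h, h2, Matrix.charpoly_map,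
    coeff_map]
  exact PadicInt.norm_le_one _

end WeylScaling

section LogBound

open scoped ENNReal

theorem Real.exists_rpow_mul_max_one_neg_log_rpow_le {s ε r V : ℝ} (hε : 0 < ε) (hr : 0 ≤ r)
    (hV : 0 < V) : ∃ C : ℝ, 0 < C ∧ ∀ u, 0 < u → u ≤ V →
      u ^ (-s) * (max 1 (-(1 / 2 : ℝ) * Real.log u)) ^ r ≤ C * u ^ (-(s + ε)) := by
  have hr1 : 0 < r + 1 := by linarith
  set e := ε / (r + 1) with he
  have hepos : 0 < e := by positivity
  set K := V ^ e + 1 / e with hK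
  have hKpos : 0 < K := by positivity
  refine ⟨K ^ (r + 1), by positivity, fun u hu huV => ?_⟩
  have h1 : max 1 (-(1 / 2 : ℝ) * Real.log u) ≤ K * u ^ (-e) := by
    have hpos : 0 < u ^ (-e) := by positivity
    refine max_le ?_ ?_
    · have : 1 ≤ V ^ e * u ^ (-e) := by
        rw [Real.rpow_neg hu.le, ← div_eq_mul_inv, one_le_div (by positivity)]
        exact Real.rpow_le_rpow hu.le huV hepos.le
      rw [hK, add_mul]
      have : 0 < 1 / e * u ^ (-e) := by positivity
      linarith
    · have h := Real.log_le_rpow_div (inv_nonneg.2 hu.le) hepos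
      rw [Real.log_inv, Real.inv_rpow hu.le, ← Real.rpow_neg hu.le] at h
      have h2 : 0 < V ^ e * u ^ (-e) := by positivity
      have h3 : 0 < u ^ (-e) / e := by positivity
      have h4 : K * u ^ (-e) = V ^ e * u ^ (-e) + u ^ (-e) / e := by rw [hK]; ring
      rw [h4]
      linarith
  have h2 : (max 1 (-(1 / 2 : ℝ) * Real.log u)) ^ r ≤ K ^ (r + 1) * u ^ (-ε) := by
    calc _ ≤ (max 1 (-(1 / 2 : ℝ) * Real.log u)) ^ (r + 1) :=
          Real.rpow_le_rpow_of_exponent_le (le_max_left _ _) (by linarith)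
      _ ≤ (K * u ^ (-e)) ^ (r + 1) :=
          Real.rpow_le_rpow (zero_le_one.trans (le_max_left _ _)) h1 hr1.le
      _ = _ := by
          rw [Real.mul_rpow hKpos.le (by positivity), ← Real.rpow_mul hu.le]
          congr 2
          rw [he]
          field_simp
  calc _ ≤ u ^ (-s) * (K ^ (r + 1) * u ^ (-ε)) := by gcongr
    _ = _ := by rw [neg_add, Real.rpow_add hu]; ring

end LogBound

section PowerIntegrability

open scoped ENNReal

theorem MeasureTheory.lintegral_ofReal_rpow_neg_lt_top {α : Type*} [MeasurableSpace α]
    {ν : Measure α} {g : α → ℝ} (hg : Measurable g) {q : ℝ} (hq : 1 < q)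
    (hgv : ∀ x, g x = 0 ∨ ∃ j : ℕ, g x = q ^ (-(j : ℝ))) {E : ℝ≥0∞} (hE : E < ⊤) {s s' : ℝ}
    (hs : 0 < s) (hss : s < s')
    (hvol : ∀ v, 0 < v → ν {x | g x = v} ≤ E * ENNReal.ofReal (v ^ s')) :
    ∫⁻ x, ENNReal.ofReal (g x ^ (-s)) ∂ν < ⊤ := by
  have hq0 : 0 < q := by linarith
  set T : ℕ → Set α := fun j => {x | g x = q ^ (-(j : ℝ))} with hT
  have hTm (j) : MeasurableSet (T j) := hg (measurableSet_singleton _)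
  have hpt (x : α) : ENNReal.ofReal (g x ^ (-s)) ≤
      ∑' j : ℕ, (T j).indicator (fun _ => ENNReal.ofReal (q ^ ((j : ℝ) * s))) x := by
    rcases hgv x with h | ⟨j, h⟩
    · rw [h, Real.zero_rpow (by linarith)]; simp
    · refine le_trans (le_of_eq ?_) (ENNReal.le_tsum j)
      rw [Set.indicator_of_mem (show x ∈ T j from h), h, ← Real.rpow_mul hq0.le]
      congr 2
      ring
  calc _ ≤ ∫⁻ x, ∑' j : ℕ, (T j).indicator (fun _ => ENNReal.ofReal (q ^ ((j : ℝ) * s))) x ∂ν :=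
        lintegral_mono hpt
    _ = ∑' j : ℕ, ENNReal.ofReal (q ^ ((j : ℝ) * s)) * ν (T j) := by
        rw [lintegral_tsum fun j => (measurable_const.indicator (hTm j)).aemeasurable]
        simp [hTm]
    _ ≤ ∑' j : ℕ, E * ENNReal.ofReal (q ^ (s - s')) ^ j := by
        refine ENNReal.tsum_le_tsum fun j => ?_
        refine (mul_le_mul_right (hvol _ (by positivity)) _).trans (le_of_eq ?_)
        rw [mul_left_comm, ← ENNReal.ofReal_mul (by positivity),
          ← ENNReal.ofReal_pow (by positivity)]
        congr 2
        rw [← Real.rpow_mul hq0.le, ← Real.rpow_add hq0, ← Real.rpow_natCast, ← Real.rpow_mul hq0.le]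
        congr 1
        ring
    _ < ⊤ := by
        rw [ENNReal.tsum_mul_left, ENNReal.tsum_geometric]
        refine ENNReal.mul_lt_top hE (ENNReal.inv_lt_top.2 (tsub_pos_of_lt ?_))
        rw [← ENNReal.ofReal_one]
        exact (ENNReal.ofReal_lt_ofReal_iff one_pos).2
          (Real.rpow_lt_one_of_one_lt_of_neg hq (by linarith))

end PowerIntegrability

section WeylVolume

open scoped ENNReal

variable {p : ℕ} [Fact p.Prime] {n : ℕ}

theorem PadicInt.volume_norm_weylDiscriminantGuoJacquet_eq_le (hn : 0 < n) :
    ∃ E : ℝ≥0∞, E < ⊤ ∧ ∃ s' : ℝ, 1 / 4 < s' ∧ ∀ v : ℝ, 0 < v →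
      volume {x : (Fin n → Fin n → ℤ_[p]) × (Fin n → Fin n → ℤ_[p]) |
        ‖weylDiscriminantGuoJacquet p n ((Matrix.of x.1).map (algebraMap ℤ_[p] ℚ_[p]),
          (Matrix.of x.2).map (algebraMap ℤ_[p] ℚ_[p]))‖ = v} ≤ E * ENNReal.ofReal (v ^ s') := by
  obtain ⟨C, hC, hvol⟩ := PadicInt.volume_isSqRoots_pairDisc_le (p := p) (Ω := PadicAlgCl p)
    PadicAlgCl.norm_galois hn
  set δ : ℝ := ((2 * n + n * (n - 1) * 4 : ℕ) : ℝ)⁻¹ with hδ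
  have hδ0 : 0 < δ := by
    rw [hδ, inv_pos]
    exact_mod_cast (by omega : 0 < 2 * n + n * (n - 1) * 4)
  set a : ℝ := 1 / 4 + δ with ha
  set t : ℝ := (1 / 4 + δ / 2) / a with ht
  have ha0 : 0 < a := by positivity
  have ht0 : 0 < t := by positivity
  have ht1 : t < 1 := by rw [ht, div_lt_one ha0, ha]; linarith
  have hat : a * t = 1 / 4 + δ / 2 := by rw [ht]; field_simp
  obtain ⟨m, rfl⟩ : ∃ m, n = m + 1 := ⟨n - 1, by omega⟩
  obtain ⟨E, hE, hEvol⟩ := Matrix.volume_charpoly_mul_le (p := p) ht0 ht1 m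
  refine ⟨E * ENNReal.ofReal (C ^ t), ENNReal.mul_lt_top hE ENNReal.ofReal_lt_top,
    a * t, by rw [hat]; linarith, fun v hv => ?_⟩
  have hw : ENNReal.ofReal (C * v ^ a) ≠ 0 := by
    rw [Ne, ENNReal.ofReal_eq_zero, not_le]; positivity
  calc _ ≤ volume {x : (Fin (m + 1) → Fin (m + 1) → ℤ_[p]) × (Fin (m + 1) → Fin (m + 1) → ℤ_[p]) |
        (fun k : Fin (m + 1) => (Matrix.of x.1 * Matrix.of x.2).charpoly.coeff k) ∈
          {f : Fin (m + 1) → ℤ_[p] | ∃ y : Fin (m + 1) → PadicAlgCl p,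
            PadicInt.IsSqRoots f y ∧ pairDisc y = v}} := by
        refine measure_mono fun x hx => ?_
        obtain ⟨y, hy, hyd⟩ := PadicInt.exists_isSqRoots_norm_weylDiscriminantGuoJacquet
          (Ω := PadicAlgCl p) (Matrix.of x.1) (Matrix.of x.2)
        exact ⟨y, hy, hyd.symm.trans hx⟩
    _ ≤ E * ENNReal.ofReal (C * v ^ a) ^ t := hEvol _ _ hw (hvol v hv)
    _ = _ := by
        rw [ENNReal.ofReal_rpow_of_pos (by positivity), Real.mul_rpow hC.le (by positivity),
          ENNReal.ofReal_mul (by positivity), mul_assoc, ← Real.rpow_mul hv.le]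

attribute [local instance] PadicInt.isAddHaarMeasure_volume_matrix_prod

theorem PadicInt.lintegral_weylDiscriminantGuoJacquet_rpow_lt_top (hn : 0 < n) :
    ∃ s : ℝ, 1 / 4 < s ∧
      ∫⁻ x : (Fin n → Fin n → ℤ_[p]) × (Fin n → Fin n → ℤ_[p]),
        ENNReal.ofReal (‖weylDiscriminantGuoJacquet p n
          ((Matrix.of x.1).map (algebraMap ℤ_[p] ℚ_[p]),
          (Matrix.of x.2).map (algebraMap ℤ_[p] ℚ_[p]))‖ ^ (-s)) < ⊤ := by
  obtain ⟨E, hE, s', hs', hvol⟩ := PadicInt.volume_norm_weylDiscriminantGuoJacquet_eq_le (p := p) hn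
  have hp : 1 < (p : ℝ) := by exact_mod_cast (Fact.out : p.Prime).one_lt
  refine ⟨(1 / 4 + s') / 2, by linarith, lintegral_ofReal_rpow_neg_lt_top (q := p) ?_ hp ?_ hE
    (by linarith) (by linarith) hvol⟩
  · refine (continuous_norm.comp (continuous_weylDiscriminantGuoJacquet.comp ?_)).measurable
    have hc : Continuous (algebraMap ℤ_[p] ℚ_[p]) := continuous_subtype_val
    exact (Continuous.matrix_map continuous_fst hc).prodMk
      (Continuous.matrix_map continuous_snd hc)
  · intro x
    refine or_iff_not_imp_left.2 fun h => ?_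
    have h1 := PadicInt.norm_weylDiscriminantGuoJacquet_le_one (Matrix.of x.1) (Matrix.of x.2)
    let z : ℤ_[p] := ⟨_, h1⟩
    have h0 : z ≠ 0 := fun h0 => h (norm_eq_zero.2 (congrArg Subtype.val h0))
    refine ⟨z.valuation, (PadicInt.norm_eq_zpow_neg_valuation h0).trans ?_⟩
    rw [← Real.rpow_intCast]
    push_cast
    trivial

theorem PadicInt.isOpenEmbedding_smul_matrix_prod {c : ℚ_[p]} (hc : c ≠ 0) :
    Topology.IsOpenEmbedding fun x : (Fin n → Fin n → ℤ_[p]) × (Fin n → Fin n → ℤ_[p]) =>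
      c • ((Matrix.of x.1).map (algebraMap ℤ_[p] ℚ_[p]),
        (Matrix.of x.2).map (algebraMap ℤ_[p] ℚ_[p])) := by
  have h : Topology.IsOpenEmbedding fun x : Fin n → Fin n → ℤ_[p] =>
      (Matrix.of x).map (algebraMap ℤ_[p] ℚ_[p]) :=
    Topology.IsOpenEmbedding.piMap fun _ => Topology.IsOpenEmbedding.piMap fun _ =>
      PadicInt.isOpenEmbedding_coe
  exact (Homeomorph.smulOfNeZero c hc).isOpenEmbedding.comp (h.prodMap h)

theorem integrableOn_range_weylDiscriminantGuoJacquet (hn : 0 < n)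
    [MeasurableSpace (Matrix (Fin n) (Fin n) ℚ_[p] × Matrix (Fin n) (Fin n) ℚ_[p])]
    [BorelSpace (Matrix (Fin n) (Fin n) ℚ_[p] × Matrix (Fin n) (Fin n) ℚ_[p])]
    {r : ℝ} (hr : 0 ≤ r) (μ : Measure (Matrix (Fin n) (Fin n) ℚ_[p] × Matrix (Fin n) (Fin n) ℚ_[p]))
    [μ.IsAddHaarMeasure] {c : ℚ_[p]} (hc : c ≠ 0) :
    IntegrableOn
      (fun X => ‖weylDiscriminantGuoJacquet p n X‖ ^ (-(1 / 4 : ℝ)) *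
        (max 1 (-(1 / 2 : ℝ) * Real.log ‖weylDiscriminantGuoJacquet p n X‖)) ^ r)
      (Set.range fun x : (Fin n → Fin n → ℤ_[p]) × (Fin n → Fin n → ℤ_[p]) =>
        c • ((Matrix.of x.1).map (algebraMap ℤ_[p] ℚ_[p]),
          (Matrix.of x.2).map (algebraMap ℤ_[p] ℚ_[p]))) μ := by
  let φ : ((Fin n → Fin n → ℤ_[p]) × (Fin n → Fin n → ℤ_[p])) →+
      Matrix (Fin n) (Fin n) ℚ_[p] × Matrix (Fin n) (Fin n) ℚ_[p] :=
    { toFun := fun x => c • ((Matrix.of x.1).map (algebraMap ℤ_[p] ℚ_[p]),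
        (Matrix.of x.2).map (algebraMap ℤ_[p] ℚ_[p]))
      map_zero' := by ext <;> simp
      map_add' := fun x y => by ext <;> simp [mul_add] }
  have hφ : Topology.IsOpenEmbedding φ := PadicInt.isOpenEmbedding_smul_matrix_prod hc
  have : MeasurableAdd ((Fin n → Fin n → ℤ_[p]) × (Fin n → Fin n → ℤ_[p])) :=
    ⟨fun _ => (continuous_const.add continuous_id).measurable,
      fun _ => (continuous_id.add continuous_const).measurable⟩
  have : MeasurableAdd (Matrix (Fin n) (Fin n) ℚ_[p] × Matrix (Fin n) (Fin n) ℚ_[p]) :=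
    ⟨fun _ => (continuous_const.add continuous_id).measurable,
      fun _ => (continuous_id.add continuous_const).measurable⟩
  have hcomap : (μ.comap φ).IsAddHaarMeasure := Measure.IsAddHaarMeasure.comap (mH := this) μ hφ
  change IntegrableOn _ (Set.range φ) μ
  rw [hφ.measurableEmbedding.integrableOn_range_iff_comap,
    Measure.isAddLeftInvariant_eq_smul (μ.comap φ) volume]
  refine Integrable.smul_measure_nnreal ?_
  obtain ⟨s, hs, hfin⟩ := PadicInt.lintegral_weylDiscriminantGuoJacquet_rpow_lt_top (p := p) hn
  set g : (Fin n → Fin n → ℤ_[p]) × (Fin n → Fin n → ℤ_[p]) → ℝ := fun x =>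
    ‖weylDiscriminantGuoJacquet p n ((Matrix.of x.1).map (algebraMap ℤ_[p] ℚ_[p]),
      (Matrix.of x.2).map (algebraMap ℤ_[p] ℚ_[p]))‖ with hg
  have hcont : Continuous fun x => ‖weylDiscriminantGuoJacquet p n (φ x)‖ :=
    continuous_norm.comp (continuous_weylDiscriminantGuoJacquet.comp hφ.continuous)
  set V : ℝ := ‖c‖ ^ Fintype.card ((Fin n ⊕ Fin n) × (Fin n ⊕ Fin n)) / ‖c‖ ^ (2 * n) with hV
  have hc0 : 0 < ‖c‖ := norm_pos_iff.2 hc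
  have hV0 : 0 < V := by positivity
  have hscale (x) : ‖weylDiscriminantGuoJacquet p n (φ x)‖ = V * g x := by
    have h := congrArg norm (weylDiscriminantGuoJacquet_smul_mul_pow c
      ((Matrix.of x.1).map (algebraMap ℤ_[p] ℚ_[p]), (Matrix.of x.2).map (algebraMap ℤ_[p] ℚ_[p])))
    rw [norm_mul, norm_mul, norm_pow, norm_pow] at h
    rw [hV, div_mul_eq_mul_div, eq_div_iff (by positivity)]
    exact h
  have hgc : Continuous g := by
    have h : g = fun x => V⁻¹ * ‖weylDiscriminantGuoJacquet p n (φ x)‖ := by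
      ext x; rw [hscale]; field_simp
    rw [h]
    exact continuous_const.mul hcont
  obtain ⟨C, hC, hbound⟩ := Real.exists_rpow_mul_max_one_neg_log_rpow_le (s := 1 / 4)
    (ε := s - 1 / 4) (by linarith) hr hV0
  have hint : Integrable fun x => g x ^ (-s) :=
    (lintegral_ofReal_ne_top_iff_integrable (hgc.measurable.pow_const _).aestronglyMeasurable
      (Filter.Eventually.of_forall fun x => Real.rpow_nonneg (norm_nonneg _) _)).1 hfin.ne
  refine (hint.const_mul (C * V ^ (-s))).mono' ?_ (Filter.Eventually.of_forall fun x => ?_)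
  · have hm := hcont.measurable
    exact ((hm.pow_const _).mul ((measurable_const.max
      (measurable_const.mul (Real.measurable_log.comp hm))).pow_const _)).aestronglyMeasurable
  · have hg0 : 0 ≤ g x := norm_nonneg _
    have hg1 : g x ≤ 1 :=
      PadicInt.norm_weylDiscriminantGuoJacquet_le_one (Matrix.of x.1) (Matrix.of x.2)
    rw [Function.comp_apply, hscale, Real.norm_of_nonneg
      (mul_nonneg (by positivity) (Real.rpow_nonneg (zero_le_one.trans (le_max_left _ _)) _))]
    rcases hg0.eq_or_lt with h | h
    · rw [← h, mul_zero, Real.zero_rpow (by norm_num), Real.zero_rpow (by linarith)]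
      simp
    · refine (hbound (V * g x) (by positivity) (by nlinarith)).trans (le_of_eq ?_)
      rw [Real.mul_rpow hV0.le hg0, mul_assoc]
      congr 3 <;> ring

end WeylVolume

/-- For every real `r ≥ 0`, the function
`X ↦ ‖𝔇(X)‖_p^(−1/4) · (max {1, −(1/2)·log ‖𝔇(X)‖_p})^r` is locally integrable on
`M_n(ℚ_p) × M_n(ℚ_p)` with respect to any additive Haar measure. -/
theorem weylDiscriminant_rpow_mul_log_pow_locallyIntegrable
    (p : ℕ) [Fact p.Prime] (n : ℕ) (hn : 1 ≤ n)
    [MeasurableSpace (Matrix (Fin n) (Fin n) ℚ_[p] × Matrix (Fin n) (Fin n) ℚ_[p])]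
    [BorelSpace (Matrix (Fin n) (Fin n) ℚ_[p] × Matrix (Fin n) (Fin n) ℚ_[p])]
    (r : ℝ) (hr : 0 ≤ r) :
    ∀ μ : Measure (Matrix (Fin n) (Fin n) ℚ_[p] × Matrix (Fin n) (Fin n) ℚ_[p]),
      μ.IsAddHaarMeasure →
      LocallyIntegrable
        (fun X => ‖weylDiscriminantGuoJacquet p n X‖ ^ (-(1 / 4 : ℝ)) *
          (max 1 (-(1 / 2 : ℝ) * Real.log ‖weylDiscriminantGuoJacquet p n X‖)) ^ r) μ := by
  intro μ hμ X
  obtain ⟨c, hc⟩ := NormedField.exists_lt_norm ℚ_[p]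
    ((∑ i, ∑ j, ‖X.1 i j‖) + ∑ i, ∑ j, ‖X.2 i j‖)
  have h1 : 0 ≤ ∑ i, ∑ j, ‖X.1 i j‖ := by positivity
  have h2 : 0 ≤ ∑ i, ∑ j, ‖X.2 i j‖ := by positivity
  have hc0 : c ≠ 0 := norm_pos_iff.1 (by linarith)
  have key (A : Matrix (Fin n) (Fin n) ℚ_[p]) (hA : ∑ i, ∑ j, ‖A i j‖ ≤ ‖c‖) (i j : Fin n) :
      ‖c⁻¹ * A i j‖ ≤ 1 := by
    rw [norm_mul, norm_inv, inv_mul_le_one₀ (norm_pos_iff.2 hc0)]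
    exact ((Finset.single_le_sum (f := fun j => ‖A i j‖) (fun _ _ => norm_nonneg _)
      (Finset.mem_univ j)).trans (Finset.single_le_sum (f := fun i => ∑ j, ‖A i j‖)
      (fun _ _ => by positivity) (Finset.mem_univ i))).trans hA
  refine ⟨_, (PadicInt.isOpenEmbedding_smul_matrix_prod hc0).isOpen_range.mem_nhds
    ⟨(fun i j => ⟨c⁻¹ * X.1 i j, key X.1 (by linarith) i j⟩,
      fun i j => ⟨c⁻¹ * X.2 i j, key X.2 (by linarith) i j⟩), ?_⟩,
    integrableOn_range_weylDiscriminantGuoJacquet hn hr μ hc0⟩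
  ext i j <;> exact mul_inv_cancel_left₀ hc0 _
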